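/- arXiv:2412.14315 — 2 statements merged into one kernel-verified Lean document; each statement's English description precedes it below -/
import Mathlib

section
/- Let G be drawn from a distribution in NSSBM(n,p,p̄,q). There is a universal constant C > 0 such that if n(p−q) ≥ C·(√(n·p̄·log(n/δ)) + log(n/δ)), then for any δ ≥ n^{−10}, with probability at least 1 − δ, λ3(L) − λ2(L★) ≥ n(p−q)/4, where L is the unnormalized Laplacian of G and L★ = E[L]. -/
open Matrix MeasureTheory
open scoped BigOperators ENNReal Classical

noncomputable section

instance measSG {n : ℕ} : MeasurableSpace (SimpleGraph (Fin n)) := ⊤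

variable {n : ℕ}

/-- Adjacency matrix of a graph, over `ℝ`. -/
def adjM (G : SimpleGraph (Fin n)) : Matrix (Fin n) (Fin n) ℝ :=
  Matrix.of fun v w => if G.Adj v w then 1 else 0

/-- Laplacian of a weighted adjacency matrix. -/
def wlap (W : Matrix (Fin n) (Fin n) ℝ) : Matrix (Fin n) (Fin n) ℝ :=
  Matrix.diagonal (fun v => ∑ w, W v w) - W

/-- Unnormalized Laplacian of a graph. -/
def lap (G : SimpleGraph (Fin n)) : Matrix (Fin n) (Fin n) ℝ := wlap (adjM G)

/-- `eig M k` is the `(k+1)`-st smallest eigenvalue (root of the characteristic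
polynomial, with multiplicity) of `M`; e.g. `eig M 1 = λ₂`. -/
def eig (M : Matrix (Fin n) (Fin n) ℝ) (k : ℕ) : ℝ :=
  (M.charpoly.roots.sort (· ≤ ·)).getD k 0

def IsUnitEigenvector (M : Matrix (Fin n) (Fin n) ℝ) (t : ℝ) (u : Fin n → ℝ) : Prop :=
  M.mulVec u = t • u ∧ ∑ v, (u v) ^ 2 = 1

/-- Membership in the first community `P₁ = {1, …, n/2}`. -/
def inP1 (n : ℕ) (v : Fin n) : Prop := (v : ℕ) < n / 2

/-- `v` and `w` are in the same community. -/
def sameSide (n : ℕ) (v w : Fin n) : Prop := inP1 n v ↔ inP1 n w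

/-- Number of neighbours of `v` in its own community. -/
def din (G : SimpleGraph (Fin n)) (v : Fin n) : ℕ :=
  Nat.card {w : Fin n // G.Adj v w ∧ sameSide n v w}

/-- Number of neighbours of `v` in the other community. -/
def dout (G : SimpleGraph (Fin n)) (v : Fin n) : ℕ :=
  Nat.card {w : Fin n // G.Adj v w ∧ ¬ sameSide n v w}

/-- Degree of `v`. -/
def deg (G : SimpleGraph (Fin n)) (v : Fin n) : ℕ :=
  Nat.card {w : Fin n // G.Adj v w}

/-- `μ` samples each pair `(v,w)`, `v < w`, as an edge independently with probability `P v w`. -/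
def IsEdgeProduct (P : Fin n → Fin n → ℝ) (μ : PMF (SimpleGraph (Fin n))) : Prop :=
  ∀ G : SimpleGraph (Fin n),
    μ G = ∏ e ∈ Finset.univ.filter (fun e : Fin n × Fin n => e.1 < e.2),
      (if G.Adj e.1 e.2 then ENNReal.ofReal (P e.1 e.2) else ENNReal.ofReal (1 - P e.1 e.2))

/-- The edge-probability matrix of a member of the `NSSBM(n,p,p̄,q)` family. -/
def NSSBMprob (n : ℕ) (p pbar q : ℝ) (P : Fin n → Fin n → ℝ) : Prop :=
  (∀ v w, P v w = P w v) ∧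
  (∀ v w : Fin n, v ≠ w → sameSide n v w → p ≤ P v w ∧ P v w ≤ pbar) ∧
  (∀ v w : Fin n, ¬ sameSide n v w → P v w = q)

/-- The ideal second eigenvector `u₂⋆`. -/
def u2star (n : ℕ) : Fin n → ℝ :=
  fun v => if inP1 n v then 1 / Real.sqrt n else -(1 / Real.sqrt n)

/-- Spectral bisection with matrix `M` recovers the planted partition of `G`. -/
def BisectCorrect (n : ℕ) (M : Matrix (Fin n) (Fin n) ℝ) : Prop :=
  ∀ u : Fin n → ℝ, IsUnitEigenvector M (eig M 1) u →
    ({v : Fin n | u v < 0} = {v : Fin n | inP1 n v} ∨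
     {v : Fin n | u v < 0} = {v : Fin n | ¬ inP1 n v})

/-- Off-diagonal part of the probability matrix: the expected adjacency matrix. -/
def offP (P : Fin n → Fin n → ℝ) : Matrix (Fin n) (Fin n) ℝ :=
  Matrix.of fun v w => if v = w then 0 else P v w

/-- Expected unnormalized Laplacian. -/
def expLap (P : Fin n → Fin n → ℝ) : Matrix (Fin n) (Fin n) ℝ := wlap (offP P)

/-- Euclidean norm. -/
def l2 (x : Fin n → ℝ) : ℝ := Real.sqrt (∑ v, (x v) ^ 2)

/-- Inner product. -/
def dotp (x y : Fin n → ℝ) : ℝ := ∑ v, x v * y v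

/-- Entrywise max (ℓ∞) norm. -/
def linf (x : Fin n → ℝ) : ℝ := ⨆ v, |x v|

/-- ℓ2 → ℓ2 operator norm of a matrix. -/
def opNorm (M : Matrix (Fin n) (Fin n) ℝ) : ℝ :=
  ‖LinearMap.toContinuousLinearMap (Matrix.toEuclideanLin M)‖

/-- The crossing edges of `μ` are independent `Bernoulli(q)`, while the internal
edges are arbitrary (possibly depending on the crossing edges). -/
def CrossingProduct (n : ℕ) (q : ℝ) (μ : PMF (SimpleGraph (Fin n))) : Prop :=
  ∃ (ν : PMF (SimpleGraph (Fin n))) (κ : SimpleGraph (Fin n) → PMF (SimpleGraph (Fin n))),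
    IsEdgeProduct (fun v w => if sameSide n v w then 0 else q) ν ∧
    (∀ H, ∀ G ∈ (κ H).support, ∀ v w, ¬ sameSide n v w → ((G.Adj v w) ↔ H.Adj v w)) ∧
    μ = ν.bind κ

/-! ### Eigenvectors of a real symmetric matrix -/

/-- An orthonormal eigenbasis of a symmetric matrix, as plain vectors. -/
def evec {A : Matrix (Fin n) (Fin n) ℝ} (hA : A.IsHermitian) (i : Fin n) : Fin n → ℝ :=
  (hA.eigenvectorBasis i).ofLp

theorem mulVec_evec {A : Matrix (Fin n) (Fin n) ℝ} (hA : A.IsHermitian) (i : Fin n) :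
    A *ᵥ evec hA i = hA.eigenvalues i • evec hA i :=
  hA.mulVec_eigenvectorBasis i

theorem sum_evec_mul_evec {A : Matrix (Fin n) (Fin n) ℝ} (hA : A.IsHermitian)
    (x y : Fin n → ℝ) : ∑ i, (evec hA i ⬝ᵥ x) * (evec hA i ⬝ᵥ y) = x ⬝ᵥ y := by
  have h := hA.eigenvectorBasis.sum_inner_mul_inner (WithLp.toLp 2 x) (WithLp.toLp 2 y)
  simp only [EuclideanSpace.inner_eq_star_dotProduct, star_trivial] at h
  rw [dotProduct_comm x y, ← h]
  exact Finset.sum_congr rfl fun i _ => by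
    rw [dotProduct_comm y]; rfl

theorem evec_dotProduct_self {A : Matrix (Fin n) (Fin n) ℝ} (hA : A.IsHermitian) (i : Fin n) :
    evec hA i ⬝ᵥ evec hA i = 1 := by
  have h := hA.eigenvectorBasis.orthonormal.1 i
  have h2 := real_inner_self_eq_norm_sq (hA.eigenvectorBasis i)
  rw [h] at h2
  rw [EuclideanSpace.inner_eq_star_dotProduct, star_trivial, one_pow] at h2
  exact h2

theorem dotProduct_mulVec_symm {A : Matrix (Fin n) (Fin n) ℝ} (hA : A.IsHermitian)
    (x y : Fin n → ℝ) : x ⬝ᵥ A *ᵥ y = (A *ᵥ x) ⬝ᵥ y := by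
  have hT : Aᵀ = A := hA
  rw [dotProduct_mulVec, ← mulVec_transpose, hT]

theorem evec_dotProduct_mulVec {A : Matrix (Fin n) (Fin n) ℝ} (hA : A.IsHermitian) (i : Fin n)
    (x : Fin n → ℝ) : evec hA i ⬝ᵥ A *ᵥ x = hA.eigenvalues i * (evec hA i ⬝ᵥ x) := by
  rw [dotProduct_mulVec_symm hA, mulVec_evec, smul_dotProduct, smul_eq_mul]

theorem dotProduct_mulVec_eq_sum {A : Matrix (Fin n) (Fin n) ℝ} (hA : A.IsHermitian)
    (x : Fin n → ℝ) : x ⬝ᵥ A *ᵥ x = ∑ i, hA.eigenvalues i * (evec hA i ⬝ᵥ x) ^ 2 := by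
  rw [← sum_evec_mul_evec hA]
  exact Finset.sum_congr rfl fun i _ => by rw [evec_dotProduct_mulVec]; ring

/-! ### Min-max bounds for sorted eigenvalues -/

theorem countP_roots_charpoly {A : Matrix (Fin n) (Fin n) ℝ} (hA : A.IsHermitian)
    (r : ℝ → Prop) [DecidablePred r] :
    (A.charpoly.roots.sort (· ≤ ·)).countP r =
      (Finset.univ.filter fun i => r (hA.eigenvalues i)).card := by
  rw [← Multiset.coe_countP, Multiset.sort_eq, hA.roots_charpoly_eq_eigenvalues,
    Multiset.countP_map]
  simp [Finset.card, Finset.filter]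

theorem length_sort_roots_charpoly {A : Matrix (Fin n) (Fin n) ℝ} (hA : A.IsHermitian) :
    (A.charpoly.roots.sort (· ≤ ·)).length = n := by
  rw [Multiset.length_sort, hA.roots_charpoly_eq_eigenvalues]
  simp

theorem lt_card_eigenvalues_lt {A : Matrix (Fin n) (Fin n) ℝ} (hA : A.IsHermitian) {k : ℕ}
    (hk : k < n) {c : ℝ} (h : eig A k < c) :
    k < (Finset.univ.filter fun i => hA.eigenvalues i < c).card := by
  rw [← countP_roots_charpoly hA (· < c)]
  have hl := length_sort_roots_charpoly hA
  have hs := A.charpoly.roots.pairwise_sort (· ≤ ·)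
  unfold eig at h
  set l := A.charpoly.roots.sort (· ≤ ·)
  rw [List.getD_eq_getElem _ _ (by omega)] at h
  have h1 : (l.take (k + 1)).countP (· < c) = (l.take (k + 1)).length := by
    rw [List.countP_eq_length]
    intro a ha
    obtain ⟨j, hj, rfl⟩ := List.mem_take_iff_getElem.1 ha
    have : l[j] ≤ l[k] := by
      rcases (show j < k ∨ j = k by omega) with hjk | rfl
      · exact List.pairwise_iff_getElem.1 hs j k (by omega) (by omega) hjk
      · exact le_rfl
    simpa using this.trans_lt h
  have h2 := (List.take_sublist (k + 1) l).countP_le (p := (· < c))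
  simp only [List.length_take] at h1
  omega

theorem card_eigenvalues_le_le {A : Matrix (Fin n) (Fin n) ℝ} (hA : A.IsHermitian) {k : ℕ}
    (hk : k < n) {c : ℝ} (h : c < eig A k) :
    (Finset.univ.filter fun i => hA.eigenvalues i ≤ c).card ≤ k := by
  rw [← countP_roots_charpoly hA (· ≤ c)]
  have hl := length_sort_roots_charpoly hA
  have hs := A.charpoly.roots.pairwise_sort (· ≤ ·)
  unfold eig at h
  set l := A.charpoly.roots.sort (· ≤ ·)
  rw [List.getD_eq_getElem _ _ (by omega)] at h
  have h1 : (l.drop k).countP (· ≤ c) = 0 := by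
    rw [List.countP_eq_zero]
    intro a ha
    obtain ⟨j, hj, rfl⟩ := List.mem_drop_iff_getElem.1 ha
    have : l[k] ≤ l[k + j] := by
      rcases j.eq_zero_or_pos with rfl | hj0
      · exact le_rfl
      · exact List.pairwise_iff_getElem.1 hs k (k + j) (by omega) (by omega) (by omega)
    simpa using h.trans_le this
  conv_lhs => rw [← List.take_append_drop k l]
  rw [List.countP_append, h1]
  exact (List.countP_le_length).trans (by simp)

theorem exists_ne_zero_forall_dotProduct_eq_zero {ι κ : Type*} [Fintype ι] [Fintype κ]
    (h : Fintype.card κ < Fintype.card ι) (f : κ → ι → ℝ) :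
    ∃ x : ι → ℝ, x ≠ 0 ∧ ∀ k, f k ⬝ᵥ x = 0 := by
  have hker : LinearMap.ker (Matrix.of f).mulVecLin ≠ ⊥ :=
    LinearMap.ker_ne_bot_of_finrank_lt (by simpa using h)
  obtain ⟨x, hx, hx0⟩ := Submodule.exists_mem_ne_zero_of_ne_bot hker
  exact ⟨x, hx0, fun k => congrFun (LinearMap.mem_ker.1 hx) k⟩

/-- If the quadratic form of `A` is at least `c` on the common kernel of `k` linear forms, then
the `(k+1)`-st smallest eigenvalue of `A` is at least `c`. -/
theorem le_eig_of_forall {A : Matrix (Fin n) (Fin n) ℝ} (hA : A.IsHermitian) {k : ℕ}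
    (hk : k < n) {c : ℝ} (f : Fin k → Fin n → ℝ)
    (h : ∀ x, (∀ j, f j ⬝ᵥ x = 0) → c * (x ⬝ᵥ x) ≤ x ⬝ᵥ A *ᵥ x) : c ≤ eig A k := by
  by_contra! hlt
  have hcard := lt_card_eigenvalues_lt hA hk hlt
  have hcompl := Finset.card_filter_add_card_filter_not (s := Finset.univ)
    (fun i => hA.eigenvalues i < c)
  obtain ⟨x, hx0, hx⟩ := exists_ne_zero_forall_dotProduct_eq_zero (ι := Fin n)
    (κ := Fin k ⊕ {i // i ∈ Finset.univ.filter fun i => ¬ hA.eigenvalues i < c})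
    (by simp only [Fintype.card_sum, Fintype.card_fin, Fintype.card_coe] at *
        simp only [Finset.card_univ, Fintype.card_fin] at hcompl
        omega)
    (Sum.elim f fun i => evec hA i)
  have hle := h x fun j => hx (Sum.inl j)
  rw [dotProduct_mulVec_eq_sum hA, ← sum_evec_mul_evec hA, Finset.mul_sum] at hle
  have hz : ∀ i, ¬ hA.eigenvalues i < c → evec hA i ⬝ᵥ x = 0 := fun i hi =>
    hx (Sum.inr ⟨i, by simpa using hi⟩)
  have hterm : ∀ i ∈ Finset.univ, hA.eigenvalues i * (evec hA i ⬝ᵥ x) ^ 2 ≤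
      c * ((evec hA i ⬝ᵥ x) * (evec hA i ⬝ᵥ x)) := fun i _ => by
    by_cases hi : hA.eigenvalues i < c
    · nlinarith [mul_nonneg (sub_nonneg.2 hi.le) (sq_nonneg (evec hA i ⬝ᵥ x))]
    · simp [hz i hi]
  have heq := (Finset.sum_eq_sum_iff_of_le hterm).1 (le_antisymm (Finset.sum_le_sum hterm) hle)
  apply hx0
  rw [← dotProduct_self_eq_zero, ← sum_evec_mul_evec hA]
  refine Finset.sum_eq_zero fun i _ => ?_
  by_cases hi : hA.eigenvalues i < c
  · have h1 := heq i (Finset.mem_univ i)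
    have h2 : (c - hA.eigenvalues i) * ((evec hA i ⬝ᵥ x) * (evec hA i ⬝ᵥ x)) = 0 := by linarith
    exact (mul_eq_zero.1 h2).resolve_left (sub_pos.2 hi).ne'
  · simp [hz i hi]

/-- If the quadratic form of `A` is at most `c` on the span of `k + 1` linearly independent
vectors, then the `(k+1)`-st smallest eigenvalue of `A` is at most `c`. -/
theorem eig_le_of_forall {A : Matrix (Fin n) (Fin n) ℝ} (hA : A.IsHermitian) {k : ℕ}
    (hk : k < n) {c : ℝ} (f : Fin (k + 1) → Fin n → ℝ)
    (hf : ∀ a : Fin (k + 1) → ℝ, a ᵥ* Matrix.of f = 0 → a = 0)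
    (h : ∀ a : Fin (k + 1) → ℝ, (a ᵥ* Matrix.of f) ⬝ᵥ A *ᵥ (a ᵥ* Matrix.of f) ≤
      c * ((a ᵥ* Matrix.of f) ⬝ᵥ (a ᵥ* Matrix.of f))) : eig A k ≤ c := by
  by_contra! hlt
  have hcard := card_eigenvalues_le_le hA hk hlt
  obtain ⟨a, ha0, ha⟩ := exists_ne_zero_forall_dotProduct_eq_zero (ι := Fin (k + 1))
    (κ := {i // i ∈ Finset.univ.filter fun i => hA.eigenvalues i ≤ c})
    (by simp only [Fintype.card_fin, Fintype.card_coe]; omega)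
    (fun i => Matrix.of f *ᵥ evec hA i)
  have hle := h a
  have hz : ∀ i, hA.eigenvalues i ≤ c → evec hA i ⬝ᵥ (a ᵥ* Matrix.of f) = 0 := fun i hi => by
    rw [dotProduct_comm, ← dotProduct_mulVec, dotProduct_comm]
    exact ha ⟨i, by simpa using hi⟩
  refine ha0 (hf a ?_)
  generalize a ᵥ* Matrix.of f = x at hle hz
  rw [dotProduct_mulVec_eq_sum hA, ← sum_evec_mul_evec hA, Finset.mul_sum] at hle
  have hterm : ∀ i ∈ Finset.univ, c * ((evec hA i ⬝ᵥ x) * (evec hA i ⬝ᵥ x)) ≤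
      hA.eigenvalues i * (evec hA i ⬝ᵥ x) ^ 2 := fun i _ => by
    by_cases hi : hA.eigenvalues i ≤ c
    · simp [hz i hi]
    · nlinarith [mul_nonneg (sub_nonneg.2 (not_le.1 hi).le) (sq_nonneg (evec hA i ⬝ᵥ x))]
  have heq := (Finset.sum_eq_sum_iff_of_le hterm).1 (le_antisymm (Finset.sum_le_sum hterm) hle)
  rw [← dotProduct_self_eq_zero, ← sum_evec_mul_evec hA]
  refine Finset.sum_eq_zero fun i _ => ?_
  by_cases hi : hA.eigenvalues i ≤ c
  · simp [hz i hi]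
  · have h1 := heq i (Finset.mem_univ i)
    have h2 : (hA.eigenvalues i - c) * ((evec hA i ⬝ᵥ x) * (evec hA i ⬝ᵥ x)) = 0 := by linarith
    exact (mul_eq_zero.1 h2).resolve_left (sub_pos.2 (not_le.1 hi)).ne'

/-! ### A mean value inequality for the trace of the exponential -/

theorem one_sub_exp_neg_le {z : ℝ} (hz : 0 ≤ z) :
    1 - Real.exp (-z) ≤ z / 2 * (1 + Real.exp (-z)) := by
  have hmono : MonotoneOn (fun z : ℝ => z / 2 * (Real.exp z + 1) - Real.exp z + 1)
      (Set.Ici 0) := by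
    refine monotoneOn_of_hasDerivWithinAt_nonneg
      (f' := fun z => 1 / 2 * (Real.exp z + 1) + z / 2 * Real.exp z - Real.exp z)
      (convex_Ici 0) (by fun_prop) (fun x _ => ?_) (fun x _ => ?_)
    · exact ((((hasDerivAt_id x).div_const 2).mul ((Real.hasDerivAt_exp x).add_const 1)).sub
        (Real.hasDerivAt_exp x)).add_const 1 |>.hasDerivWithinAt
    · have h1 := Real.add_one_le_exp (-x)
      have h2 : Real.exp (-x) * Real.exp x = 1 := by rw [← Real.exp_add]; simp
      nlinarith [Real.exp_pos x]
  have h := hmono (Set.mem_Ici.2 le_rfl) (Set.mem_Ici.2 hz) hz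
  simp only [Real.exp_zero] at h
  have h2 : Real.exp (-z) * Real.exp z = 1 := by rw [← Real.exp_add]; simp
  have h3 := Real.exp_pos (-z)
  nlinarith

theorem sub_mul_exp_sub_exp_le {t : ℝ} (ht : 0 ≤ t) (a b : ℝ) :
    (a - b) * (Real.exp (-t * b) - Real.exp (-t * a)) ≤
      t / 2 * ((a - b) ^ 2 * (Real.exp (-t * a) + Real.exp (-t * b))) := by
  wlog hab : b ≤ a generalizing a b
  · have := this b a (le_of_not_ge hab)
    linarith
  have h := one_sub_exp_neg_le (mul_nonneg ht (sub_nonneg.2 hab))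
  have he : Real.exp (-t * a) = Real.exp (-t * b) * Real.exp (-(t * (a - b))) := by
    rw [← Real.exp_add]; ring_nf
  rw [he]
  have := mul_le_mul_of_nonneg_left h
    (mul_nonneg (sub_nonneg.2 hab) (Real.exp_pos (-t * b)).le)
  linarith

/-- `tr (e^{-tA} M)`, where `Q` is the quadratic form of `M`. -/
def expTrace {A : Matrix (Fin n) (Fin n) ℝ} (hA : A.IsHermitian) (t : ℝ)
    (Q : (Fin n → ℝ) → ℝ) : ℝ :=
  ∑ i, Real.exp (-t * hA.eigenvalues i) * Q (evec hA i)

theorem expTrace_sub_mulVec {A B : Matrix (Fin n) (Fin n) ℝ} (hA : A.IsHermitian)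
    (hB : B.IsHermitian) (t : ℝ) :
    expTrace hA t (fun u => u ⬝ᵥ (A - B) *ᵥ u) =
      ∑ i, ∑ j, (evec hB j ⬝ᵥ evec hA i) ^ 2 *
        ((hA.eigenvalues i - hB.eigenvalues j) * Real.exp (-t * hA.eigenvalues i)) := by
  refine Finset.sum_congr rfl fun i _ => ?_
  simp only
  rw [sub_mulVec, mulVec_evec, ← sum_evec_mul_evec hB, Finset.mul_sum]
  refine Finset.sum_congr rfl fun j _ => ?_
  rw [dotProduct_sub, evec_dotProduct_mulVec, dotProduct_smul, smul_eq_mul]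
  ring

theorem expTrace_sub_mulVec_sq {A B : Matrix (Fin n) (Fin n) ℝ} (hA : A.IsHermitian)
    (hB : B.IsHermitian) (t : ℝ) :
    expTrace hA t (fun u => ((A - B) *ᵥ u) ⬝ᵥ ((A - B) *ᵥ u)) =
      ∑ i, ∑ j, (evec hB j ⬝ᵥ evec hA i) ^ 2 *
        ((hA.eigenvalues i - hB.eigenvalues j) ^ 2 * Real.exp (-t * hA.eigenvalues i)) := by
  refine Finset.sum_congr rfl fun i _ => ?_
  simp only
  rw [sub_mulVec, mulVec_evec, ← sum_evec_mul_evec hB, Finset.mul_sum]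
  refine Finset.sum_congr rfl fun j _ => ?_
  rw [dotProduct_sub, evec_dotProduct_mulVec, dotProduct_smul, smul_eq_mul]
  ring

theorem expTrace_neg_form {A : Matrix (Fin n) (Fin n) ℝ} (hA : A.IsHermitian) (t : ℝ)
    (Q : (Fin n → ℝ) → ℝ) : expTrace hA t (fun u => -Q u) = -expTrace hA t Q := by
  simp [expTrace]

/-- The mean value trace inequality for `x ↦ e^{-tx}`. -/
theorem expTrace_sub_expTrace_le {A B : Matrix (Fin n) (Fin n) ℝ} (hA : A.IsHermitian)
    (hB : B.IsHermitian) {t : ℝ} (ht : 0 ≤ t) :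
    expTrace hB t (fun u => u ⬝ᵥ (A - B) *ᵥ u) - expTrace hA t (fun u => u ⬝ᵥ (A - B) *ᵥ u) ≤
      t / 2 * (expTrace hA t (fun u => ((A - B) *ᵥ u) ⬝ᵥ ((A - B) *ᵥ u)) +
        expTrace hB t (fun u => ((A - B) *ᵥ u) ⬝ᵥ ((A - B) *ᵥ u))) := by
  have h1 : (fun u => u ⬝ᵥ (A - B) *ᵥ u) = fun u => -(u ⬝ᵥ (B - A) *ᵥ u) := by
    ext u; rw [← neg_sub B A, neg_mulVec, dotProduct_neg]
  have h2 : (fun u => ((A - B) *ᵥ u) ⬝ᵥ ((A - B) *ᵥ u)) =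
      fun u => ((B - A) *ᵥ u) ⬝ᵥ ((B - A) *ᵥ u) := by
    ext u; rw [← neg_sub B A, neg_mulVec, dotProduct_neg, neg_dotProduct, neg_neg]
  rw [expTrace_sub_mulVec hA hB, expTrace_sub_mulVec_sq hA hB, h1, h2, expTrace_neg_form,
    expTrace_sub_mulVec hB hA, expTrace_sub_mulVec_sq hB hA,
    Finset.sum_comm (f := fun (i j : Fin n) => (evec hA j ⬝ᵥ evec hB i) ^ 2 *
      ((hB.eigenvalues i - hA.eigenvalues j) * Real.exp (-t * hB.eigenvalues i))),
    Finset.sum_comm (f := fun (i j : Fin n) => (evec hA j ⬝ᵥ evec hB i) ^ 2 *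
      ((hB.eigenvalues i - hA.eigenvalues j) ^ 2 * Real.exp (-t * hB.eigenvalues i))),
    ← Finset.sum_neg_distrib, ← Finset.sum_sub_distrib, ← Finset.sum_add_distrib,
    Finset.mul_sum]
  refine Finset.sum_le_sum fun i _ => ?_
  rw [← Finset.sum_neg_distrib, ← Finset.sum_sub_distrib, ← Finset.sum_add_distrib,
    Finset.mul_sum]
  refine Finset.sum_le_sum fun j _ => ?_
  rw [dotProduct_comm (evec hA i)]
  have := mul_le_mul_of_nonneg_left
    (sub_mul_exp_sub_exp_le ht (hA.eigenvalues i) (hB.eigenvalues j))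
    (sq_nonneg (evec hB j ⬝ᵥ evec hA i))
  linarith

theorem expTrace_sum {A : Matrix (Fin n) (Fin n) ℝ} (hA : A.IsHermitian) (t : ℝ)
    (c : Fin n → Fin n → ℝ) (Q : Fin n → Fin n → (Fin n → ℝ) → ℝ) :
    expTrace hA t (fun u => 1 / 2 * ∑ v, ∑ w, c v w * Q v w u) =
      1 / 2 * ∑ v, ∑ w, c v w * expTrace hA t (Q v w) := by
  simp only [expTrace, Finset.mul_sum]
  rw [Finset.sum_comm]
  refine Finset.sum_congr rfl fun v _ => ?_
  rw [Finset.sum_comm]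
  exact Finset.sum_congr rfl fun w _ => Finset.sum_congr rfl fun i _ => by ring

theorem expTrace_mono {A : Matrix (Fin n) (Fin n) ℝ} (hA : A.IsHermitian) (t : ℝ)
    {Q R : (Fin n → ℝ) → ℝ} (h : ∀ u, u ⬝ᵥ u = 1 → Q u ≤ R u) :
    expTrace hA t Q ≤ expTrace hA t R :=
  Finset.sum_le_sum fun i _ =>
    mul_le_mul_of_nonneg_left (h _ (evec_dotProduct_self hA i)) (Real.exp_pos _).le

theorem expTrace_add {A : Matrix (Fin n) (Fin n) ℝ} (hA : A.IsHermitian) (t : ℝ)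
    (Q R : (Fin n → ℝ) → ℝ) :
    expTrace hA t (fun u => Q u + R u) = expTrace hA t Q + expTrace hA t R := by
  simp [expTrace, mul_add, Finset.sum_add_distrib]

theorem expTrace_const_mul {A : Matrix (Fin n) (Fin n) ℝ} (hA : A.IsHermitian) (t c : ℝ)
    (Q : (Fin n → ℝ) → ℝ) :
    expTrace hA t (fun u => c * Q u) = c * expTrace hA t Q := by
  simp only [expTrace, Finset.mul_sum]
  exact Finset.sum_congr rfl fun i _ => by ring

theorem hasDerivAt_expTrace_one {A : Matrix (Fin n) (Fin n) ℝ} (hA : A.IsHermitian) (t : ℝ) :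
    HasDerivAt (fun t => expTrace hA t fun _ => 1)
      (-expTrace hA t fun u => u ⬝ᵥ A *ᵥ u) t := by
  rw [← expTrace_neg_form]
  refine HasDerivAt.fun_sum fun i _ => ?_
  have h : evec hA i ⬝ᵥ A *ᵥ evec hA i = hA.eigenvalues i := by
    rw [evec_dotProduct_mulVec, evec_dotProduct_self, mul_one]
  simp only [h]
  have := (((hasDerivAt_id t).neg.mul_const (hA.eigenvalues i)).exp).mul_const (1 : ℝ)
  simpa using this

/-! ### Quadratic forms of Laplacians -/

theorem wlap_mulVec (W : Matrix (Fin n) (Fin n) ℝ) (u : Fin n → ℝ) (v : Fin n) :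
    (wlap W *ᵥ u) v = ∑ w, W v w * (u v - u w) := by
  simp only [wlap, sub_mulVec, Pi.sub_apply, mulVec_diagonal, mul_sub, Finset.sum_sub_distrib,
    ← Finset.sum_mul]
  rfl

theorem wlap_sub (W W' : Matrix (Fin n) (Fin n) ℝ) : wlap (W - W') = wlap W - wlap W' := by
  ext v w
  by_cases h : v = w
  · subst h; simp [wlap, Finset.sum_sub_distrib]; ring
  · simp [wlap, h]; ring

theorem isHermitian_wlap {W : Matrix (Fin n) (Fin n) ℝ} (hW : ∀ v w, W v w = W w v) :
    (wlap W).IsHermitian := by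
  refine Matrix.IsHermitian.sub (Matrix.isHermitian_diagonal _) ?_
  ext v w
  simp [hW v w]

theorem wlap_form {W : Matrix (Fin n) (Fin n) ℝ} (hW : ∀ v w, W v w = W w v) (u : Fin n → ℝ) :
    u ⬝ᵥ wlap W *ᵥ u = 1 / 2 * ∑ v, ∑ w, W v w * (u v - u w) ^ 2 := by
  have h1 : u ⬝ᵥ wlap W *ᵥ u = ∑ v, ∑ w, W v w * (u v * (u v - u w)) := by
    simp only [dotProduct, wlap_mulVec, Finset.mul_sum]
    exact Finset.sum_congr rfl fun v _ => Finset.sum_congr rfl fun w _ => by ring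
  have h2 : u ⬝ᵥ wlap W *ᵥ u = ∑ v, ∑ w, W v w * (u w * (u w - u v)) := by
    rw [h1, Finset.sum_comm]
    exact Finset.sum_congr rfl fun v _ => Finset.sum_congr rfl fun w _ => by rw [hW]
  have h3 : ∑ v, ∑ w, W v w * (u v - u w) ^ 2 =
      ∑ v, ∑ w, W v w * (u v * (u v - u w)) + ∑ v, ∑ w, W v w * (u w * (u w - u v)) := by
    simp only [← Finset.sum_add_distrib]
    exact Finset.sum_congr rfl fun v _ => Finset.sum_congr rfl fun w _ => by ring
  rw [h3, ← h1, ← h2]; ring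

theorem adjM_symm (G : SimpleGraph (Fin n)) (v w : Fin n) : adjM G v w = adjM G w v := by
  simp [adjM, G.adj_comm]

theorem offP_symm {P : Fin n → Fin n → ℝ} (hP : ∀ v w, P v w = P w v) (v w : Fin n) :
    offP P v w = offP P w v := by
  simp [offP, hP v w, eq_comm]

/-! ### Resampling one edge -/

/-- The graph with the status of the pair `v, w` toggled. -/
def flipEdge (v w : Fin n) (G : SimpleGraph (Fin n)) : SimpleGraph (Fin n) :=
  symmDiff G (SimpleGraph.edge v w)

theorem flipEdge_flipEdge (v w : Fin n) (G : SimpleGraph (Fin n)) :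
    flipEdge v w (flipEdge v w G) = G :=
  symmDiff_symmDiff_cancel_right _ _

theorem flipEdge_adj {v w : Fin n} (hvw : v ≠ w) (G : SimpleGraph (Fin n)) (a b : Fin n) :
    (flipEdge v w G).Adj a b ↔ if (a = v ∧ b = w) ∨ (a = w ∧ b = v) then ¬ G.Adj a b
      else G.Adj a b := by
  have h : (SimpleGraph.edge v w).Adj a b ↔ (a = v ∧ b = w) ∨ (a = w ∧ b = v) := by
    rw [SimpleGraph.edge_adj]
    constructor
    · rintro ⟨h, -⟩; tauto
    · rintro (⟨rfl, rfl⟩ | ⟨rfl, rfl⟩)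
      · exact ⟨by simp, hvw⟩
      · exact ⟨by simp, hvw.symm⟩
  simp only [flipEdge, symmDiff_def, SimpleGraph.sup_adj, SimpleGraph.sdiff_adj, h]
  split_ifs <;> tauto

theorem flipEdge_comm (v w : Fin n) (G : SimpleGraph (Fin n)) :
    flipEdge v w G = flipEdge w v G := by
  rw [flipEdge, flipEdge, SimpleGraph.edge_comm]

theorem adjM_self_flipEdge {v w : Fin n} (hvw : v ≠ w) (G : SimpleGraph (Fin n)) :
    adjM (flipEdge v w G) v w = 1 - adjM G v w := by
  by_cases h : G.Adj v w <;> simp [adjM, flipEdge_adj hvw, h]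

theorem adjM_sub_adjM_flipEdge {v w : Fin n} (hvw : v ≠ w) (G : SimpleGraph (Fin n))
    (a b : Fin n) : adjM G a b - adjM (flipEdge v w G) a b =
      (2 * adjM G v w - 1) * ((if a = v ∧ b = w then 1 else 0) +
        if a = w ∧ b = v then 1 else 0) := by
  by_cases h1 : a = v ∧ b = w
  · obtain ⟨rfl, rfl⟩ := h1
    by_cases h : G.Adj a b <;> simp [adjM, flipEdge_adj hvw, h, hvw]; norm_num
  by_cases h2 : a = w ∧ b = v
  · obtain ⟨rfl, rfl⟩ := h2
    by_cases h : G.Adj a b <;> simp [adjM, flipEdge_adj hvw, h, hvw, G.adj_comm b a]; norm_num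
  · have : (flipEdge v w G).Adj a b ↔ G.Adj a b := by
      rw [flipEdge_adj hvw, if_neg (by tauto)]
    simp [adjM, this, h1, h2]

theorem lap_sub_lap_flipEdge_mulVec {v w : Fin n} (hvw : v ≠ w) (G : SimpleGraph (Fin n))
    (u : Fin n → ℝ) : (lap G - lap (flipEdge v w G)) *ᵥ u =
      ((2 * adjM G v w - 1) * (u v - u w)) • (Pi.single v 1 - Pi.single w 1) := by
  ext a
  rw [lap, lap, ← wlap_sub, wlap_mulVec]
  simp only [Matrix.sub_apply, adjM_sub_adjM_flipEdge hvw]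
  by_cases h1 : a = v
  · subst h1
    simp [hvw, Finset.sum_ite_eq']
  by_cases h2 : a = w
  · subst h2
    simp [hvw.symm, Finset.sum_ite_eq']
    ring
  · simp [h1, h2]

theorem toReal_edgeProduct {P : Fin n → Fin n → ℝ} {μ : PMF (SimpleGraph (Fin n))}
    (hμ : IsEdgeProduct P μ) (hP0 : ∀ v w, v ≠ w → 0 ≤ P v w) (hP1 : ∀ v w, v ≠ w → P v w ≤ 1)
    (G : SimpleGraph (Fin n)) :
    (μ G).toReal = ∏ e ∈ Finset.univ.filter (fun e : Fin n × Fin n => e.1 < e.2),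
      (if G.Adj e.1 e.2 then P e.1 e.2 else 1 - P e.1 e.2) := by
  rw [hμ G, ENNReal.toReal_prod]
  refine Finset.prod_congr rfl fun e he => ?_
  have he : e.1 ≠ e.2 := (Finset.mem_filter.1 he).2.ne
  split_ifs
  · exact ENNReal.toReal_ofReal (hP0 _ _ he)
  · exact ENNReal.toReal_ofReal (sub_nonneg.2 (hP1 _ _ he))

theorem weight_flipEdge {P : Fin n → Fin n → ℝ} {μ : PMF (SimpleGraph (Fin n))}
    (hμ : IsEdgeProduct P μ) (hP : ∀ v w, P v w = P w v)
    (hP0 : ∀ v w, v ≠ w → 0 ≤ P v w) (hP1 : ∀ v w, v ≠ w → P v w ≤ 1) {v w : Fin n}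
    (hvw : v ≠ w) (G : SimpleGraph (Fin n)) :
    (μ (flipEdge v w G)).toReal * (if (flipEdge v w G).Adj v w then 1 - P v w else P v w) =
      (μ G).toReal * (if G.Adj v w then 1 - P v w else P v w) := by
  wlog hlt : v < w generalizing v w
  · have := this hvw.symm (lt_of_le_of_ne (not_lt.1 hlt) hvw.symm)
    rw [flipEdge_comm v w, hP v w, SimpleGraph.adj_comm, G.adj_comm v w, this]
  rw [toReal_edgeProduct hμ hP0 hP1, toReal_edgeProduct hμ hP0 hP1]
  have hmem : (v, w) ∈ Finset.univ.filter (fun e : Fin n × Fin n => e.1 < e.2) := by simpa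
  rw [← Finset.mul_prod_erase _ _ hmem, ← Finset.mul_prod_erase _ _ hmem]
  have hprod : ∏ e ∈ (Finset.univ.filter fun e : Fin n × Fin n => e.1 < e.2).erase (v, w),
      (if (flipEdge v w G).Adj e.1 e.2 then P e.1 e.2 else 1 - P e.1 e.2) =
      ∏ e ∈ (Finset.univ.filter fun e : Fin n × Fin n => e.1 < e.2).erase (v, w),
      (if G.Adj e.1 e.2 then P e.1 e.2 else 1 - P e.1 e.2) := by
    refine Finset.prod_congr rfl fun e he => ?_
    simp only [Finset.mem_erase, Finset.mem_filter, Finset.mem_univ, true_and] at he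
    have : (flipEdge v w G).Adj e.1 e.2 ↔ G.Adj e.1 e.2 := by
      rw [flipEdge_adj hvw, if_neg]
      rintro (⟨h1, h2⟩ | ⟨h1, h2⟩)
      · exact he.1 (Prod.ext h1 h2)
      · have := he.2
        rw [h1, h2] at this
        exact lt_asymm this hlt
    simp only [this]
  rw [hprod]
  by_cases h : G.Adj v w <;> simp [flipEdge_adj hvw, h] <;> ring

/-! ### The matrix Laplace transform of the centered Laplacian -/

theorem isHermitian_lap_sub_expLap {P : Fin n → Fin n → ℝ} (hP : ∀ v w, P v w = P w v)
    (G : SimpleGraph (Fin n)) : (lap G - expLap P).IsHermitian :=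
  (isHermitian_wlap (adjM_symm G)).sub (isHermitian_wlap (offP_symm hP))

/-- `tr (e^{-tS} X)` for the centered Laplacian `S` and the Laplacian `X` of the edge `vw`. -/
def edgeTrace {P : Fin n → Fin n → ℝ} (hP : ∀ v w, P v w = P w v) (t : ℝ) (v w : Fin n)
    (G : SimpleGraph (Fin n)) : ℝ :=
  expTrace (isHermitian_lap_sub_expLap hP G) t fun u => (u v - u w) ^ 2

theorem edgeTrace_nonneg {P : Fin n → Fin n → ℝ} (hP : ∀ v w, P v w = P w v) (t : ℝ)
    (v w : Fin n) (G : SimpleGraph (Fin n)) : 0 ≤ edgeTrace hP t v w G := by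
  unfold edgeTrace expTrace
  positivity

theorem edgeTrace_sub_flipEdge_le {P : Fin n → Fin n → ℝ} (hP : ∀ v w, P v w = P w v) {t : ℝ}
    (ht : 0 ≤ t) {v w : Fin n} (hvw : v ≠ w) (G : SimpleGraph (Fin n)) :
    (1 - 2 * adjM G v w) * (edgeTrace hP t v w G - edgeTrace hP t v w (flipEdge v w G)) ≤
      t * (edgeTrace hP t v w G + edgeTrace hP t v w (flipEdge v w G)) := by
  have h := expTrace_sub_expTrace_le (isHermitian_lap_sub_expLap hP G)
    (isHermitian_lap_sub_expLap hP (flipEdge v w G)) ht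
  have hsq : (2 * adjM G v w - 1) ^ 2 = 1 := by
    by_cases h : G.Adj v w <;> simp [adjM, h]; norm_num
  have h1 : (fun u : Fin n → ℝ => u ⬝ᵥ (lap G - lap (flipEdge v w G)) *ᵥ u) =
      fun u => (2 * adjM G v w - 1) * (u v - u w) ^ 2 := by
    ext u
    rw [lap_sub_lap_flipEdge_mulVec hvw, dotProduct_smul, dotProduct_sub, smul_eq_mul]
    simp only [dotProduct_single, mul_one]
    ring
  have h2 : (fun u : Fin n → ℝ => ((lap G - lap (flipEdge v w G)) *ᵥ u) ⬝ᵥ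
      ((lap G - lap (flipEdge v w G)) *ᵥ u)) = fun u => 2 * (u v - u w) ^ 2 := by
    ext u
    rw [lap_sub_lap_flipEdge_mulVec hvw, dotProduct_smul, smul_dotProduct, dotProduct_sub,
      smul_eq_mul, smul_eq_mul]
    simp only [dotProduct_single, mul_one, Pi.sub_apply, Pi.single_eq_same,
      Pi.single_eq_of_ne hvw, Pi.single_eq_of_ne hvw.symm]
    linear_combination 2 * (u v - u w) ^ 2 * hsq
  rw [sub_sub_sub_cancel_right, h1, h2] at h
  simp only [expTrace_const_mul] at h
  simp only [edgeTrace]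
  linarith

theorem sum_weight_mul_edgeTrace_le {P : Fin n → Fin n → ℝ} {μ : PMF (SimpleGraph (Fin n))}
    (hμ : IsEdgeProduct P μ) (hP : ∀ v w, P v w = P w v)
    (hP0 : ∀ v w, v ≠ w → 0 ≤ P v w) (hP1 : ∀ v w, v ≠ w → P v w ≤ 1) {t : ℝ} (ht : 0 ≤ t)
    (v w : Fin n) :
    ∑ G, (μ G).toReal * ((offP P v w - adjM G v w) * edgeTrace hP t v w G) ≤
      t * ∑ G, (μ G).toReal * ((adjM G v w + offP P v w) * edgeTrace hP t v w G) := by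
  rcases eq_or_ne v w with rfl | hvw
  · simp [edgeTrace, expTrace]
  set m : SimpleGraph (Fin n) → ℝ := fun G =>
    (μ G).toReal * (if G.Adj v w then 1 - P v w else P v w) with hm
  have hm0 : ∀ G, 0 ≤ m G := fun G => mul_nonneg ENNReal.toReal_nonneg (by
    split_ifs
    · exact sub_nonneg.2 (hP1 v w hvw)
    · exact hP0 v w hvw)
  have hflip : ∀ f : SimpleGraph (Fin n) → ℝ,
      ∑ G, m G * f (flipEdge v w G) = ∑ G, m G * f G := fun f => by
    have hinv : Function.Involutive (flipEdge v w) := flipEdge_flipEdge v w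
    rw [← hinv.bijective.sum_comp fun G => m G * f G]
    exact Finset.sum_congr rfl fun G _ => by
      simp only [hm, weight_flipEdge hμ hP hP0 hP1 hvw]
  have h1 : ∑ G, (μ G).toReal * ((offP P v w - adjM G v w) * edgeTrace hP t v w G) =
      ∑ G, m G * ((1 - 2 * adjM G v w) * edgeTrace hP t v w G) :=
    Finset.sum_congr rfl fun G _ => by
      by_cases h : G.Adj v w <;> simp [hm, offP, adjM, hvw, h] <;> ring
  have h2 : ∑ G, m G * ((1 - 2 * adjM G v w) * edgeTrace hP t v w (flipEdge v w G)) =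
      -∑ G, m G * ((1 - 2 * adjM G v w) * edgeTrace hP t v w G) := by
    rw [← hflip fun G => (1 - 2 * adjM G v w) * edgeTrace hP t v w G, ← Finset.sum_neg_distrib]
    exact Finset.sum_congr rfl fun G _ => by rw [adjM_self_flipEdge hvw]; ring
  have h3 : ∑ G, m G * ((1 - 2 * adjM G v w) *
      (edgeTrace hP t v w G - edgeTrace hP t v w (flipEdge v w G))) ≤
      ∑ G, m G * (t * (edgeTrace hP t v w G + edgeTrace hP t v w (flipEdge v w G))) :=
    Finset.sum_le_sum fun G _ =>
      mul_le_mul_of_nonneg_left (edgeTrace_sub_flipEdge_le hP ht hvw G) (hm0 G)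
  have h4 : ∑ G, m G * ((1 - 2 * adjM G v w) *
      (edgeTrace hP t v w G - edgeTrace hP t v w (flipEdge v w G))) =
      2 * ∑ G, m G * ((1 - 2 * adjM G v w) * edgeTrace hP t v w G) := by
    simp only [mul_sub (1 - 2 * adjM _ v w), mul_sub (m _), Finset.sum_sub_distrib, h2]
    ring
  have h5 : ∑ G, m G * (t * (edgeTrace hP t v w G + edgeTrace hP t v w (flipEdge v w G))) =
      2 * (t * ∑ G, m G * edgeTrace hP t v w G) := by
    simp only [mul_add, Finset.sum_add_distrib, mul_left_comm _ t, ← Finset.mul_sum, hflip]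
    ring
  have h6 : ∑ G, m G * edgeTrace hP t v w G ≤
      ∑ G, (μ G).toReal * ((adjM G v w + offP P v w) * edgeTrace hP t v w G) := by
    refine Finset.sum_le_sum fun G _ => ?_
    rw [hm, mul_assoc]
    refine mul_le_mul_of_nonneg_left (mul_le_mul_of_nonneg_right ?_
      (edgeTrace_nonneg hP t v w G)) ENNReal.toReal_nonneg
    have := hP0 v w hvw
    by_cases h : G.Adj v w <;> simp [offP, adjM, hvw, h]
    linarith
  rw [h1]
  linarith [mul_le_mul_of_nonneg_left h6 ht]

/-- The Laplace transform `E tr e^{-tS}` of the centered Laplacian `S`. -/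
def laplaceTrace {P : Fin n → Fin n → ℝ} (hP : ∀ v w, P v w = P w v)
    (μ : PMF (SimpleGraph (Fin n))) (t : ℝ) : ℝ :=
  ∑ G, (μ G).toReal * expTrace (isHermitian_lap_sub_expLap hP G) t fun _ => 1

theorem laplaceTrace_nonneg {P : Fin n → Fin n → ℝ} (hP : ∀ v w, P v w = P w v)
    (μ : PMF (SimpleGraph (Fin n))) (t : ℝ) : 0 ≤ laplaceTrace hP μ t :=
  Finset.sum_nonneg fun _ _ => mul_nonneg ENNReal.toReal_nonneg
    (Finset.sum_nonneg fun _ _ => by positivity)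

theorem laplaceTrace_zero {P : Fin n → Fin n → ℝ} (hP : ∀ v w, P v w = P w v)
    (μ : PMF (SimpleGraph (Fin n))) : laplaceTrace hP μ 0 = n := by
  have h : ∑ G, (μ G).toReal = 1 := by
    rw [← ENNReal.toReal_sum fun G _ => μ.apply_ne_top G, ← tsum_fintype (L := .unconditional _),
      μ.tsum_coe, ENNReal.toReal_one]
  simp [laplaceTrace, expTrace, ← Finset.sum_mul, h]

theorem hasDerivAt_laplaceTrace {P : Fin n → Fin n → ℝ} (hP : ∀ v w, P v w = P w v)
    (μ : PMF (SimpleGraph (Fin n))) (t : ℝ) :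
    HasDerivAt (laplaceTrace hP μ)
      (∑ G, (μ G).toReal * -expTrace (isHermitian_lap_sub_expLap hP G) t
        fun u => u ⬝ᵥ (lap G - expLap P) *ᵥ u) t :=
  HasDerivAt.fun_sum fun _ _ => (hasDerivAt_expTrace_one _ t).const_mul _

theorem lap_sub_expLap_form {P : Fin n → Fin n → ℝ} (hP : ∀ v w, P v w = P w v)
    (G : SimpleGraph (Fin n)) (u : Fin n → ℝ) : u ⬝ᵥ (lap G - expLap P) *ᵥ u =
      1 / 2 * ∑ v, ∑ w, (adjM G v w - offP P v w) * (u v - u w) ^ 2 := by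
  rw [lap, expLap, ← wlap_sub, wlap_form]
  · rfl
  · intro v w
    rw [Matrix.sub_apply, Matrix.sub_apply, adjM_symm, offP_symm hP]

theorem deriv_laplaceTrace_le {P : Fin n → Fin n → ℝ} {μ : PMF (SimpleGraph (Fin n))}
    (hμ : IsEdgeProduct P μ) (hP : ∀ v w, P v w = P w v)
    (hP0 : ∀ v w, v ≠ w → 0 ≤ P v w) (hP1 : ∀ v w, v ≠ w → P v w ≤ 1) {K : ℝ} (hK0 : 0 ≤ K)
    (hK : ∀ u : Fin n → ℝ, u ⬝ᵥ expLap P *ᵥ u ≤ K * (u ⬝ᵥ u)) {t : ℝ} (ht : 0 ≤ t) :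
    deriv (laplaceTrace hP μ) t ≤ 2 * K * t * laplaceTrace hP μ t := by
  rw [(hasDerivAt_laplaceTrace hP μ t).deriv]
  set D := ∑ G, (μ G).toReal * -expTrace (isHermitian_lap_sub_expLap hP G) t
        fun u => u ⬝ᵥ (lap G - expLap P) *ᵥ u with hD
  have hD1 : D = 1 / 2 * ∑ v, ∑ w, ∑ G,
      (μ G).toReal * ((offP P v w - adjM G v w) * edgeTrace hP t v w G) := by
    have hform : ∀ G, (expTrace (isHermitian_lap_sub_expLap hP G) t
        fun u => u ⬝ᵥ (lap G - expLap P) *ᵥ u) =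
        1 / 2 * ∑ v, ∑ w, (adjM G v w - offP P v w) * edgeTrace hP t v w G := fun G => by
      simp only [lap_sub_expLap_form hP]
      exact expTrace_sum _ _ _ fun v w u => (u v - u w) ^ 2
    simp only [hD, hform, ← Finset.sum_neg_distrib, Finset.mul_sum]
    rw [Finset.sum_comm]
    refine Finset.sum_congr rfl fun v _ => ?_
    rw [Finset.sum_comm]
    refine Finset.sum_congr rfl fun w _ => Finset.sum_congr rfl fun G _ => ?_
    ring
  have hS : ∑ G, (μ G).toReal * (1 / 2 * ∑ v, ∑ w,
      (adjM G v w + offP P v w) * edgeTrace hP t v w G) = 1 / 2 * ∑ v, ∑ w, ∑ G,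
      (μ G).toReal * ((adjM G v w + offP P v w) * edgeTrace hP t v w G) := by
    simp only [Finset.mul_sum]
    rw [Finset.sum_comm]
    refine Finset.sum_congr rfl fun v _ => ?_
    rw [Finset.sum_comm]
    exact Finset.sum_congr rfl fun w _ => Finset.sum_congr rfl fun G _ => by ring
  have hle : D ≤ t * ∑ G, (μ G).toReal * (1 / 2 * ∑ v, ∑ w,
      (adjM G v w + offP P v w) * edgeTrace hP t v w G) := by
    rw [hD1, hS, mul_left_comm, Finset.mul_sum (a := t)]
    refine mul_le_mul_of_nonneg_left (Finset.sum_le_sum fun v _ => ?_) (by norm_num)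
    rw [Finset.mul_sum]
    exact Finset.sum_le_sum fun w _ => sum_weight_mul_edgeTrace_le hμ hP hP0 hP1 ht v w
  have hG : ∀ G, 1 / 2 * ∑ v, ∑ w, (adjM G v w + offP P v w) * edgeTrace hP t v w G ≤
      expTrace (isHermitian_lap_sub_expLap hP G) t (fun u => u ⬝ᵥ (lap G - expLap P) *ᵥ u) +
        2 * K * expTrace (isHermitian_lap_sub_expLap hP G) t fun _ => 1 := fun G => by
    simp only [edgeTrace]
    rw [← expTrace_sum, ← expTrace_const_mul, ← expTrace_add]
    refine expTrace_mono _ _ fun u hu => ?_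
    have h1 := hK u
    rw [hu, expLap, wlap_form (offP_symm hP)] at h1
    rw [lap_sub_expLap_form hP]
    simp only [add_mul, sub_mul, Finset.sum_add_distrib, Finset.sum_sub_distrib]
    linarith
  have hfin : D ≤ t * (-D + 2 * K * laplaceTrace hP μ t) := by
    refine hle.trans (mul_le_mul_of_nonneg_left ?_ ht)
    rw [hD, laplaceTrace, Finset.mul_sum, ← Finset.sum_neg_distrib, ← Finset.sum_add_distrib]
    refine Finset.sum_le_sum fun G _ => ?_
    have := mul_le_mul_of_nonneg_left (hG G) (ENNReal.toReal_nonneg (a := μ G))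
    linarith
  have hφ := laplaceTrace_nonneg hP μ t
  by_cases hD0 : D ≤ 0
  · exact hD0.trans (by positivity)
  · nlinarith [mul_nonneg ht (not_le.1 hD0).le]

theorem laplaceTrace_le {P : Fin n → Fin n → ℝ} {μ : PMF (SimpleGraph (Fin n))}
    (hμ : IsEdgeProduct P μ) (hP : ∀ v w, P v w = P w v)
    (hP0 : ∀ v w, v ≠ w → 0 ≤ P v w) (hP1 : ∀ v w, v ≠ w → P v w ≤ 1) {K : ℝ} (hK0 : 0 ≤ K)
    (hK : ∀ u : Fin n → ℝ, u ⬝ᵥ expLap P *ᵥ u ≤ K * (u ⬝ᵥ u)) {t : ℝ} (ht : 0 ≤ t) :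
    laplaceTrace hP μ t ≤ n * Real.exp (K * t ^ 2) := by
  have hder : ∀ x, HasDerivAt (fun x => laplaceTrace hP μ x * Real.exp (-(K * x ^ 2)))
      (deriv (laplaceTrace hP μ) x * Real.exp (-(K * x ^ 2)) +
        laplaceTrace hP μ x * (Real.exp (-(K * x ^ 2)) * -(K * (2 * x)))) x := fun x => by
    have h1 := ((hasDerivAt_pow 2 x).const_mul K).neg.exp
    have h2 := (hasDerivAt_laplaceTrace hP μ x)
    rw [← h2.deriv] at h2
    simpa using HasDerivAt.fun_mul h2 h1
  have hanti : AntitoneOn (fun x => laplaceTrace hP μ x * Real.exp (-(K * x ^ 2)))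
      (Set.Ici 0) := by
    refine antitoneOn_of_hasDerivWithinAt_nonpos (convex_Ici 0)
      (fun x _ => (hder x).continuousAt.continuousWithinAt)
      (fun x _ => (hder x).hasDerivWithinAt) fun x hx => ?_
    rw [interior_Ici] at hx
    have h := deriv_laplaceTrace_le hμ hP hP0 hP1 hK0 hK (le_of_lt hx)
    nlinarith [Real.exp_pos (-(K * x ^ 2))]
  have h := hanti (Set.mem_Ici.2 le_rfl) (Set.mem_Ici.2 ht) ht
  simp only [laplaceTrace_zero] at h
  norm_num at h
  rwa [Real.exp_neg, ← div_eq_mul_inv, div_le_iff₀ (Real.exp_pos _)] at h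

/-- Chernoff bound for the smallest eigenvalue of the centered Laplacian. -/
theorem toMeasure_exists_eigenvalue_lt_le {P : Fin n → Fin n → ℝ}
    {μ : PMF (SimpleGraph (Fin n))} (hμ : IsEdgeProduct P μ) (hP : ∀ v w, P v w = P w v)
    (hP0 : ∀ v w, v ≠ w → 0 ≤ P v w) (hP1 : ∀ v w, v ≠ w → P v w ≤ 1) {K : ℝ} (hK0 : 0 ≤ K)
    (hK : ∀ u : Fin n → ℝ, u ⬝ᵥ expLap P *ᵥ u ≤ K * (u ⬝ᵥ u)) {t : ℝ} (ht : 0 ≤ t) (s : ℝ) :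
    μ.toMeasure {G | ∃ i, (isHermitian_lap_sub_expLap hP G).eigenvalues i < -s} ≤
      ENNReal.ofReal (n * Real.exp (K * t ^ 2 - t * s)) := by
  have hL := laplaceTrace_le hμ hP hP0 hP1 hK0 hK ht
  set B := {G | ∃ i, (isHermitian_lap_sub_expLap hP G).eigenvalues i < -s}
  rw [PMF.toMeasure_apply_fintype]
  refine ENNReal.le_ofReal_iff_toReal_le ?_ (by positivity) |>.2 ?_
  · refine (ENNReal.sum_lt_top.2 fun G _ => ?_).ne
    exact (Set.indicator_le_self _ _ G).trans_lt (μ.apply_lt_top G)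
  rw [ENNReal.toReal_sum fun G _ =>
    ((Set.indicator_le_self _ _ G).trans_lt (μ.apply_lt_top G)).ne]
  have hmarkov : (∑ G, (B.indicator μ G).toReal) * Real.exp (t * s) ≤ laplaceTrace hP μ t := by
    rw [Finset.sum_mul]
    refine Finset.sum_le_sum fun G _ => ?_
    by_cases hG : G ∈ B
    · rw [Set.indicator_of_mem hG]
      refine mul_le_mul_of_nonneg_left ?_ ENNReal.toReal_nonneg
      obtain ⟨i, hi⟩ := hG
      have h1 := Finset.single_le_sum (f := fun i => Real.exp
        (-t * (isHermitian_lap_sub_expLap hP G).eigenvalues i) * 1) (fun i _ => by positivity)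
        (Finset.mem_univ i)
      refine le_trans ?_ h1
      rw [mul_one, Real.exp_le_exp]
      nlinarith
    · rw [Set.indicator_of_notMem hG, ENNReal.toReal_zero, zero_mul]
      exact mul_nonneg ENNReal.toReal_nonneg (Finset.sum_nonneg fun _ _ => by positivity)
  rw [Real.exp_sub, ← mul_div_assoc, le_div_iff₀ (Real.exp_pos _)]
  exact hmarkov.trans hL

/-! ### The expected Laplacian of a two-community model -/

/-- The `±1` indicator of the planted partition. -/
def communitySign (n : ℕ) (v : Fin n) : ℝ := if inP1 n v then 1 else -1

theorem communitySign_mul (v w : Fin n) :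
    communitySign n v * communitySign n w = if sameSide n v w then 1 else -1 := by
  unfold communitySign sameSide
  by_cases hv : inP1 n v <;> by_cases hw : inP1 n w <;> simp [hv, hw]

theorem sum_communitySign (hn : Even n) : ∑ v, communitySign n v = 0 := by
  have h : (Finset.univ.filter fun v : Fin n => inP1 n v).card = n / 2 := by
    have := Fin.card_filter_val_lt (n := n) (m := n / 2)
    rw [min_eq_right (Nat.div_le_self n 2)] at this
    convert this using 2
    ext v
    rw [Finset.mem_filter, Finset.mem_filter]
    rfl
  have h2 := Finset.card_filter_add_card_filter_not (s := Finset.univ)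
    (fun v : Fin n => inP1 n v)
  rw [Finset.card_univ, Fintype.card_fin, h] at h2
  obtain ⟨m, rfl⟩ := hn
  have h3 : (Finset.univ.filter fun v : Fin (m + m) => ¬ inP1 (m + m) v).card =
      (m + m) / 2 := by omega
  simp only [communitySign, Finset.sum_ite, Finset.sum_const, h, h3]
  simp

theorem sum_sum_sub_sq (u : Fin n → ℝ) :
    ∑ v, ∑ w, (u v - u w) ^ 2 = 2 * n * (u ⬝ᵥ u) - 2 * (∑ v, u v) ^ 2 := by
  have h : ∀ v w, (u v - u w) ^ 2 = u v * u v + u w * u w - 2 * (u v * u w) := fun v w => by ring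
  simp only [h, Finset.sum_sub_distrib, Finset.sum_add_distrib, Finset.sum_const,
    Finset.card_univ, Fintype.card_fin, ← Finset.mul_sum, ← Finset.sum_mul, dotProduct,
    nsmul_eq_mul]
  ring

theorem sum_sum_mul_sub_sq (e u : Fin n → ℝ) :
    ∑ v, ∑ w, e v * e w * (u v - u w) ^ 2 =
      2 * (∑ v, e v) * (∑ v, e v * u v ^ 2) - 2 * (e ⬝ᵥ u) ^ 2 := by
  have h : ∀ v w, e v * e w * (u v - u w) ^ 2 =
      (e v * u v ^ 2) * e w + e v * (e w * u w ^ 2) - 2 * ((e v * u v) * (e w * u w)) :=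
    fun v w => by ring
  simp only [h, Finset.sum_sub_distrib, Finset.sum_add_distrib, ← Finset.mul_sum,
    ← Finset.sum_mul, dotProduct]
  ring

theorem isHermitian_expLap {P : Fin n → Fin n → ℝ} (hP : ∀ v w, P v w = P w v) :
    (expLap P).IsHermitian :=
  isHermitian_wlap (offP_symm hP)

theorem NSSBMprob.bounds {p pbar q : ℝ} {P : Fin n → Fin n → ℝ} (h : NSSBMprob n p pbar q P)
    (hq : 0 ≤ q) (hqp : q < p) (hpp : p ≤ pbar) (v w : Fin n) (hvw : v ≠ w) :
    0 ≤ P v w ∧ P v w ≤ pbar := by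
  by_cases hs : sameSide n v w
  · have := h.2.1 v w hvw hs
    exact ⟨by linarith, this.2⟩
  · rw [h.2.2 v w hs]
    exact ⟨hq, by linarith⟩

theorem expLap_form_le {P : Fin n → Fin n → ℝ} (hP : ∀ v w, P v w = P w v) {b : ℝ}
    (hb : ∀ v w, v ≠ w → P v w ≤ b) (hb0 : 0 ≤ b) (u : Fin n → ℝ) :
    u ⬝ᵥ expLap P *ᵥ u ≤ n * b * (u ⬝ᵥ u) := by
  rw [expLap, wlap_form (offP_symm hP)]
  have h : ∑ v, ∑ w, offP P v w * (u v - u w) ^ 2 ≤ ∑ v, ∑ w, b * (u v - u w) ^ 2 :=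
    Finset.sum_le_sum fun v _ => Finset.sum_le_sum fun w _ => by
      by_cases hvw : v = w
      · simp [hvw]
      · exact mul_le_mul_of_nonneg_right (by simpa [offP, hvw] using hb v w hvw) (sq_nonneg _)
  simp only [← Finset.mul_sum, sum_sum_sub_sq] at h
  nlinarith [mul_nonneg hb0 (sq_nonneg (∑ v, u v))]

theorem le_expLap_form {p pbar q : ℝ} {P : Fin n → Fin n → ℝ} (h : NSSBMprob n p pbar q P)
    (hn : Even n) {u : Fin n → ℝ} (h1 : ∑ v, u v = 0) (h2 : communitySign n ⬝ᵥ u = 0) :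
    n * (p + q) / 2 * (u ⬝ᵥ u) ≤ u ⬝ᵥ expLap P *ᵥ u := by
  rw [expLap, wlap_form (offP_symm h.1)]
  have hle : ∑ v, ∑ w, ((p + q) / 2 * (u v - u w) ^ 2 +
      (p - q) / 2 * (communitySign n v * communitySign n w * (u v - u w) ^ 2)) ≤
      ∑ v, ∑ w, offP P v w * (u v - u w) ^ 2 :=
    Finset.sum_le_sum fun v _ => Finset.sum_le_sum fun w _ => by
      by_cases hvw : v = w
      · simp [hvw]
      · rw [← mul_assoc, ← add_mul, communitySign_mul]
        refine mul_le_mul_of_nonneg_right ?_ (sq_nonneg _)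
        by_cases hs : sameSide n v w
        · have := (h.2.1 v w hvw hs).1
          simp only [offP, of_apply, hvw, hs, if_true, if_false]
          linarith
        · have := h.2.2 v w hs
          simp only [offP, of_apply, hvw, hs, if_false]
          linarith
  simp only [Finset.sum_add_distrib, ← Finset.mul_sum, sum_sum_sub_sq, sum_sum_mul_sub_sq,
    sum_communitySign hn, h1, h2] at hle
  linarith

theorem expLap_form_span_le {p pbar q : ℝ} {P : Fin n → Fin n → ℝ}
    (h : NSSBMprob n p pbar q P) (hq : 0 ≤ q) (a b : ℝ) {u : Fin n → ℝ}
    (hu : ∀ v, u v = a + b * communitySign n v) :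
    u ⬝ᵥ expLap P *ᵥ u ≤ n * q * (u ⬝ᵥ u) := by
  rw [expLap, wlap_form (offP_symm h.1)]
  have heq : ∑ v, ∑ w, offP P v w * (u v - u w) ^ 2 = ∑ v, ∑ w, q * (u v - u w) ^ 2 :=
    Finset.sum_congr rfl fun v _ => Finset.sum_congr rfl fun w _ => by
      by_cases hs : sameSide n v w
      · have : communitySign n v = communitySign n w := by simp [communitySign, hs.eq]
        simp [hu, this]
      · have hvw : v ≠ w := by rintro rfl; exact hs Iff.rfl
        simp [offP, hvw, h.2.2 v w hs]
  rw [heq]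
  simp only [← Finset.mul_sum, sum_sum_sub_sq]
  nlinarith [mul_nonneg hq (sq_nonneg (∑ v, u v))]

theorem eig_expLap_one_le {p pbar q : ℝ} {P : Fin n → Fin n → ℝ}
    (h : NSSBMprob n p pbar q P) (hn2 : 1 < n) (hq : 0 ≤ q) :
    eig (expLap P) 1 ≤ n * q := by
  have hval : ∀ (a : Fin 2 → ℝ) (v : Fin n),
      (a ᵥ* Matrix.of ![fun _ => 1, communitySign n]) v = a 0 + a 1 * communitySign n v :=
    fun a v => by simp [vecMul, dotProduct, Fin.sum_univ_two]
  refine eig_le_of_forall (isHermitian_expLap h.1) hn2 ![fun _ => 1, communitySign n]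
    (fun a ha => ?_) fun a => expLap_form_span_le h hq _ _ (hval a)
  have hv := fun v => (hval a v).symm.trans (congrFun ha v)
  have h0 := hv ⟨0, by omega⟩
  have h1 := hv ⟨n / 2, by omega⟩
  have e0 : communitySign n ⟨0, by omega⟩ = 1 := if_pos (show 0 < n / 2 by omega)
  have e1 : communitySign n ⟨n / 2, by omega⟩ = -1 := if_neg (lt_irrefl (n / 2))
  rw [e0, Pi.zero_apply] at h0
  rw [e1, Pi.zero_apply] at h1
  ext i
  fin_cases i
  · change a 0 = 0; linarith
  · change a 1 = 0; linarith

theorem le_eig_lap_two {p pbar q s : ℝ} {P : Fin n → Fin n → ℝ}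
    (h : NSSBMprob n p pbar q P) (hn : Even n) (hn2 : 2 < n) {G : SimpleGraph (Fin n)}
    (hG : ∀ i, -s ≤ (isHermitian_lap_sub_expLap h.1 G).eigenvalues i) :
    n * (p + q) / 2 - s ≤ eig (lap G) 2 := by
  refine le_eig_of_forall (isHermitian_wlap (adjM_symm G)) hn2 ![fun _ => 1, communitySign n]
    fun u hu => ?_
  have h1 : ∑ v, u v = 0 := by simpa [dotProduct] using hu 0
  have h2 : communitySign n ⬝ᵥ u = 0 := hu 1
  have h3 := le_expLap_form h hn h1 h2
  have h4 : -s * (u ⬝ᵥ u) ≤ u ⬝ᵥ (lap G - expLap P) *ᵥ u := by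
    rw [dotProduct_mulVec_eq_sum (isHermitian_lap_sub_expLap h.1 G),
      ← sum_evec_mul_evec (isHermitian_lap_sub_expLap h.1 G), Finset.mul_sum]
    refine Finset.sum_le_sum fun i _ => ?_
    rw [← pow_two]
    exact mul_le_mul_of_nonneg_right (hG i) (sq_nonneg _)
  rw [sub_mulVec, dotProduct_sub] at h4
  change _ ≤ u ⬝ᵥ lap G *ᵥ u
  linarith

/-- **Lemma (eigenvalue gap `λ₃(L) - λ₂(L⋆)`).**
In the NSSBM setting, there is a universal constant `C > 0` such that if
`n(p-q) ≥ C(√(n p̄ log(n/δ)) + log(n/δ))`, then for any `δ ≥ n⁻¹⁰`, with probability at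
least `1 - δ`, `λ₃(L) - λ₂(L⋆) ≥ n(p-q)/4`, where `L⋆ = E[L]`. -/
theorem lambda3_minus_lambda2star :
    ∃ C : ℝ, 0 < C ∧ ∀ n : ℕ, Even n →
      ∀ p pbar q δ : ℝ, 0 ≤ q → q < p → p ≤ pbar → pbar ≤ 1 → 1 / (n : ℝ) ^ 10 ≤ δ →
      ∀ (P : Fin n → Fin n → ℝ) (μ : PMF (SimpleGraph (Fin n))),
        NSSBMprob n p pbar q P → IsEdgeProduct P μ →
        C * (Real.sqrt ((n : ℝ) * pbar * Real.log (n / δ)) + Real.log (n / δ)) ≤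
          (n : ℝ) * (p - q) →
        1 - ENNReal.ofReal δ ≤ μ.toMeasure {G |
          (n : ℝ) * (p - q) / 4 ≤ eig (lap G) 2 - eig (expLap P) 1} := by
  refine ⟨8, by norm_num, fun n hn p pbar q δ hq hqp hpp hp1 hδ P μ hP hμ hC => ?_⟩
  rcases Nat.eq_zero_or_pos n with rfl | hn0
  · have hroots : ∀ (M : Matrix (Fin 0) (Fin 0) ℝ) (k : ℕ), eig M k = 0 := fun M k => by
      simp [eig]
    simp [hroots]
  rcases le_or_gt 1 δ with hδ1 | hδ1
  · rw [tsub_eq_zero_of_le (by simpa using ENNReal.ofReal_le_ofReal hδ1)]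
    exact zero_le
  have hnpos : (0 : ℝ) < n := Nat.cast_pos.2 hn0
  have hδ0 : 0 < δ := lt_of_lt_of_le (by positivity) hδ
  have hlog : Real.log n ≤ Real.log (n / δ) :=
    Real.log_le_log hnpos ((le_div_iff₀ hδ0).2 (by nlinarith))
  have hlog0 : 0 ≤ Real.log (n / δ) := (Real.log_natCast_nonneg n).trans hlog
  have hn2 : 2 < n := by
    obtain ⟨m, rfl⟩ := hn
    by_contra! hle
    obtain rfl : m = 1 := by omega
    norm_num at hC hlog
    linarith [Real.log_two_gt_d9, Real.sqrt_nonneg (2 * pbar * Real.log (2 / δ))]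
  set ℓ := Real.log (n / δ) with hℓ
  have hb := hP.bounds hq hqp hpp
  set K : ℝ := n * pbar with hK
  have hK0 : 0 < K := mul_pos hnpos (by linarith)
  set s : ℝ := n * (p - q) / 4 with hs
  have hs0 : 0 ≤ s := by have := sub_pos.2 hqp; positivity
  have hsK : 4 * K * ℓ ≤ s ^ 2 := by
    have h1 : 2 * √(K * ℓ) ≤ s := by linarith
    have h2 := Real.sq_sqrt (mul_nonneg hK0.le hlog0)
    nlinarith [Real.sqrt_nonneg (K * ℓ)]
  have hbad := toMeasure_exists_eigenvalue_lt_le hμ hP.1 (fun v w hvw => (hb v w hvw).1)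
    (fun v w hvw => (hb v w hvw).2.trans hp1) hK0.le
    (expLap_form_le hP.1 (fun v w hvw => (hb v w hvw).2) (by linarith))
    (t := s / (2 * K)) (by positivity) s
  have hexp : n * Real.exp (K * (s / (2 * K)) ^ 2 - s / (2 * K) * s) ≤ δ := by
    have h1 : K * (s / (2 * K)) ^ 2 - s / (2 * K) * s = -(s ^ 2 / (4 * K)) := by
      field_simp; ring
    have h2 : ℓ ≤ s ^ 2 / (4 * K) := (le_div_iff₀ (by positivity)).2 (by linarith)
    calc n * Real.exp (K * (s / (2 * K)) ^ 2 - s / (2 * K) * s)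
        ≤ n * Real.exp (-ℓ) := by rw [h1]; gcongr
      _ = δ := by rw [Real.exp_neg, hℓ, Real.exp_log (by positivity)]; field_simp
  set B := {G | ∃ i, (isHermitian_lap_sub_expLap hP.1 G).eigenvalues i < -s}
  calc 1 - ENNReal.ofReal δ ≤ 1 - μ.toMeasure B :=
        tsub_le_tsub_left (hbad.trans (ENNReal.ofReal_le_ofReal hexp)) 1
    _ = μ.toMeasure Bᶜ := (prob_compl_eq_one_sub MeasurableSpace.measurableSet_top).symm
    _ ≤ _ := measure_mono fun G hG => ?_
  have hG : ∀ i, -s ≤ (isHermitian_lap_sub_expLap hP.1 G).eigenvalues i := by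
    simpa [B] using hG
  have h1 := le_eig_lap_two hP hn hn2 hG
  have h2 := eig_expLap_one_le hP (by omega) hq
  change s ≤ _
  linarith

end
end

section
/- Let G be drawn from a distribution in NSSBM(n,p,p̄,q) satisfying the gap condition n(p−q) ≥ C₀·(√(n·p̄·log n) + log n) for a sufficiently large universal constant C₀, with α := p̄/(p−q) constant. Then for δ ≥ 10·n^{−2} and n sufficiently large, with probability at least 1 − δ, the unit second eigenvector u2 of the unnormalized Laplacian satisfies ‖u2‖_∞ ≤ C(α,δ)/√n for a constant C(α,δ) depending only on α and δ. -/
open Matrix MeasureTheory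
open scoped BigOperators ENNReal Classical

noncomputable section

variable {n : ℕ}

/-- Exponential supermartingale bound for independent Bernoulli variables: the weights of the
coordinates in `S` may depend on the coordinates outside `S`. -/
lemma sum_bernoulli_mul_exp_le_one {ι : Type*} [Fintype ι] [DecidableEq ι] (p : ι → ℝ)
    (h0 : ∀ i, 0 ≤ p i) (h1 : ∀ i, p i ≤ 1) (S : ι → Prop) (a : (ι → Bool) → ι → ℝ)
    (ha : ∀ b b' : ι → Bool, (∀ i, ¬ S i → b i = b' i) → ∀ i, S i → a b i = a b' i) :
    ∑ b : ι → Bool, (∏ i, if b i then p i else 1 - p i) *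
      Real.exp (∑ i, if S i then (if b i then a b i else 0) - p i * (Real.exp (a b i) - 1)
        else 0) ≤ 1 := by
  have hrw : ∀ b : ι → Bool, (∏ i, if b i then p i else 1 - p i) *
      Real.exp (∑ i, if S i then (if b i then a b i else 0) - p i * (Real.exp (a b i) - 1)
        else 0) = (∏ i : {i // S i}, (if b i then p i else 1 - p i) *
          Real.exp ((if b i then a b i else 0) - p i * (Real.exp (a b i) - 1))) *
        ∏ i : {i // ¬ S i}, (if b i then p i else 1 - p i) := by
    intro b
    rw [Real.exp_sum, ← Finset.prod_mul_distrib, ← Fintype.prod_subtype_mul_prod_subtype S]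
    congr 1
    · exact Finset.prod_congr rfl fun i _ => by rw [if_pos i.2]
    · exact Finset.prod_congr rfl fun i _ => by rw [if_neg i.2]; simp
  simp_rw [hrw]
  rw [← (Equiv.piEquivPiSubtypeProd S (fun _ => Bool)).symm.sum_comp, Fintype.sum_prod_type_right]
  have hin : ∀ b2 : {i // ¬ S i} → Bool, ∑ b1 : {i // S i} → Bool,
      (∏ i : {i // S i}, (if b1 i then p i else 1 - p i) *
          Real.exp ((if b1 i then a ((Equiv.piEquivPiSubtypeProd S (fun _ => Bool)).symm
            (fun _ => false, b2)) i else 0) - p i * (Real.exp (a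
            ((Equiv.piEquivPiSubtypeProd S (fun _ => Bool)).symm
            (fun _ => false, b2)) i) - 1))) ≤ 1 := by
    intro b2
    set c := a ((Equiv.piEquivPiSubtypeProd S (fun _ => Bool)).symm (fun _ => false, b2)) with hc
    have := Finset.prod_univ_sum (fun _ : {i // S i} => (Finset.univ : Finset Bool))
      (fun i (b : Bool) => (if b then p i else 1 - p i) *
          Real.exp ((if b then c i else 0) - p i * (Real.exp (c i) - 1)))
    rw [Fintype.piFinset_univ] at this
    rw [← this]
    refine Finset.prod_le_one (fun i _ => Finset.sum_nonneg fun b _ => ?_) fun i _ => ?_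
    · have := h0 i
      have := h1 i
      have : 0 ≤ (if b then p i else 1 - p i) := by split_ifs <;> linarith
      positivity
    · simp only [Fintype.sum_bool, if_true, Bool.false_eq_true, if_false]
      have e1 : Real.exp (c i - p i * (Real.exp (c i) - 1)) =
          Real.exp (c i) * Real.exp (-(p i * (Real.exp (c i) - 1))) := by
        rw [← Real.exp_add]; ring_nf
      rw [e1, zero_sub]
      have e2 := Real.add_one_le_exp (p i * (Real.exp (c i) - 1))
      have e3 : Real.exp (p i * (Real.exp (c i) - 1)) *
          Real.exp (-(p i * (Real.exp (c i) - 1))) = 1 := by rw [← Real.exp_add]; simp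
      nlinarith [Real.exp_pos (-(p i * (Real.exp (c i) - 1)))]
  have hout : ∑ b2 : {i // ¬ S i} → Bool, ∏ i : {i // ¬ S i},
      (if b2 i then p i else 1 - p i) = 1 := by
    have := Finset.prod_univ_sum (fun _ : {i // ¬ S i} => (Finset.univ : Finset Bool))
      (fun i (b : Bool) => (if b then p i else 1 - p i))
    rw [Fintype.piFinset_univ] at this
    rw [← this]
    exact Finset.prod_eq_one fun i _ => by simp
  refine le_trans (Finset.sum_le_sum fun b2 _ => ?_) hout.le
  have hR : 0 ≤ ∏ i : {i // ¬ S i}, (if b2 i then p i else 1 - p i) :=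
    Finset.prod_nonneg fun i _ => by
      have := h0 i
      have := h1 i
      split_ifs <;> linarith
  calc _ = ∑ b1 : {i // S i} → Bool, (∏ i : {i // S i}, (if b1 i then p i else 1 - p i) *
          Real.exp ((if b1 i then a ((Equiv.piEquivPiSubtypeProd S (fun _ => Bool)).symm
            (fun _ => false, b2)) i else 0) - p i * (Real.exp (a
            ((Equiv.piEquivPiSubtypeProd S (fun _ => Bool)).symm
            (fun _ => false, b2)) i) - 1))) *
          ∏ i : {i // ¬ S i}, (if b2 i then p i else 1 - p i) := by
        refine Finset.sum_congr rfl fun b1 _ => ?_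
        congr 1
        · refine Finset.prod_congr rfl fun i _ => ?_
          rw [ha ((Equiv.piEquivPiSubtypeProd S (fun _ => Bool)).symm (b1, b2))
            ((Equiv.piEquivPiSubtypeProd S (fun _ => Bool)).symm (fun _ => false, b2))
            (fun j hj => by simp [Equiv.piEquivPiSubtypeProd, hj]) i i.2]
          simp [Equiv.piEquivPiSubtypeProd, i.2]
        · refine Finset.prod_congr rfl fun i _ => ?_
          simp [Equiv.piEquivPiSubtypeProd, i.2]
    _ ≤ _ := by
        rw [← Finset.sum_mul]
        exact mul_le_of_le_one_left hR (hin b2)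

/-- Unordered pairs of distinct vertices, listed increasingly. -/
abbrev VPair (n : ℕ) := {e : Fin n × Fin n // e.1 < e.2}

/-- A graph is determined by its edge indicators. -/
def graphEquiv (n : ℕ) : SimpleGraph (Fin n) ≃ (VPair n → Bool) where
  toFun G e := decide (G.Adj e.1.1 e.1.2)
  invFun b :=
    { Adj := fun i j => (∃ h : i < j, b ⟨(i, j), h⟩) ∨ ∃ h : j < i, b ⟨(j, i), h⟩
      symm := ⟨fun _ _ h => h.symm⟩
      loopless := ⟨fun i h => by rcases h with ⟨h, _⟩ | ⟨h, _⟩ <;> exact lt_irrefl _ h⟩ }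
  left_inv G := by
    ext i j
    simp only [decide_eq_true_eq, exists_prop]
    constructor
    · rintro (⟨_, h⟩ | ⟨_, h⟩)
      · exact h
      · exact h.symm
    · intro h
      rcases lt_trichotomy i j with hij | hij | hij
      · exact Or.inl ⟨hij, h⟩
      · exact absurd hij h.ne
      · exact Or.inr ⟨hij, h.symm⟩
  right_inv b := by
    funext e
    obtain ⟨⟨i, j⟩, h⟩ := e
    have h' : ¬ j < i := not_lt.2 (le_of_lt h)
    simp only at h h'
    simp [h, h']

/-- Probability weight of a graph under the product distribution. -/
def graphWeight (P : Fin n → Fin n → ℝ) (G : SimpleGraph (Fin n)) : ℝ :=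
  ∏ e : VPair n, if G.Adj e.1.1 e.1.2 then P e.1.1 e.1.2 else 1 - P e.1.1 e.1.2

/-- Probability of an event under the product distribution. -/
def graphProb (P : Fin n → Fin n → ℝ) (B : SimpleGraph (Fin n) → Prop) : ℝ :=
  ∑ G, if B G then graphWeight P G else 0

/-- `P` has entries in `[0, 1]` off the diagonal. -/
def IsProbMatrix (P : Fin n → Fin n → ℝ) : Prop :=
  ∀ i j, i ≠ j → 0 ≤ P i j ∧ P i j ≤ 1

lemma graphWeight_nonneg {P : Fin n → Fin n → ℝ} (hP : IsProbMatrix P) (G) :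
    0 ≤ graphWeight P G :=
  Finset.prod_nonneg fun e _ => by
    have := hP _ _ e.2.ne
    split_ifs <;> linarith

lemma graphProb_mono {P : Fin n → Fin n → ℝ} (hP : IsProbMatrix P)
    {B B' : SimpleGraph (Fin n) → Prop} (h : ∀ G, B G → B' G) :
    graphProb P B ≤ graphProb P B' :=
  Finset.sum_le_sum fun G _ => by
    have := graphWeight_nonneg hP G
    have := h G
    split_ifs <;> simp_all

lemma graphProb_or_le {P : Fin n → Fin n → ℝ} (hP : IsProbMatrix P)
    (B B' : SimpleGraph (Fin n) → Prop) :
    graphProb P (fun G => B G ∨ B' G) ≤ graphProb P B + graphProb P B' := by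
  unfold graphProb
  rw [← Finset.sum_add_distrib]
  refine Finset.sum_le_sum fun G _ => ?_
  have := graphWeight_nonneg hP G
  by_cases h1 : B G <;> by_cases h2 : B' G <;> simp [h1, h2, this]

lemma graphProb_exists_le {P : Fin n → Fin n → ℝ} (hP : IsProbMatrix P) {κ : Type*}
    (s : Finset κ) (B : κ → SimpleGraph (Fin n) → Prop) :
    graphProb P (fun G => ∃ k ∈ s, B k G) ≤ ∑ k ∈ s, graphProb P (B k) := by
  unfold graphProb
  rw [Finset.sum_comm]
  refine Finset.sum_le_sum fun G _ => ?_
  have hw := graphWeight_nonneg hP G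
  have hnn : ∀ k ∈ s, 0 ≤ (if B k G then graphWeight P G else 0) := fun k _ => by
    split_ifs <;> simp [hw]
  split_ifs with h
  · obtain ⟨k, hk, hB⟩ := h
    calc graphWeight P G = if B k G then graphWeight P G else 0 := by rw [if_pos hB]
      _ ≤ _ := Finset.single_le_sum hnn hk
  · exact Finset.sum_nonneg hnn

lemma toMeasure_eq_ofReal_graphProb {P : Fin n → Fin n → ℝ} (hP : IsProbMatrix P)
    {μ : PMF (SimpleGraph (Fin n))} (hμ : IsEdgeProduct P μ)
    (B : SimpleGraph (Fin n) → Prop) :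
    μ.toMeasure {G | B G} = ENNReal.ofReal (graphProb P B) := by
  rw [PMF.toMeasure_apply_fintype]
  unfold graphProb
  rw [ENNReal.ofReal_sum_of_nonneg fun G _ => by
    have := graphWeight_nonneg hP G
    split_ifs <;> simp [this]]
  refine Finset.sum_congr rfl fun G _ => ?_
  rw [Set.indicator_apply]
  simp only [Set.mem_ofPred_eq]
  split_ifs with h
  · rw [hμ G, graphWeight, ENNReal.ofReal_prod_of_nonneg fun e _ => by
      have := hP _ _ e.2.ne
      split_ifs <;> linarith]
    rw [← Finset.prod_subtype (Finset.univ.filter fun e : Fin n × Fin n => e.1 < e.2)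
      (p := fun e : Fin n × Fin n => e.1 < e.2) (by simp)
      (fun e => ENNReal.ofReal (if G.Adj e.1 e.2 then P e.1 e.2 else 1 - P e.1 e.2))]
    refine Finset.prod_congr rfl fun e _ => ?_
    split_ifs <;> rfl
  · simp

/-- Double sums of symmetric functions vanishing on the diagonal. -/
lemma sum_sum_eq_two_mul_sum_vpair (F : Fin n → Fin n → ℝ) (hs : ∀ i j, F i j = F j i)
    (hd : ∀ i, F i i = 0) : ∑ i, ∑ j, F i j = 2 * ∑ e : VPair n, F e.1.1 e.1.2 := by
  have h1 : ∑ e : VPair n, F e.1.1 e.1.2 = ∑ i, ∑ j, if i < j then F i j else 0 := by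
    rw [← Finset.sum_subtype (Finset.univ.filter fun e : Fin n × Fin n => e.1 < e.2)
      (p := fun e : Fin n × Fin n => e.1 < e.2) (by simp) (fun e => F e.1 e.2),
      Finset.sum_filter, Fintype.sum_prod_type]
  have h2 : ∑ i, ∑ j, (if i < j then F i j else 0) = ∑ i, ∑ j, if j < i then F i j else 0 := by
    rw [Finset.sum_comm]
    exact Finset.sum_congr rfl fun i _ => Finset.sum_congr rfl fun j _ => by rw [hs]
  rw [h1, two_mul]
  nth_rewrite 2 [h2]
  rw [← Finset.sum_add_distrib]
  refine Finset.sum_congr rfl fun i _ => ?_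
  rw [← Finset.sum_add_distrib]
  refine Finset.sum_congr rfl fun j _ => ?_
  rcases lt_trichotomy i j with h | h | h
  · simp [h, not_lt.2 h.le]
  · subst h; simp [hd]
  · simp [h, not_lt.2 h.le]

lemma adjM_comm (G : SimpleGraph (Fin n)) (i j) : adjM G i j = adjM G j i := by
  simp [adjM, G.adj_comm]

lemma adjM_self (G : SimpleGraph (Fin n)) (i) : adjM G i i = 0 := by
  simp [adjM]

lemma adjM_nonneg (G : SimpleGraph (Fin n)) (i j) : 0 ≤ adjM G i j := by
  simp only [adjM, of_apply]; split_ifs <;> simp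

lemma adjM_le_one (G : SimpleGraph (Fin n)) (i j) : adjM G i j ≤ 1 := by
  simp only [adjM, of_apply]; split_ifs <;> simp

lemma adjM_mul_self (G : SimpleGraph (Fin n)) (i j) : adjM G i j * adjM G i j = adjM G i j := by
  simp only [adjM, of_apply]; split_ifs <;> simp

/-- Chernoff bound with weights on the pairs in `S` that may depend on the pairs outside `S`. -/
lemma graphProb_chernoff {P : Fin n → Fin n → ℝ} (hP : IsProbMatrix P)
    (hsym : ∀ i j, P i j = P j i) (S : Fin n → Fin n → Prop)
    (a : SimpleGraph (Fin n) → Fin n → Fin n → ℝ)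
    (has : ∀ G i j, a G i j = a G j i) (haS : ∀ G i j, ¬ S i j → a G i j = 0)
    (ha : ∀ G G' : SimpleGraph (Fin n), (∀ i j, ¬ S i j → (G.Adj i j ↔ G'.Adj i j)) →
      a G = a G') (hS : ∀ i j, S i j → S j i) (c : ℝ) :
    graphProb P (fun G => 2 * c + ∑ i, ∑ j, offP P i j * (Real.exp (a G i j) - 1) ≤
      ∑ i, ∑ j, adjM G i j * a G i j) ≤ Real.exp (-c) := by
  have key : ∑ G, graphWeight P G * Real.exp (∑ e : VPair n, if S e.1.1 e.1.2 then
      (if G.Adj e.1.1 e.1.2 then a G e.1.1 e.1.2 else 0) -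
        P e.1.1 e.1.2 * (Real.exp (a G e.1.1 e.1.2) - 1) else 0) ≤ 1 := by
    rw [← (graphEquiv n).symm.sum_comp]
    convert sum_bernoulli_mul_exp_le_one (fun e : VPair n => P e.1.1 e.1.2)
      (fun e => (hP _ _ e.2.ne).1) (fun e => (hP _ _ e.2.ne).2)
      (fun e => S e.1.1 e.1.2) (fun b e => a ((graphEquiv n).symm b) e.1.1 e.1.2) ?_ using 1
    · refine Finset.sum_congr rfl fun b _ => ?_
      have hb : ∀ e : VPair n, ((graphEquiv n).symm b).Adj e.1.1 e.1.2 ↔ b e = true := by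
        intro e
        have := congrFun ((graphEquiv n).apply_symm_apply b) e
        rw [← this]
        simp [graphEquiv]
      simp only [graphWeight, hb]
    · intro b b' hbb e _
      rw [ha _ ((graphEquiv n).symm b')]
      intro i j hij
      have hb : ∀ b : VPair n → Bool, ∀ e : VPair n,
          ((graphEquiv n).symm b).Adj e.1.1 e.1.2 ↔ b e = true := by
        intro b e
        have := congrFun ((graphEquiv n).apply_symm_apply b) e
        rw [← this]
        simp [graphEquiv]
      rcases lt_trichotomy i j with h | h | h
      · have h1 := hb b ⟨(i, j), h⟩
        have h2 := hb b' ⟨(i, j), h⟩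
        rw [hbb ⟨(i, j), h⟩ hij] at h1
        exact h1.trans h2.symm
      · subst h; simp
      · have h1 := hb b ⟨(j, i), h⟩
        have h2 := hb b' ⟨(j, i), h⟩
        rw [hbb ⟨(j, i), h⟩ fun h => hij (hS _ _ h)] at h1
        rw [SimpleGraph.adj_comm, h1, SimpleGraph.adj_comm, ← h2]
  have hexp : ∀ G, ∑ i, ∑ j, adjM G i j * a G i j -
      ∑ i, ∑ j, offP P i j * (Real.exp (a G i j) - 1) = 2 * ∑ e : VPair n,
      if S e.1.1 e.1.2 then (if G.Adj e.1.1 e.1.2 then a G e.1.1 e.1.2 else 0) -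
        P e.1.1 e.1.2 * (Real.exp (a G e.1.1 e.1.2) - 1) else 0 := by
    intro G
    rw [← Finset.sum_sub_distrib]
    simp_rw [← Finset.sum_sub_distrib]
    rw [sum_sum_eq_two_mul_sum_vpair]
    · congr 1
      refine Finset.sum_congr rfl fun e _ => ?_
      by_cases hSe : S e.1.1 e.1.2
      · simp [adjM, offP, e.2.ne, hSe]
      · simp [hSe, haS G _ _ hSe]
    · intro i j
      rw [adjM_comm, has G i j]
      congr 2
      simp only [offP, of_apply, hsym i j, eq_comm]
    · intro i
      simp [adjM_self, offP]
  refine le_trans ?_ (mul_le_of_le_one_right (Real.exp_pos (-c)).le key)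
  rw [Finset.mul_sum]
  refine Finset.sum_le_sum fun G _ => ?_
  have hw := graphWeight_nonneg hP G
  split_ifs with h
  · have := hexp G
    calc graphWeight P G = graphWeight P G * 1 := (mul_one _).symm
      _ ≤ graphWeight P G * Real.exp (-c + ∑ e : VPair n, if S e.1.1 e.1.2 then
      (if G.Adj e.1.1 e.1.2 then a G e.1.1 e.1.2 else 0) -
        P e.1.1 e.1.2 * (Real.exp (a G e.1.1 e.1.2) - 1) else 0) := by
          refine mul_le_mul_of_nonneg_left (Real.one_le_exp ?_) hw
          linarith
      _ = _ := by rw [Real.exp_add]; ring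
  · positivity

/-- The graph with all edges at `v` removed. -/
def isolate (G : SimpleGraph (Fin n)) (v : Fin n) : SimpleGraph (Fin n) where
  Adj i j := G.Adj i j ∧ i ≠ v ∧ j ≠ v
  symm := ⟨fun _ _ h => ⟨h.1.symm, h.2.2, h.2.1⟩⟩
  loopless := ⟨fun _ h => h.1.ne rfl⟩

lemma offP_comm {P : Fin n → Fin n → ℝ} (hsym : ∀ i j, P i j = P j i) (i j) :
    offP P i j = offP P j i := by
  simp only [offP, of_apply, hsym i j, eq_comm]

lemma offP_self (P : Fin n → Fin n → ℝ) (i) : offP P i i = 0 := by simp [offP]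

lemma offP_nonneg {P : Fin n → Fin n → ℝ} (hP : IsProbMatrix P) (i j) : 0 ≤ offP P i j := by
  simp only [offP, of_apply]
  split_ifs with h
  · exact le_rfl
  · exact (hP i j h).1

lemma exp_sub_one_le_add_sq {x : ℝ} (hx : |x| ≤ 1) : Real.exp x - 1 ≤ x + x ^ 2 := by
  have := (abs_le.1 (Real.abs_exp_sub_one_sub_id_le hx)).2
  linarith

/-- Chernoff bound for a fixed symmetric weight matrix. -/
lemma graphProb_chernoff_const {P : Fin n → Fin n → ℝ} (hP : IsProbMatrix P)
    (hsym : ∀ i j, P i j = P j i) (a : Fin n → Fin n → ℝ) (has : ∀ i j, a i j = a j i) (c : ℝ) :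
    graphProb P (fun G => 2 * c + ∑ i, ∑ j, offP P i j * (Real.exp (a i j) - 1) ≤
      ∑ i, ∑ j, adjM G i j * a i j) ≤ Real.exp (-c) :=
  graphProb_chernoff hP hsym (fun _ _ => True) (fun _ => a) (fun _ => has) (by simp)
    (fun _ _ _ => rfl) (by simp) c

/-- Chernoff bound for the edges at `v`, with weights depending on the other edges. -/
lemma graphProb_chernoff_row {P : Fin n → Fin n → ℝ} (hP : IsProbMatrix P)
    (hsym : ∀ i j, P i j = P j i) (v : Fin n) (y : SimpleGraph (Fin n) → Fin n → ℝ) (c : ℝ) :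
    graphProb P (fun G => c + ∑ w, offP P v w * (Real.exp (y (isolate G v) w) - 1) ≤
      ∑ w, adjM G v w * y (isolate G v) w) ≤ Real.exp (-c) := by
  have h := graphProb_chernoff hP hsym (fun i j => i = v ∨ j = v)
    (fun G i j => (if i = v then (if j = v then 0 else y (isolate G v) j) else 0) +
      (if j = v then (if i = v then 0 else y (isolate G v) i) else 0))
    (fun G i j => add_comm _ _) ?_ ?_ (fun i j h => h.symm) c
  · refine le_trans (graphProb_mono hP fun G hG => ?_) h
    have h1 : ∀ M : Matrix (Fin n) (Fin n) ℝ, (∀ i j, M i j = M j i) → M v v = 0 →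
        ∀ f : ℝ → ℝ, f 0 = 0 → ∀ y : Fin n → ℝ,
        ∑ i, ∑ j, M i j * f ((if i = v then (if j = v then 0 else y j) else 0) +
          (if j = v then (if i = v then 0 else y i) else 0)) = 2 * ∑ w, M v w * f (y w) := by
      intro M hM hv f hf y
      have : ∀ i j, M i j * f ((if i = v then (if j = v then 0 else y j) else 0) +
          (if j = v then (if i = v then 0 else y i) else 0)) =
          (if i = v then M v j * f (y j) else 0) + (if j = v then M v i * f (y i) else 0) := by
        intro i j
        by_cases hi : i = v <;> by_cases hj : j = v <;> simp [hi, hj, hv, hf, hM i v]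
      simp_rw [this, Finset.sum_add_distrib]
      rw [Finset.sum_comm]
      simp [two_mul]
    have e1 := h1 (offP P) (offP_comm hsym) (offP_self P v) (fun x => Real.exp x - 1) (by simp)
      (y (isolate G v))
    have e2 := h1 (adjM G) (adjM_comm G) (adjM_self G v) id rfl (y (isolate G v))
    simp only [id] at e2
    rw [e1, e2]
    linarith
  · intro G i j h
    push Not at h
    simp [h]
  · intro G G' h
    have : isolate G v = isolate G' v := by
      ext i j
      simp only [isolate]
      constructor
      · rintro ⟨h1, h2, h3⟩
        exact ⟨(h i j (by tauto)).1 h1, h2, h3⟩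
      · rintro ⟨h1, h2, h3⟩
        exact ⟨(h i j (by tauto)).2 h1, h2, h3⟩
    rw [this]

section events

variable {P : Fin n → Fin n → ℝ} {d : ℝ}

lemma sum_offP_le (hn : 0 < n) (hd : ∀ i j, offP P i j ≤ d / n) (v : Fin n) :
    ∑ w, offP P v w ≤ d := by
  calc ∑ w, offP P v w ≤ ∑ w : Fin n, d / n := Finset.sum_le_sum fun w _ => hd v w
    _ = d := by simp; field_simp

lemma graphProb_not_forall_le (hP : IsProbMatrix P) (B : Fin n → SimpleGraph (Fin n) → Prop)
    {x : ℝ} (h : ∀ v, graphProb P (fun G => ¬ B v G) ≤ x) :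
    graphProb P (fun G => ¬ ∀ v, B v G) ≤ n * x := by
  refine le_trans (graphProb_mono hP (B' := fun G => ∃ v ∈ Finset.univ, ¬ B v G)
    fun G hG => by simpa using hG) ?_
  refine le_trans (graphProb_exists_le hP _ _) ?_
  refine le_trans (Finset.sum_le_sum fun v _ => h v) ?_
  simp

lemma graphProb_degree_upper (hP : IsProbMatrix P) (hsym : ∀ i j, P i j = P j i) (hn : 0 < n)
    (hd : ∀ i j, offP P i j ≤ d / n) :
    graphProb P (fun G => ¬ ∀ v, ∑ w, adjM G v w ≤ 3 * d) ≤ n * Real.exp (-d) := by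
  refine graphProb_not_forall_le hP _ fun v => ?_
  refine le_trans (graphProb_mono hP fun G hG => ?_)
    (graphProb_chernoff_row hP hsym v (fun _ _ => 1) d)
  push Not at hG
  have h1 := sum_offP_le hn hd v
  rw [← Finset.sum_mul, ← Finset.sum_mul]
  have h2 : Real.exp 1 - 1 ≤ 2 := by have := exp_sub_one_le_add_sq (x := 1) (by simp); linarith
  have h3 : 0 ≤ ∑ w, offP P v w := Finset.sum_nonneg fun w _ => offP_nonneg hP _ _
  nlinarith

lemma graphProb_degree_lower (hP : IsProbMatrix P) (hsym : ∀ i j, P i j = P j i) (hn : 0 < n)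
    (hd : ∀ i j, offP P i j ≤ d / n) {η : ℝ} (hη : 0 < η) (hη1 : η ≤ 1) :
    graphProb P (fun G => ¬ ∀ v, ∑ w, offP P v w - η * d ≤ ∑ w, adjM G v w) ≤
      n * Real.exp (-(η ^ 2 * d / 4)) := by
  refine graphProb_not_forall_le hP _ fun v => ?_
  refine le_trans (graphProb_mono hP fun G hG => ?_)
    (graphProb_chernoff_row hP hsym v (fun _ _ => -(η / 2)) (η ^ 2 * d / 4))
  push Not at hG
  have h1 := sum_offP_le hn hd v
  rw [← Finset.sum_mul, ← Finset.sum_mul]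
  have h2 := exp_sub_one_le_add_sq (x := -(η / 2)) (by rw [abs_neg, abs_of_pos] <;> linarith)
  have h3 : 0 ≤ ∑ w, offP P v w := Finset.sum_nonneg fun w _ => offP_nonneg hP _ _
  have h4 := mul_le_mul_of_nonneg_left h2 h3
  have h5 : (∑ w, offP P v w) * (η / 2) ^ 2 ≤ d * (η / 2) ^ 2 := by gcongr
  nlinarith

lemma graphProb_cut (hP : IsProbMatrix P) (hsym : ∀ i j, P i j = P j i) (hn : 0 < n)
    (hd : ∀ i j, offP P i j ≤ d / n) {η : ℝ} (hη : 0 < η) (hη1 : η ≤ 1)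
    (s : Fin n → Fin n → Prop) [∀ i j, Decidable (s i j)] (hs : ∀ i j, s i j ↔ s j i) :
    graphProb P (fun G => ¬ ∑ i, ∑ j, (if s i j then adjM G i j else 0) ≤
      ∑ i, ∑ j, (if s i j then offP P i j else 0) + η * d * n) ≤
      Real.exp (-(η ^ 2 * d * n / 8)) := by
  refine le_trans (graphProb_mono hP fun G hG => ?_)
    (graphProb_chernoff_const hP hsym (fun i j => if s i j then η / 2 else 0)
    (fun i j => by simp [hs i j]) (η ^ 2 * d * n / 8))
  push Not at hG
  have h1 : ∑ i, ∑ j, offP P i j * (Real.exp (if s i j then η / 2 else 0) - 1) ≤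
      ∑ i, ∑ j, ((η / 2) * (if s i j then offP P i j else 0) + (η / 2) ^ 2 * offP P i j) := by
    refine Finset.sum_le_sum fun i _ => Finset.sum_le_sum fun j _ => ?_
    have h0 := offP_nonneg hP i j
    split_ifs
    · have h2 := exp_sub_one_le_add_sq (x := η / 2) (by rw [abs_of_pos] <;> linarith)
      nlinarith
    · simp; positivity
  have h2 : ∑ i, ∑ j, offP P i j ≤ n * d := by
    calc _ ≤ ∑ i : Fin n, d := Finset.sum_le_sum fun i _ => sum_offP_le hn hd i
      _ = n * d := by simp
  have h3 : ∑ i, ∑ j, adjM G i j * (if s i j then η / 2 else 0) =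
      (η / 2) * ∑ i, ∑ j, (if s i j then adjM G i j else 0) := by
    simp_rw [Finset.mul_sum]
    refine Finset.sum_congr rfl fun i _ => Finset.sum_congr rfl fun j _ => ?_
    split_ifs <;> ring
  simp_rw [Finset.sum_add_distrib, ← Finset.mul_sum] at h1
  rw [h3]
  have h4 : (η / 2) ^ 2 * ∑ i, ∑ j, offP P i j ≤ (η / 2) ^ 2 * (n * d) := by gcongr
  nlinarith

/-- Quadratic form of a matrix. -/
def quadForm (M : Matrix (Fin n) (Fin n) ℝ) (x : Fin n → ℝ) : ℝ := ∑ i, ∑ j, M i j * (x i * x j)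

lemma graphProb_quadForm (hP : IsProbMatrix P) (hsym : ∀ i j, P i j = P j i)
    (hn : 0 < n) (hd0 : 0 ≤ d) (hd : ∀ i j, offP P i j ≤ d / n) {ε b : ℝ} (hb : 0 < b)
    (hbε : b ≤ ε / 32) (y : Fin n → ℝ) (hy : ∀ i j, b * n * |y i * y j| ≤ 1)
    (hy2 : ∑ i, y i ^ 2 ≤ 4) :
    graphProb P (fun G => ¬ quadForm (adjM G) y ≤ quadForm (offP P) y + ε * d) ≤
      Real.exp (-(b * ε * n * d / 4)) := by
  have hn' : (0 : ℝ) < n := by exact_mod_cast hn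
  refine le_trans (graphProb_mono hP fun G hG => ?_)
    (graphProb_chernoff_const hP hsym (fun i j => b * n * (y i * y j))
    (fun i j => by ring) (b * ε * n * d / 4))
  push Not at hG
  have h1 : ∑ i, ∑ j, offP P i j * (Real.exp (b * n * (y i * y j)) - 1) ≤
      ∑ i, ∑ j, ((b * n) * (offP P i j * (y i * y j)) +
        (b * n) ^ 2 * (d / n) * (y i ^ 2 * y j ^ 2)) := by
    refine Finset.sum_le_sum fun i _ => Finset.sum_le_sum fun j _ => ?_
    have h0 := offP_nonneg hP i j
    have h2 := exp_sub_one_le_add_sq (x := b * n * (y i * y j))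
      (by rw [abs_mul, abs_of_pos (by positivity)]; exact hy i j)
    have h3 := mul_le_mul_of_nonneg_left h2 h0
    have h4 := mul_le_mul_of_nonneg_right (hd i j) (sq_nonneg (b * n * (y i * y j)))
    nlinarith
  have h2 : ∑ i, ∑ j, (y i ^ 2 * y j ^ 2) ≤ 16 := by
    rw [← Finset.sum_mul_sum]
    have : 0 ≤ ∑ i, y i ^ 2 := Finset.sum_nonneg fun i _ => sq_nonneg _
    nlinarith
  have h3 : ∑ i, ∑ j, adjM G i j * (b * n * (y i * y j)) = b * n * quadForm (adjM G) y := by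
    simp_rw [quadForm, Finset.mul_sum]
    refine Finset.sum_congr rfl fun i _ => Finset.sum_congr rfl fun j _ => ?_
    ring
  simp_rw [Finset.sum_add_distrib, ← Finset.mul_sum] at h1
  rw [h3]
  rw [← quadForm] at h1
  have h4 : (b * n) ^ 2 * (d / n) * ∑ i, ∑ j, (y i ^ 2 * y j ^ 2) ≤
      (b * n) ^ 2 * (d / n) * 16 := by gcongr
  simp_rw [← Finset.mul_sum] at h4
  have h5 : (b * n) ^ 2 * (d / n) * 16 = b * (16 * b) * n * d := by field_simp
  have h6 : b * (16 * b) * n * d ≤ b * (ε / 2) * n * d := by gcongr; linarith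
  have h7 : b * n * (quadForm (offP P) y + ε * d) < b * n * quadForm (adjM G) y := by gcongr
  nlinarith

/-- Vectors with entries in the grid `(h / √n) ℤ`. -/
def gridVec (h : ℝ) (k : Fin n → ℤ) : Fin n → ℝ := fun i => h * k i / Real.sqrt n

/-- The adjacency form is bounded by its expectation on flat grid vectors. -/
def FlatBound (P : Fin n → Fin n → ℝ) (d h : ℝ) (M : ℕ) (ε : ℝ) (G : SimpleGraph (Fin n)) :
    Prop :=
  ∀ k : Fin n → ℤ, (∀ i, k i ∈ Finset.Icc (-(M : ℤ)) M) → ∑ i, gridVec h k i ^ 2 ≤ 4 →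
    quadForm (adjM G) (gridVec h k) ≤ quadForm (offP P) (gridVec h k) + ε * d

lemma graphProb_flatBound (hP : IsProbMatrix P) (hsym : ∀ i j, P i j = P j i)
    (hn : 0 < n) (hd0 : 0 ≤ d) (hd : ∀ i j, offP P i j ≤ d / n) {h ε b : ℝ} {M : ℕ} (hb : 0 < b)
    (hbε : b ≤ ε / 32) (hh : 0 < h) (hbM : b * (h * M) ^ 2 ≤ 1) :
    graphProb P (fun G => ¬ FlatBound P d h M ε G) ≤
      (2 * M + 1) ^ n * Real.exp (-(b * ε * n * d / 4)) := by
  have hn' : (0 : ℝ) < n := by exact_mod_cast hn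
  refine le_trans (graphProb_mono hP (B' := fun G => ∃ k ∈ (Fintype.piFinset fun _ : Fin n =>
    Finset.Icc (-(M : ℤ)) M), ¬ (∑ i, gridVec h k i ^ 2 ≤ 4 →
    quadForm (adjM G) (gridVec h k) ≤ quadForm (offP P) (gridVec h k) + ε * d))
    fun G hG => ?_) ?_
  · unfold FlatBound at hG
    push Not at hG ⊢
    obtain ⟨k, h1, h2⟩ := hG
    exact ⟨k, by simpa using h1, h2⟩
  refine le_trans (graphProb_exists_le hP _ _) ?_
  have hcard : ((Fintype.piFinset fun _ : Fin n => Finset.Icc (-(M : ℤ)) M).card : ℝ) =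
      (2 * M + 1) ^ n := by
    rw [Fintype.card_piFinset]
    simp only [Int.card_Icc, Finset.prod_const, Finset.card_univ, Fintype.card_fin]
    have : ((M : ℤ) + 1 - -(M : ℤ)).toNat = 2 * M + 1 := by omega
    rw [this]; push_cast; ring
  rw [← hcard, ← nsmul_eq_mul]
  refine Finset.sum_le_card_nsmul _ _ _ fun k hk => ?_
  by_cases h4 : ∑ i, gridVec h k i ^ 2 ≤ 4
  · simp only [h4, true_imp_iff]
    refine graphProb_quadForm hP hsym hn hd0 hd hb hbε _ (fun i j => ?_) h4
    have hk' : ∀ i, |(k i : ℝ)| ≤ M := by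
      intro i
      have := Fintype.mem_piFinset.1 hk i
      rw [Finset.mem_Icc] at this
      rw [abs_le]
      exact_mod_cast this
    have : |gridVec h k i * gridVec h k j| = h ^ 2 * (|(k i : ℝ)| * |(k j : ℝ)|) / n := by
      simp only [gridVec]
      rw [div_mul_div_comm, Real.mul_self_sqrt hn'.le, abs_div, abs_of_pos hn', abs_mul,
        abs_mul, abs_mul, abs_of_pos hh]
      ring
    rw [this]
    calc b * n * (h ^ 2 * (|(k i : ℝ)| * |(k j : ℝ)|) / n)
        = b * (h ^ 2 * (|(k i : ℝ)| * |(k j : ℝ)|)) := by field_simp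
      _ ≤ b * (h ^ 2 * (M * M)) := by
          have h1 := hk' i
          have h2 := hk' j
          gcongr
      _ ≤ 1 := by nlinarith
  · simp only [h4, false_imp_iff, not_true_eq_false]
    simp only [graphProb, if_false, Finset.sum_const_zero]
    positivity

/-- Small vertex sets span few edges. -/
def SparseSmallSets (d K ε : ℝ) (G : SimpleGraph (Fin n)) : Prop :=
  ∀ S : Finset (Fin n), K * S.card ≤ n → ∑ i ∈ S, ∑ j ∈ S, adjM G i j ≤ ε * d * S.card

lemma graphProb_sparseSmallSets (hP : IsProbMatrix P) (hsym : ∀ i j, P i j = P j i)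
    (hn : 0 < n) (hd0 : 0 ≤ d) (hd : ∀ i j, offP P i j ≤ d / n) {K ε : ℝ} (hε : 0 < ε)
    (hK : Real.exp (9 / ε) ≤ K) :
    graphProb P (fun G => ¬ SparseSmallSets d K ε G) ≤
      Real.exp (n * Real.exp (-(4 * d))) - 1 := by
  have hn' : (0 : ℝ) < n := by exact_mod_cast hn
  refine le_trans (graphProb_mono hP (B' := fun G => ∃ S ∈ (Finset.univ : Finset
    (Finset (Fin n))).erase ∅, ¬ (K * S.card ≤ n →
      ∑ i ∈ S, ∑ j ∈ S, adjM G i j ≤ ε * d * S.card)) fun G hG => ?_) ?_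
  · unfold SparseSmallSets at hG
    push Not at hG ⊢
    obtain ⟨S, h1, h2⟩ := hG
    refine ⟨S, ?_, h1, h2⟩
    rw [Finset.mem_erase]
    refine ⟨?_, Finset.mem_univ _⟩
    rintro rfl
    simp at h2
  refine le_trans (graphProb_exists_le hP _ _) ?_
  have hS : ∀ S : Finset (Fin n), graphProb P (fun G => ¬ (K * S.card ≤ n →
      ∑ i ∈ S, ∑ j ∈ S, adjM G i j ≤ ε * d * S.card)) ≤ ∏ i ∈ S, Real.exp (-(4 * d)) := by
    intro S
    have hprod : ∏ i ∈ S, Real.exp (-(4 * d)) = Real.exp (-(4 * d * S.card)) := by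
      rw [← Real.exp_sum]; simp; ring
    rw [hprod]
    by_cases h4 : K * S.card ≤ n
    · simp only [h4, true_imp_iff]
      refine le_trans (graphProb_mono hP fun G hG => ?_)
        (graphProb_chernoff_const hP hsym (fun i j => if i ∈ S ∧ j ∈ S then 9 / ε else 0)
        (fun i j => by simp [and_comm]) _)
      push Not at hG
      have hdbl : ∀ F : Fin n → Fin n → ℝ, ∑ i, ∑ j, (if i ∈ S ∧ j ∈ S then F i j else 0) =
          ∑ i ∈ S, ∑ j ∈ S, F i j := by
        intro F
        simp only [ite_and, ← Finset.sum_filter, Finset.filter_mem_eq_inter]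
        rw [← Finset.sum_subset (Finset.subset_univ S)]
        · refine Finset.sum_congr rfl fun i hi => ?_
          simp [hi]
        · intro i _ hi
          simp [hi]
      have h1 : ∑ i, ∑ j, offP P i j * (Real.exp (if i ∈ S ∧ j ∈ S then 9 / ε else 0) - 1) ≤
          ∑ i, ∑ j, (if i ∈ S ∧ j ∈ S then d / n * K else 0) := by
        refine Finset.sum_le_sum fun i _ => Finset.sum_le_sum fun j _ => ?_
        have h0 := offP_nonneg hP i j
        split_ifs
        · exact mul_le_mul (hd i j) (by linarith)
            (by have := Real.one_le_exp (x := 9 / ε) (by positivity); linarith) (by positivity)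
        · simp
      rw [hdbl] at h1
      have h2 : ∑ i, ∑ j, adjM G i j * (if i ∈ S ∧ j ∈ S then 9 / ε else 0) =
          9 / ε * ∑ i ∈ S, ∑ j ∈ S, adjM G i j := by
        rw [← hdbl fun i j => adjM G i j]
        simp_rw [Finset.mul_sum]
        refine Finset.sum_congr rfl fun i _ => Finset.sum_congr rfl fun j _ => ?_
        split_ifs <;> ring
      rw [h2]
      have h3 : ∑ i ∈ S, ∑ j ∈ S, d / n * K = d * S.card * (K * S.card / n) := by
        simp; ring
      have h5 : d * S.card * (K * S.card / n) ≤ d * S.card * 1 := by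
        gcongr
        rw [div_le_one hn']; exact h4
      have h6 : 9 / ε * (ε * d * S.card) ≤ 9 / ε * ∑ i ∈ S, ∑ j ∈ S, adjM G i j := by gcongr
      have h7 : 9 / ε * (ε * d * S.card) = 9 * d * S.card := by field_simp
      linarith
    · simp only [h4, false_imp_iff, not_true_eq_false]
      simp only [graphProb, if_false, Finset.sum_const_zero]
      positivity
  refine le_trans (Finset.sum_le_sum fun S _ => hS S) ?_
  have h1 := Finset.prod_one_add (f := fun _ : Fin n => Real.exp (-(4 * d)))
    (s := Finset.univ)
  rw [Finset.powerset_univ, ← Finset.sum_erase_add _ _ (Finset.mem_univ ∅)] at h1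
  simp only [Finset.prod_empty] at h1
  have h2 : ∏ i : Fin n, (1 + Real.exp (-(4 * d))) ≤ Real.exp (n * Real.exp (-(4 * d))) := by
    calc _ ≤ ∏ i : Fin n, Real.exp (Real.exp (-(4 * d))) := by
          refine Finset.prod_le_prod (fun i _ => by positivity) fun i _ => ?_
          rw [add_comm]
          exact Real.add_one_le_exp _
      _ = _ := by rw [← Real.exp_sum]; simp
  linarith

/-- Weighted neighbourhood sums of a unit vector depending only on the edges not at `v`. -/
lemma graphProb_row_abs (hP : IsProbMatrix P) (hsym : ∀ i j, P i j = P j i)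
    (hn : 0 < n) (hd0 : 0 ≤ d) (hd : ∀ i j, offP P i j ≤ d / n)
    (φ : SimpleGraph (Fin n) → Fin n → Fin n → ℝ) (hφ : ∀ H v, ∑ w, φ H v w ^ 2 = 1) {ℓ : ℝ}
    (hℓ : 0 ≤ ℓ) :
    graphProb P (fun G => ¬ ∀ v, ∀ m, (∀ w, |φ (isolate G v) v w| ≤ m) →
      ∑ w, adjM G v w * |φ (isolate G v) v w| ≤ 2 * d / Real.sqrt n + ℓ * m) ≤
      n * Real.exp (-ℓ) := by
  have hn' : (0 : ℝ) < n := by exact_mod_cast hn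
  have : Nonempty (Fin n) := ⟨⟨0, hn⟩⟩
  refine graphProb_not_forall_le hP _ fun v => ?_
  refine le_trans (graphProb_mono hP fun G hG => ?_)
    (graphProb_chernoff_row hP hsym v (fun H w => |φ H v w| / linf (φ H v)) ℓ)
  push Not at hG
  obtain ⟨m, hm, hG⟩ := hG
  set f := φ (isolate G v) v with hf
  have hlm : linf f ≤ m := ciSup_le hm
  have hfl : ∀ w, |f w| ≤ linf f := fun w =>
    le_ciSup (f := fun w => |f w|) (Set.finite_range _).bddAbove w
  have hl0 : 0 < linf f := by
    by_contra hcon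
    have : ∀ w, f w = 0 := fun w => abs_eq_zero.1
      (le_antisymm ((hfl w).trans (not_lt.1 hcon)) (abs_nonneg _))
    have h1 := hφ (isolate G v) v
    rw [← hf] at h1
    simp [this] at h1
  have hl1 : ∑ w, |f w| ≤ Real.sqrt n := by
    apply Real.le_sqrt_of_sq_le
    have := sq_sum_le_card_mul_sum_sq (s := Finset.univ) (f := fun w => |f w|)
    simp only [sq_abs, Finset.card_univ, Fintype.card_fin] at this
    rw [hφ (isolate G v) v] at this
    linarith
  have h1 : ∑ w, offP P v w * (Real.exp (|f w| / linf f) - 1) ≤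
      ∑ w, d / n * (2 * (|f w| / linf f)) := by
    refine Finset.sum_le_sum fun w _ => ?_
    have h0 : 0 ≤ |f w| / linf f := by positivity
    have h2 : |f w| / linf f ≤ 1 := (div_le_one hl0).2 (hfl w)
    have h3 := exp_sub_one_le_add_sq (x := |f w| / linf f) (by rwa [abs_of_nonneg h0])
    refine mul_le_mul (hd v w) (by nlinarith) ?_ (by positivity)
    have := Real.one_le_exp h0
    linarith
  have h2 : ∑ w, d / n * (2 * (|f w| / linf f)) = d / n * 2 / linf f * ∑ w, |f w| := by
    rw [Finset.mul_sum]
    exact Finset.sum_congr rfl fun w _ => by ring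
  have h3 : d / n * 2 / linf f * ∑ w, |f w| ≤ d / n * 2 / linf f * Real.sqrt n := by gcongr
  have h4 : d / n * 2 / linf f * Real.sqrt n = 2 * d / Real.sqrt n / linf f := by
    have : (n : ℝ) = Real.sqrt n * Real.sqrt n := (Real.mul_self_sqrt hn'.le).symm
    have hs : 0 < Real.sqrt n := Real.sqrt_pos.2 hn'
    nth_rewrite 1 [this]
    field_simp
  have h5 : ∑ w, adjM G v w * (|f w| / linf f) = (∑ w, adjM G v w * |f w|) / linf f := by
    rw [Finset.sum_div]
    exact Finset.sum_congr rfl fun w _ => by ring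
  rw [h5, le_div_iff₀ hl0]
  have h6 : ℓ * linf f ≤ ℓ * m := by gcongr
  calc _ ≤ (ℓ + 2 * d / Real.sqrt n / linf f) * linf f := by gcongr; linarith
    _ = ℓ * linf f + 2 * d / Real.sqrt n := by field_simp
    _ ≤ _ := by linarith

end events

/-- Layer-cake bound: if every subset of `S` has `M`-density at most `c`, then the `min`-form of
`M` on `S` is at most `c` times the total weight. -/
lemma sum_mul_min_le {ι : Type*} (M : ι → ι → ℝ) (c : ℝ) (S : Finset ι) :
    (∀ T ⊆ S, ∑ i ∈ T, ∑ j ∈ T, M i j ≤ c * T.card) → ∀ a : ι → ℝ, (∀ i ∈ S, 0 ≤ a i) →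
      ∑ i ∈ S, ∑ j ∈ S, M i j * min (a i) (a j) ≤ c * ∑ i ∈ S, a i := by
  induction S using Finset.strongInduction with
  | H S ih =>
    intro hS a ha
    rcases S.eq_empty_or_nonempty with rfl | hne
    · simp
    obtain ⟨i0, hi0, hmin⟩ := S.exists_min_image a hne
    have h1 := ih (S.erase i0) (Finset.erase_ssubset hi0)
      (fun T hT => hS T (hT.trans (Finset.erase_subset _ _))) (fun i => a i - a i0)
      (fun i hi => sub_nonneg.2 (hmin i (Finset.mem_of_mem_erase hi)))
    have h2 : ∑ i ∈ S, ∑ j ∈ S, M i j * min (a i - a i0) (a j - a i0) =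
        ∑ i ∈ S.erase i0, ∑ j ∈ S.erase i0, M i j * min (a i - a i0) (a j - a i0) := by
      rw [← Finset.sum_erase_add _ _ hi0]
      have h3 : ∑ j ∈ S, M i0 j * min (a i0 - a i0) (a j - a i0) = 0 :=
        Finset.sum_eq_zero fun j hj => by
          rw [sub_self, min_eq_left (sub_nonneg.2 (hmin j hj)), mul_zero]
      rw [h3, add_zero]
      refine Finset.sum_congr rfl fun i hi => ?_
      rw [← Finset.sum_erase_add _ _ hi0, sub_self,
        min_eq_right (sub_nonneg.2 (hmin i (Finset.mem_of_mem_erase hi))), mul_zero, add_zero]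
    have h3 : ∑ i ∈ S, (a i - a i0) = ∑ i ∈ S.erase i0, (a i - a i0) := by
      rw [← Finset.sum_erase_add _ _ hi0, sub_self, add_zero]
    have h4 : ∑ i ∈ S, ∑ j ∈ S, M i j * min (a i) (a j) =
        ∑ i ∈ S, ∑ j ∈ S, M i j * min (a i - a i0) (a j - a i0) +
          a i0 * ∑ i ∈ S, ∑ j ∈ S, M i j := by
      rw [Finset.mul_sum, ← Finset.sum_add_distrib]
      refine Finset.sum_congr rfl fun i _ => ?_
      rw [Finset.mul_sum, ← Finset.sum_add_distrib]
      refine Finset.sum_congr rfl fun j _ => ?_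
      rw [min_sub_sub_right]
      ring
    rw [← h2, ← h3] at h1
    have h5 := mul_le_mul_of_nonneg_left (hS S le_rfl) (ha i0 hi0)
    rw [h4]
    simp only [Finset.sum_sub_distrib, Finset.sum_const, nsmul_eq_mul] at h1
    linarith

/-- A symmetric nonnegative matrix with row sums at most `D`. -/
lemma sum_sum_mul_add_le {M : Fin n → Fin n → ℝ} {D : ℝ} (hs : ∀ i j, M i j = M j i)
    (hD : ∀ i, ∑ j, M i j ≤ D) {f g : Fin n → ℝ} (hf : ∀ i, 0 ≤ f i) (hg : ∀ i, 0 ≤ g i) :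
    ∑ i, ∑ j, M i j * (f i + g j) ≤ D * (∑ i, f i + ∑ i, g i) := by
  have h1 : ∀ f : Fin n → ℝ, (∀ i, 0 ≤ f i) → ∑ i, ∑ j, M i j * f i ≤ D * ∑ i, f i := by
    intro f hf
    rw [Finset.mul_sum]
    refine Finset.sum_le_sum fun i _ => ?_
    rw [← Finset.sum_mul]
    exact mul_le_mul_of_nonneg_right (hD i) (hf i)
  have h2 : ∑ i, ∑ j, M i j * g j = ∑ i, ∑ j, M i j * g i := by
    rw [Finset.sum_comm]
    exact Finset.sum_congr rfl fun i _ => Finset.sum_congr rfl fun j _ => by rw [hs]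
  simp_rw [mul_add, Finset.sum_add_distrib]
  rw [h2]
  exact add_le_add (h1 f hf) (h1 g hg)

/-- Comparison of quadratic forms through an entrywise bound. -/
lemma quadForm_sub_le {M : Matrix (Fin n) (Fin n) ℝ} (h0 : ∀ i j, 0 ≤ M i j) {x y : Fin n → ℝ}
    {F : Fin n → Fin n → ℝ} (hF : ∀ i j, |x i * x j - y i * y j| ≤ F i j) :
    |quadForm M x - quadForm M y| ≤ ∑ i, ∑ j, M i j * F i j := by
  unfold quadForm
  rw [← Finset.sum_sub_distrib]
  refine (Finset.abs_sum_le_sum_abs _ _).trans (Finset.sum_le_sum fun i _ => ?_)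
  rw [← Finset.sum_sub_distrib]
  refine (Finset.abs_sum_le_sum_abs _ _).trans (Finset.sum_le_sum fun j _ => ?_)
  rw [← mul_sub, abs_mul, abs_of_nonneg (h0 i j)]
  exact mul_le_mul_of_nonneg_left (hF i j) (h0 i j)

/-- Rounding to a grid of mesh `h / √n` changes a quadratic form little. -/
lemma abs_quadForm_sub_round_le {M : Matrix (Fin n) (Fin n) ℝ} (h0 : ∀ i j, 0 ≤ M i j) {D : ℝ}
    (hs : ∀ i j, M i j = M j i) (hD : ∀ i, ∑ j, M i j ≤ D) (hD0 : 0 ≤ D) {x y : Fin n → ℝ} {h : ℝ}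
    (hh : 0 < h) (hx : ∑ i, x i ^ 2 ≤ 1) (hy : ∑ i, y i ^ 2 ≤ 4)
    (hxy : ∑ i, (x i - y i) ^ 2 ≤ h ^ 2) :
    |quadForm M x - quadForm M y| ≤ 4 * D * h := by
  have hF : ∀ i j, |x i * x j - y i * y j| ≤
      ((x i - y i) ^ 2 / (2 * h) + h / 2 * y i ^ 2) +
        ((x j - y j) ^ 2 / (2 * h) + h / 2 * x j ^ 2) := by
    intro i j
    have e : ∀ a b : ℝ, |a * b| ≤ a ^ 2 / (2 * h) + h / 2 * b ^ 2 := by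
      intro a b
      have h1 : a ^ 2 / (2 * h) + h / 2 * b ^ 2 - |a| * |b| = (|a| - h * |b|) ^ 2 / (2 * h) := by
        field_simp
        rw [← sq_abs a, ← sq_abs b]
        ring
      have h2 : 0 ≤ (|a| - h * |b|) ^ 2 / (2 * h) := by positivity
      rw [abs_mul]
      linarith
    have e1 := e (x i - y i) (x j)
    have e2 := e (x j - y j) (y i)
    have e3 : x i * x j - y i * y j = (x i - y i) * x j + (x j - y j) * y i := by ring
    rw [e3]
    refine (abs_add_le _ _).trans ?_
    linarith
  refine (quadForm_sub_le h0 hF).trans ((sum_sum_mul_add_le hs hD (fun i => by positivity)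
    (fun i => by positivity)).trans ?_)
  simp_rw [Finset.sum_add_distrib, ← Finset.mul_sum, ← Finset.sum_div]
  have h1 : (∑ i, (x i - y i) ^ 2) / (2 * h) ≤ h / 2 := by
    rw [div_le_iff₀ (by positivity)]; nlinarith
  calc _ ≤ D * (h / 2 + h / 2 * 4 + (h / 2 + h / 2 * 1)) := by gcongr
    _ ≤ 4 * D * h := by nlinarith [mul_nonneg hD0 hh.le]

/-- Truncation to entries of modulus at most `T`. -/
def trunc (T a : ℝ) : ℝ := if |a| ≤ T then a else 0

lemma abs_mul_sub_trunc_mul_le {T ε a b : ℝ} (hT : 0 < T) (hε : 0 < ε) (hε1 : ε ≤ 1) :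
    |a * b - trunc T a * trunc T b| ≤
      (ε * a ^ 2 + ε * b ^ 2) + if ε * T ≤ |a| ∧ ε * T ≤ |b| then |a * b| else 0 := by
  have hεT : ε * T ≤ T := by nlinarith
  by_cases h : |a| ≤ T ∧ |b| ≤ T
  · simp only [trunc, h, if_true, sub_self, abs_zero]
    positivity
  have hz : trunc T a * trunc T b = 0 := by
    unfold trunc
    by_cases ha : |a| ≤ T
    · rw [if_neg (fun hb => h ⟨ha, hb⟩), mul_zero]
    · rw [if_neg ha, zero_mul]
  rw [hz, sub_zero]
  split_ifs with h2
  · have : 0 ≤ ε * a ^ 2 + ε * b ^ 2 := by positivity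
    linarith
  · rw [add_zero, abs_mul, ← sq_abs a, ← sq_abs b]
    have ha := abs_nonneg a
    have hb := abs_nonneg b
    have key : ∀ s t : ℝ, 0 ≤ s → 0 ≤ t → T < s → t < ε * T → s * t ≤ ε * s ^ 2 + ε * t ^ 2 := by
      intro s t hs ht h1 h2
      have : t ≤ ε * s := by nlinarith
      nlinarith [sq_nonneg t]
    rw [not_and_or, not_le, not_le] at h
    rcases h with h | h
    · refine key _ _ ha hb h ?_
      by_contra hcon
      exact h2 ⟨by linarith, not_lt.1 hcon⟩
    · have := key _ _ hb ha h (by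
        by_contra hcon
        exact h2 ⟨not_lt.1 hcon, by linarith⟩)
      linarith

lemma sum_sum_ite_mem {F : Fin n → Fin n → ℝ} (S : Finset (Fin n)) :
    ∑ i, ∑ j, (if i ∈ S ∧ j ∈ S then F i j else 0) = ∑ i ∈ S, ∑ j ∈ S, F i j := by
  simp only [ite_and, ← Finset.sum_filter, Finset.filter_mem_eq_inter]
  rw [← Finset.sum_subset (Finset.subset_univ S)]
  · refine Finset.sum_congr rfl fun i hi => ?_
    simp [hi]
  · intro i _ hi
    simp [hi]

/-- One-sided spectral comparison of the adjacency form with its expectation. -/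
lemma quadForm_adjM_le {P : Fin n → Fin n → ℝ} {d : ℝ} (hP : IsProbMatrix P)
    (hsym : ∀ i j, P i j = P j i) (hn : 0 < n) (hd0 : 0 ≤ d) (hd : ∀ i j, offP P i j ≤ d / n)
    {G : SimpleGraph (Fin n)} {h ε ε₁ s K R : ℝ} {M : ℕ}
    (hdeg : ∀ v, ∑ w, adjM G v w ≤ 3 * d) (hh : 0 < h) (hh1 : h ≤ 1) (hε₁ : 0 < ε₁)
    (hε₁1 : ε₁ ≤ 1) (hs : 0 < s) (hK : 0 < K) (hR : 0 < R) (hKR : K ≤ ε₁ ^ 2 * R ^ 2)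
    (hM : R / h + 1 ≤ M)
    (hflat : FlatBound P d h M ε G) (hsparse : SparseSmallSets d K (s ^ 2) G)
    {x : Fin n → ℝ} (hx : ∑ i, x i ^ 2 = 1) :
    quadForm (adjM G) x ≤
      quadForm (offP P) x + (ε + 16 * h + 8 * ε₁ + 7 / 2 * s + 1 / K) * d := by
  have hn' : (0 : ℝ) < n := by exact_mod_cast hn
  have hsn : 0 < Real.sqrt n := Real.sqrt_pos.2 hn'
  have hsq : Real.sqrt n ^ 2 = n := Real.sq_sqrt hn'.le
  set T := R / Real.sqrt n with hT
  have hT0 : 0 < T := by positivity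
  set y : Fin n → ℝ := fun i => trunc T (x i) with hy
  have hyT : ∀ i, |y i| ≤ T := by
    intro i
    simp only [hy, trunc]
    split_ifs with h1
    · exact h1
    · simpa using hT0.le
  have hy1 : ∑ i, y i ^ 2 ≤ 1 := by
    rw [← hx]
    refine Finset.sum_le_sum fun i _ => ?_
    simp only [hy, trunc]
    split_ifs
    · exact le_rfl
    · simpa using sq_nonneg (x i)
  -- rounding the truncated vector
  set k : Fin n → ℤ := fun i => ⌊y i * Real.sqrt n / h⌋ with hk
  set z := gridVec h k with hz
  have hyz : ∀ i, |y i - z i| ≤ h / Real.sqrt n := by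
    intro i
    have h1 := Int.floor_le (y i * Real.sqrt n / h)
    have h2 := Int.lt_floor_add_one (y i * Real.sqrt n / h)
    have h3 : y i - z i = (y i * Real.sqrt n / h - k i) * (h / Real.sqrt n) := by
      simp only [hz, gridVec]
      field_simp
    rw [h3, abs_mul, abs_of_pos (by positivity : 0 < h / Real.sqrt n)]
    refine mul_le_of_le_one_left (by positivity) ?_
    rw [abs_le]
    constructor <;> simp only [hk] <;> linarith
  have hyz2 : ∑ i, (y i - z i) ^ 2 ≤ h ^ 2 := by
    calc ∑ i, (y i - z i) ^ 2 ≤ ∑ i : Fin n, (h / Real.sqrt n) ^ 2 :=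
          Finset.sum_le_sum fun i _ => by
            rw [← sq_abs]
            exact pow_le_pow_left₀ (abs_nonneg _) (hyz i) 2
      _ = h ^ 2 := by simp; rw [div_pow, hsq]; field_simp
  have hz4 : ∑ i, z i ^ 2 ≤ 4 := by
    calc ∑ i, z i ^ 2 ≤ ∑ i, (2 * y i ^ 2 + 2 * (y i - z i) ^ 2) :=
          Finset.sum_le_sum fun i _ => by nlinarith [sq_nonneg (2 * y i - z i)]
      _ ≤ 4 := by
          rw [Finset.sum_add_distrib, ← Finset.mul_sum, ← Finset.mul_sum]
          nlinarith
  have hkM : ∀ i, k i ∈ Finset.Icc (-(M : ℤ)) M := by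
    intro i
    have h1 := Int.floor_le (y i * Real.sqrt n / h)
    have h2 := Int.lt_floor_add_one (y i * Real.sqrt n / h)
    have h3 : |y i * Real.sqrt n / h| ≤ R / h := by
      rw [abs_div, abs_mul, abs_of_pos hh, abs_of_pos hsn]
      gcongr
      calc |y i| * Real.sqrt n ≤ T * Real.sqrt n := by gcongr; exact hyT i
        _ = R := by rw [hT]; field_simp
    rw [abs_le] at h3
    rw [Finset.mem_Icc]
    constructor
    · have : (-(M : ℝ)) ≤ (k i : ℝ) := by simp only [hk]; linarith
      exact_mod_cast this
    · have : (k i : ℝ) ≤ (M : ℝ) := by simp only [hk]; linarith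
      exact_mod_cast this
  have hPrs : ∀ v, ∑ w, offP P v w ≤ d := sum_offP_le hn hd
  have e1 := abs_le.1 (abs_quadForm_sub_round_le (adjM_nonneg G) (adjM_comm G) hdeg (by linarith)
    hh hy1 hz4 hyz2)
  have e2 := abs_le.1 (abs_quadForm_sub_round_le (offP_nonneg hP) (offP_comm hsym) hPrs hd0
    hh hy1 hz4 hyz2)
  have e3 := hflat k hkM hz4
  rw [← hz] at e3
  -- large entries
  set U : Finset (Fin n) := Finset.univ.filter fun i => ε₁ * T ≤ |x i| with hU
  have hUcard : K * U.card ≤ n := by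
    have h1 : ∑ i ∈ U, (ε₁ * T) ^ 2 ≤ ∑ i, x i ^ 2 := by
      refine (Finset.sum_le_sum fun i hi => ?_).trans
        (Finset.sum_le_sum_of_subset_of_nonneg (Finset.subset_univ U) fun i _ _ => sq_nonneg _)
      rw [← sq_abs (x i)]
      exact pow_le_pow_left₀ (by positivity) (Finset.mem_filter.1 hi).2 2
    rw [hx, Finset.sum_const, nsmul_eq_mul, hT] at h1
    have h2 : (ε₁ * (R / Real.sqrt n)) ^ 2 = ε₁ ^ 2 * R ^ 2 / n := by
      rw [mul_pow, div_pow, hsq]; ring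
    rw [h2, ← mul_div_assoc, div_le_one hn'] at h1
    calc K * U.card ≤ ε₁ ^ 2 * R ^ 2 * U.card := by gcongr
      _ ≤ n := by linarith
  have hFxy : ∀ i j, |x i * x j - y i * y j| ≤ (ε₁ * x i ^ 2 + ε₁ * x j ^ 2) +
      if i ∈ U ∧ j ∈ U then |x i * x j| else 0 := by
    intro i j
    have := abs_mul_sub_trunc_mul_le (a := x i) (b := x j) hT0 hε₁ hε₁1
    simpa [hU] using this
  have hsplit : ∀ {A : Matrix (Fin n) (Fin n) ℝ} {D : ℝ}, (∀ i j, 0 ≤ A i j) →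
      (∀ i j, A i j = A j i) → (∀ i, ∑ j, A i j ≤ D) →
      |quadForm A x - quadForm A y| ≤ 2 * ε₁ * D + ∑ i ∈ U, ∑ j ∈ U, A i j * |x i * x j| := by
    intro A D hA0 hAs hAD
    refine (quadForm_sub_le hA0 hFxy).trans ?_
    simp_rw [mul_add (A _ _) (_ + _), Finset.sum_add_distrib, mul_ite, mul_zero]
    rw [sum_sum_ite_mem]
    refine add_le_add_left ((sum_sum_mul_add_le hAs hAD (fun i => by positivity)
      (fun i => by positivity)).trans ?_) _
    rw [← Finset.mul_sum, hx]
    linarith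
  have e4 := abs_le.1 (hsplit (adjM_nonneg G) (adjM_comm G) hdeg)
  have e5 := abs_le.1 (hsplit (offP_nonneg hP) (offP_comm hsym) hPrs)
  have e6 : ∑ i ∈ U, ∑ j ∈ U, offP P i j * |x i * x j| ≤ 1 / K * d := by
    calc _ ≤ ∑ i ∈ U, ∑ j ∈ U, d / n * ((x i ^ 2 + x j ^ 2) / 2) := by
          refine Finset.sum_le_sum fun i _ => Finset.sum_le_sum fun j _ => ?_
          refine mul_le_mul (hd i j) ?_ (abs_nonneg _) (by positivity)
          rw [abs_mul, ← sq_abs (x i), ← sq_abs (x j)]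
          nlinarith [sq_nonneg (|x i| - |x j|)]
      _ = d / n * (U.card * ∑ i ∈ U, x i ^ 2) := by
          simp_rw [← Finset.mul_sum, ← Finset.sum_div, Finset.sum_add_distrib, Finset.sum_const,
            nsmul_eq_mul, ← Finset.mul_sum]
          ring
      _ ≤ d / n * (n / K * 1) := by
          have h1 : ∑ i ∈ U, x i ^ 2 ≤ 1 := by
            rw [← hx]
            exact Finset.sum_le_sum_of_subset_of_nonneg (Finset.subset_univ U)
              fun i _ _ => sq_nonneg _
          have h2 : (U.card : ℝ) ≤ n / K := by rw [le_div_iff₀ hK]; linarith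
          gcongr
      _ = 1 / K * d := by field_simp
  have e7 : ∑ i ∈ U, ∑ j ∈ U, adjM G i j * |x i * x j| ≤ 7 / 2 * s * d := by
    have h1 : ∀ i j, |x i * x j| ≤ min (x i ^ 2) (x j ^ 2) / (2 * s) +
        (s / 2 * x i ^ 2 + s / 2 * x j ^ 2) := by
      intro i j
      have key : ∀ a b : ℝ, 0 ≤ a → 0 ≤ b → a ≤ b → a * b ≤ a ^ 2 / (2 * s) +
          (s / 2 * a ^ 2 + s / 2 * b ^ 2) := by
        intro a b ha hb hab
        have h1 : a ^ 2 / (2 * s) + s / 2 * b ^ 2 - a * b = (a - s * b) ^ 2 / (2 * s) := by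
          field_simp
          ring
        have h2 : 0 ≤ (a - s * b) ^ 2 / (2 * s) := by positivity
        have h3 : 0 ≤ s / 2 * a ^ 2 := by positivity
        linarith
      rw [abs_mul, ← sq_abs (x i), ← sq_abs (x j)]
      rcases le_total |x i| |x j| with h2 | h2
      · rw [min_eq_left (pow_le_pow_left₀ (abs_nonneg _) h2 2)]
        exact key _ _ (abs_nonneg _) (abs_nonneg _) h2
      · rw [min_eq_right (pow_le_pow_left₀ (abs_nonneg _) h2 2)]
        have := key _ _ (abs_nonneg _) (abs_nonneg _) h2
        linarith
    have h2 := sum_mul_min_le (fun i j => adjM G i j) (s ^ 2 * d) U (fun T hTU => hsparse T ?_)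
      (fun i => x i ^ 2) (fun i _ => sq_nonneg _)
    swap
    · refine le_trans ?_ hUcard
      gcongr
    have h3 : ∑ i ∈ U, x i ^ 2 ≤ 1 := by
      rw [← hx]
      exact Finset.sum_le_sum_of_subset_of_nonneg (Finset.subset_univ U) fun i _ _ => sq_nonneg _
    have h4 : ∑ i ∈ U, ∑ j ∈ U, adjM G i j * (s / 2 * x i ^ 2 + s / 2 * x j ^ 2) ≤
        3 * d * s := by
      have h5 : ∑ i ∈ U, ∑ j ∈ U, adjM G i j * (s / 2 * x i ^ 2 + s / 2 * x j ^ 2) ≤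
          ∑ i, ∑ j, adjM G i j * (s / 2 * x i ^ 2 + s / 2 * x j ^ 2) := by
        have hnn : ∀ i j, 0 ≤ adjM G i j * (s / 2 * x i ^ 2 + s / 2 * x j ^ 2) := fun i j =>
          mul_nonneg (adjM_nonneg G i j) (by positivity)
        refine (Finset.sum_le_sum fun i _ => Finset.sum_le_sum_of_subset_of_nonneg
          (Finset.subset_univ U) fun j _ _ => hnn i j).trans ?_
        exact Finset.sum_le_sum_of_subset_of_nonneg (Finset.subset_univ U)
          fun i _ _ => Finset.sum_nonneg fun j _ => hnn i j
      refine h5.trans ((sum_sum_mul_add_le (adjM_comm G) hdeg (fun i => by positivity)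
        (fun i => by positivity)).trans ?_)
      rw [← Finset.mul_sum, hx]
      linarith
    calc _ ≤ ∑ i ∈ U, ∑ j ∈ U, (adjM G i j * min (x i ^ 2) (x j ^ 2) * (1 / (2 * s)) +
          adjM G i j * (s / 2 * x i ^ 2 + s / 2 * x j ^ 2)) := by
          refine Finset.sum_le_sum fun i _ => Finset.sum_le_sum fun j _ => ?_
          refine (mul_le_mul_of_nonneg_left (h1 i j) (adjM_nonneg G i j)).trans (le_of_eq ?_)
          ring
      _ ≤ s ^ 2 * d * (∑ i ∈ U, x i ^ 2) * (1 / (2 * s)) + 3 * d * s := by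
          simp_rw [Finset.sum_add_distrib, ← Finset.sum_mul]
          gcongr
      _ ≤ s ^ 2 * d * 1 * (1 / (2 * s)) + 3 * d * s := by gcongr
      _ = _ := by field_simp; ring
  linarith [e1.1, e1.2, e2.1, e2.2, e4.1, e4.2, e5.1, e5.2]

lemma mul_exp_neg_two_log_le {n : ℕ} (hn : 0 < n) {t : ℝ} (ht : 2 * Real.log n ≤ t) :
    n * Real.exp (-t) ≤ 1 / n := by
  have hn' : (0 : ℝ) < n := by exact_mod_cast hn
  have h1 : Real.exp (-t) ≤ Real.exp (-(2 * Real.log n)) := Real.exp_le_exp.2 (by linarith)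
  have h2 : Real.exp (-(2 * Real.log n)) = ((n : ℝ) ^ 2)⁻¹ := by
    rw [Real.exp_neg, two_mul, Real.exp_add, Real.exp_log hn', sq]
  rw [h2] at h1
  calc n * Real.exp (-t) ≤ n * ((n : ℝ) ^ 2)⁻¹ := by gcongr
    _ = 1 / n := by field_simp

/-- With high probability, on graphs of maximal degree at most `3 d` the adjacency form is at most
its expectation plus `τ d` on unit vectors, once `d` is at least `log n` and a constant
depending on `τ`. -/
lemma exists_graphProb_quadForm_adjM_le {τ : ℝ} (hτ : 0 < τ) (hτ1 : τ ≤ 1) :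
    ∃ D : ℝ, ∀ n : ℕ, 0 < n → ∀ (P : Fin n → Fin n → ℝ) (d : ℝ), IsProbMatrix P →
      (∀ i j, P i j = P j i) → (∀ i j, offP P i j ≤ d / n) → 0 ≤ d → D ≤ d → Real.log n ≤ d →
      graphProb P (fun G => ¬ ((∀ v, ∑ w, adjM G v w ≤ 3 * d) → ∀ x : Fin n → ℝ,
        ∑ i, x i ^ 2 = 1 → quadForm (adjM G) x ≤ quadForm (offP P) x + τ * d)) ≤ 3 / n := by
  obtain ⟨s, hs⟩ : ∃ s, s = τ / 28 := ⟨_, rfl⟩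
  obtain ⟨h, hh⟩ : ∃ h, h = τ / 128 := ⟨_, rfl⟩
  obtain ⟨ε, hε⟩ : ∃ ε, ε = τ / 8 := ⟨_, rfl⟩
  obtain ⟨ε₁, hε₁⟩ : ∃ ε₁, ε₁ = τ / 64 := ⟨_, rfl⟩
  have hs0 : 0 < s := by rw [hs]; positivity
  have hh0 : 0 < h := by rw [hh]; positivity
  have hε0 : 0 < ε := by rw [hε]; positivity
  have hε₁0 : 0 < ε₁ := by rw [hε₁]; positivity
  obtain ⟨K, hK⟩ : ∃ K, K = Real.exp (9 / s ^ 2) := ⟨_, rfl⟩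
  have hK0 : 0 < K := by rw [hK]; positivity
  have hs1 : s ^ 2 ≤ τ := by rw [hs]; nlinarith
  have hKτ : 8 / τ ≤ K := by
    rw [hK]
    have h1 := Real.add_one_le_exp (9 / s ^ 2)
    have h2 : 9 / τ ≤ 9 / s ^ 2 := by gcongr
    have h3 : 8 / τ ≤ 9 / τ := by gcongr; norm_num
    linarith
  have hK1 : 1 ≤ K := le_trans (by rw [le_div_iff₀ hτ]; linarith) hKτ
  have hKi : 1 / K ≤ τ / 8 := by
    rw [div_le_iff₀ hK0]
    rw [div_le_iff₀ hτ] at hKτ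
    linarith
  obtain ⟨R, hR⟩ : ∃ R, R = K / ε₁ := ⟨_, rfl⟩
  have hR0 : 0 < R := by rw [hR]; positivity
  have hKR : K ≤ ε₁ ^ 2 * R ^ 2 := by
    rw [hR, div_pow, mul_div_cancel₀ _ (by positivity)]
    nlinarith
  obtain ⟨M, hM⟩ := exists_nat_ge (R / h + 1)
  have hM0 : (0 : ℝ) < M := lt_of_lt_of_le (by positivity) hM
  obtain ⟨b, hb⟩ : ∃ b, b = min (ε / 32) ((1 / (h * M)) ^ 2) := ⟨_, rfl⟩
  have hb0 : 0 < b := by rw [hb]; exact lt_min (by positivity) (by positivity)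
  have hbε : b ≤ ε / 32 := hb ▸ min_le_left _ _
  have hbM : b * (h * M) ^ 2 ≤ 1 := by
    have : b ≤ (1 / (h * M)) ^ 2 := hb ▸ min_le_right _ _
    calc b * (h * M) ^ 2 ≤ (1 / (h * M)) ^ 2 * (h * M) ^ 2 := by gcongr
      _ = 1 := by field_simp
  refine ⟨4 * (Real.log (2 * M + 1) + 1) / (b * ε), fun n hn P d hP hsym hd hd0 hD hlog => ?_⟩
  have hn' : (0 : ℝ) < n := by exact_mod_cast hn
  have hn1 : (1 : ℝ) ≤ n := by exact_mod_cast hn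
  have hlog0 := Real.log_nonneg hn1
  have hflat : graphProb P (fun G => ¬ FlatBound P d h M ε G) ≤ 1 / n := by
    refine (graphProb_flatBound hP hsym hn hd0 hd hb0 hbε hh0 hbM).trans ?_
    rw [div_le_iff₀ (by positivity)] at hD
    have e1 : ((2 : ℝ) * M + 1) ^ n = Real.exp (n * Real.log (2 * M + 1)) := by
      rw [Real.exp_nat_mul, Real.exp_log (by positivity)]
    rw [e1, ← Real.exp_add]
    have e2 : n * Real.log (2 * M + 1) + -(b * ε * n * d / 4) ≤ -n := by nlinarith
    refine (Real.exp_le_exp.2 e2).trans ?_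
    rw [Real.exp_neg, one_div]
    gcongr
    linarith [Real.add_one_le_exp (n : ℝ)]
  have hsparse : graphProb P (fun G => ¬ SparseSmallSets d K (s ^ 2) G) ≤ 2 / n := by
    refine (graphProb_sparseSmallSets hP hsym hn hd0 hd (by positivity) hK.ge).trans ?_
    have e1 := mul_exp_neg_two_log_le hn (t := 4 * d) (by linarith)
    have e0 : 0 ≤ n * Real.exp (-(4 * d)) := by positivity
    have e2 : 1 / (n : ℝ) ≤ 1 := by rw [div_le_one hn']; exact hn1
    have e3 := exp_sub_one_le_add_sq (x := n * Real.exp (-(4 * d)))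
      (by rw [abs_of_nonneg e0]; linarith)
    have e4 : 2 / (n : ℝ) = 2 * (1 / n) := by ring
    rw [e4]
    nlinarith
  have hor := graphProb_or_le hP (fun G => ¬ FlatBound P d h M ε G)
    (fun G => ¬ SparseSmallSets d K (s ^ 2) G)
  have e5 : (3 : ℝ) / n = 1 / n + 2 / n := by ring
  rw [e5]
  refine (graphProb_mono hP fun G hG => ?_).trans (hor.trans (add_le_add hflat hsparse))
  by_contra hcon
  push Not at hcon
  refine hG fun hdeg x hx => ?_
  refine (quadForm_adjM_le hP hsym hn hd0 hd hdeg hh0 (by linarith) hε₁0 (by linarith) hs0 hK0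
    hR0 hKR hM hcon.1 hcon.2 hx).trans ?_
  gcongr
  linarith

lemma quadForm_wlap (W : Matrix (Fin n) (Fin n) ℝ) (x : Fin n → ℝ) :
    quadForm (wlap W) x = ∑ i, (∑ j, W i j) * x i ^ 2 - quadForm W x := by
  simp only [quadForm, wlap, Matrix.sub_apply, sub_mul, Finset.sum_sub_distrib,
    Matrix.diagonal_apply, ite_mul, zero_mul, Finset.sum_ite_eq, Finset.mem_univ, if_true, sq]

lemma quadForm_wlap_eq_half_sum {W : Matrix (Fin n) (Fin n) ℝ} (hW : ∀ i j, W i j = W j i)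
    (x : Fin n → ℝ) :
    quadForm (wlap W) x = 1 / 2 * ∑ i, ∑ j, W i j * (x i - x j) ^ 2 := by
  have h1 : ∑ i, ∑ j, W i j * x j ^ 2 = ∑ i, ∑ j, W i j * x i ^ 2 := by
    rw [Finset.sum_comm]
    exact Finset.sum_congr rfl fun i _ => Finset.sum_congr rfl fun j _ => by rw [hW]
  have h2 : ∑ i, ∑ j, W i j * (x i - x j) ^ 2 = ∑ i, ∑ j, W i j * x i ^ 2 +
      ∑ i, ∑ j, W i j * x j ^ 2 - 2 * ∑ i, ∑ j, W i j * (x i * x j) := by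
    simp only [Finset.mul_sum, ← Finset.sum_add_distrib, ← Finset.sum_sub_distrib]
    exact Finset.sum_congr rfl fun i _ => Finset.sum_congr rfl fun j _ => by ring
  rw [h2, h1, quadForm_wlap, quadForm]
  simp only [Finset.sum_mul]
  ring

lemma quadForm_smul (M : Matrix (Fin n) (Fin n) ℝ) (c : ℝ) (x : Fin n → ℝ) :
    quadForm M (c • x) = c ^ 2 * quadForm M x := by
  simp only [quadForm, Pi.smul_apply, smul_eq_mul, Finset.mul_sum]
  exact Finset.sum_congr rfl fun i _ => Finset.sum_congr rfl fun j _ => by ring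

/-- The signed indicator of the two communities. -/
def side (n : ℕ) (v : Fin n) : ℝ := if inP1 n v then 1 else -1

lemma side_mul_self (v : Fin n) : side n v * side n v = 1 := by
  unfold side; split_ifs <;> norm_num

lemma side_mul_of_sameSide {v w : Fin n} (h : sameSide n v w) : side n v * side n w = 1 := by
  unfold sameSide at h
  unfold side
  by_cases h1 : inP1 n w <;> simp [h, h1]

lemma side_mul_of_not_sameSide {v w : Fin n} (h : ¬ sameSide n v w) :
    side n v * side n w = -1 := by
  unfold sameSide at h
  unfold side
  by_cases h1 : inP1 n w <;> by_cases h2 : inP1 n v <;> simp_all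

lemma sum_side (hn : Even n) : ∑ v, side n v = 0 := by
  obtain ⟨k, rfl⟩ := hn
  have hk : (k + k) / 2 = k := by omega
  simp only [side, inP1, hk]
  rw [Fin.sum_univ_eq_sum_range (fun i => if i < k then (1 : ℝ) else -1) (k + k),
    Finset.sum_range_add]
  rw [Finset.sum_congr rfl (g := fun _ => (1 : ℝ))
    fun i hi => if_pos (Finset.mem_range.1 hi)]
  simp

section gap

variable {p pbar q : ℝ} {P : Fin n → Fin n → ℝ}

/-- The expected Laplacian is bounded below on the complement of the two ideal eigenvectors. -/
lemma le_quadForm_wlap_offP (hn : Even n) (hP : NSSBMprob n p pbar q P) {x : Fin n → ℝ}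
    (hx : ∑ i, x i = 0) (hxs : ∑ i, side n i * x i = 0) :
    n * (p + q) / 2 * ∑ i, x i ^ 2 ≤ quadForm (wlap (offP P)) x := by
  let Q : Matrix (Fin n) (Fin n) ℝ :=
    Matrix.of fun i j => (p + q) / 2 + (p - q) / 2 * (side n i * side n j)
  have hQs : ∀ i j, Q i j = Q j i := fun i j => by simp only [Q, Matrix.of_apply]; ring
  have hQ : quadForm (wlap Q) x = n * (p + q) / 2 * ∑ i, x i ^ 2 := by
    have h1 : ∀ i, ∑ j, Q i j = n * (p + q) / 2 := by
      intro i
      simp only [Q, Matrix.of_apply, Finset.sum_add_distrib, ← Finset.mul_sum, sum_side hn]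
      simp
      ring
    have h2 : quadForm Q x = 0 := by
      have : quadForm Q x = (p + q) / 2 * ((∑ i, x i) * ∑ j, x j) +
          (p - q) / 2 * ((∑ i, side n i * x i) * ∑ j, side n j * x j) := by
        rw [Finset.sum_mul_sum, Finset.sum_mul_sum]
        simp only [quadForm, Finset.mul_sum, ← Finset.sum_add_distrib]
        exact Finset.sum_congr rfl fun i _ => Finset.sum_congr rfl fun j _ => by
          simp only [Q, Matrix.of_apply]; ring
      rw [this, hx, hxs]; ring
    rw [quadForm_wlap, h2, sub_zero, Finset.mul_sum]
    simp only [h1]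
  rw [← hQ, quadForm_wlap_eq_half_sum hQs, quadForm_wlap_eq_half_sum (offP_comm hP.1)]
  gcongr 1 / 2 * ?_
  refine Finset.sum_le_sum fun i _ => Finset.sum_le_sum fun j _ => ?_
  by_cases hij : i = j
  · simp [hij]
  gcongr
  simp only [offP, Matrix.of_apply, if_neg hij, Q]
  by_cases hs : sameSide n i j
  · rw [side_mul_of_sameSide hs]
    linarith [(hP.2.1 i j hij hs).1]
  · rw [side_mul_of_not_sameSide hs, hP.2.2 i j hs]
    linarith

lemma le_quadForm_lap (hn : Even n) (hP : NSSBMprob n p pbar q P) {G : SimpleGraph (Fin n)}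
    {η τ : ℝ} (hdeg : ∀ v, ∑ w, offP P v w - η ≤ ∑ w, adjM G v w)
    (hspec : ∀ x : Fin n → ℝ, ∑ i, x i ^ 2 = 1 →
      quadForm (adjM G) x ≤ quadForm (offP P) x + τ) {x : Fin n → ℝ}
    (hx : ∑ i, x i = 0) (hxs : ∑ i, side n i * x i = 0) :
    (n * (p + q) / 2 - (η + τ)) * ∑ i, x i ^ 2 ≤ quadForm (lap G) x := by
  have hspec' : quadForm (adjM G) x ≤ quadForm (offP P) x + τ * ∑ i, x i ^ 2 := by
    rcases (Finset.sum_nonneg fun i (_ : i ∈ Finset.univ) => sq_nonneg (x i)).eq_or_lt with h0 | h0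
    · have hz : x = 0 := by
        funext i
        have := (Finset.sum_eq_zero_iff_of_nonneg fun i _ => sq_nonneg (x i)).1 h0.symm i
          (Finset.mem_univ i)
        simpa using this
      simp [hz, quadForm]
    · set S := ∑ i, x i ^ 2 with hS
      have hr : Real.sqrt S ^ 2 = S := Real.sq_sqrt h0.le
      have hr0 : 0 < Real.sqrt S := Real.sqrt_pos.2 h0
      have h1 := hspec ((Real.sqrt S)⁻¹ • x) (by
        simp only [Pi.smul_apply, smul_eq_mul, mul_pow, ← Finset.mul_sum]
        rw [inv_pow, hr, ← hS, inv_mul_cancel₀ h0.ne'])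
      rw [quadForm_smul, quadForm_smul, inv_pow, hr] at h1
      have h2 := mul_le_mul_of_nonneg_left h1 h0.le
      rw [mul_add, ← mul_assoc, ← mul_assoc, mul_inv_cancel₀ h0.ne', one_mul, one_mul] at h2
      linarith
  have h1 := le_quadForm_wlap_offP hn hP hx hxs
  rw [quadForm_wlap] at h1
  rw [lap, quadForm_wlap]
  have h2 : ∑ i, (∑ j, offP P i j) * x i ^ 2 - η * ∑ i, x i ^ 2 ≤
      ∑ i, (∑ j, adjM G i j) * x i ^ 2 := by
    rw [Finset.mul_sum, ← Finset.sum_sub_distrib]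
    refine Finset.sum_le_sum fun i _ => ?_
    rw [← sub_mul]
    exact mul_le_mul_of_nonneg_right (hdeg i) (sq_nonneg _)
  linarith

end gap

lemma isHermitian_lap (G : SimpleGraph (Fin n)) : (lap G).IsHermitian := by
  ext i j
  simp only [lap, wlap, Matrix.conjTranspose_apply, Matrix.sub_apply, star_trivial,
    Matrix.diagonal_apply, adjM_comm G i j]
  by_cases h : i = j
  · simp [h]
  · simp [h, Ne.symm h]

lemma quadForm_eq_dotProduct (M : Matrix (Fin n) (Fin n) ℝ) (x : Fin n → ℝ) :
    quadForm M x = x ⬝ᵥ M *ᵥ x := by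
  simp only [quadForm, dotProduct, mulVec, Finset.mul_sum]
  exact Finset.sum_congr rfl fun i _ => Finset.sum_congr rfl fun j _ => by ring

/-- Spectral decomposition of a quadratic form. -/
lemma quadForm_eq_sum_eigenvalues {M : Matrix (Fin n) (Fin n) ℝ} (hM : M.IsHermitian)
    (x : Fin n → ℝ) :
    quadForm M x = ∑ i, hM.eigenvalues i * ((hM.eigenvectorBasis i).ofLp ⬝ᵥ x) ^ 2 ∧
      ∑ i, x i ^ 2 = ∑ i, ((hM.eigenvectorBasis i).ofLp ⬝ᵥ x) ^ 2 := by
  have key : ∀ y : Fin n → ℝ, x ⬝ᵥ y = ∑ i, ((hM.eigenvectorBasis i).ofLp ⬝ᵥ x) *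
      ((hM.eigenvectorBasis i).ofLp ⬝ᵥ y) := by
    intro y
    have := hM.eigenvectorBasis.sum_inner_mul_inner (WithLp.toLp 2 x) (WithLp.toLp 2 y)
    simp only [EuclideanSpace.inner_eq_star_dotProduct, star_trivial] at this
    rw [dotProduct_comm, ← this]
    exact Finset.sum_congr rfl fun i _ => by rw [dotProduct_comm y]
  refine ⟨?_, ?_⟩
  · rw [quadForm_eq_dotProduct, key]
    refine Finset.sum_congr rfl fun i _ => ?_
    have h1 : (hM.eigenvectorBasis i).ofLp ⬝ᵥ M *ᵥ x =
        hM.eigenvalues i * ((hM.eigenvectorBasis i).ofLp ⬝ᵥ x) := by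
      have hT : Mᵀ = M := by simpa using hM.eq
      rw [dotProduct_mulVec, ← mulVec_transpose, hT, hM.mulVec_eigenvectorBasis, smul_dotProduct,
        smul_eq_mul]
    rw [h1]; ring
  · have := key x
    simp only [dotProduct, ← sq] at this ⊢
    exact this

/-- Min-max upper bound for the second smallest eigenvalue. -/
lemma eig_one_le {M : Matrix (Fin n) (Fin n) ℝ} (hM : M.IsHermitian) (hn : 2 ≤ n)
    {a b : Fin n → ℝ} {R : ℝ} (hab : ∀ s t : ℝ, s • a + t • b = 0 → s = 0 ∧ t = 0)
    (h : ∀ s t : ℝ, quadForm M (s • a + t • b) ≤ R * ∑ i, (s • a + t • b) i ^ 2) :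
    eig M 1 ≤ R := by
  by_contra! hcon
  have hroots := hM.roots_charpoly_eq_eigenvalues
  simp only [RCLike.ofReal_real_eq_id] at hroots
  have hcard : M.charpoly.roots.card = n := by rw [hroots]; simp
  obtain ⟨i₀, hi₀⟩ : ∃ i₀, ∀ i, i ≠ i₀ → R < hM.eigenvalues i := by
    unfold eig at hcon
    have hlen : (M.charpoly.roots.sort (· ≤ ·)).length = n := by simp [hcard]
    have hsort := M.charpoly.roots.pairwise_sort (· ≤ ·)
    have hcoe := M.charpoly.roots.sort_eq (· ≤ ·)
    match hl : M.charpoly.roots.sort (· ≤ ·) with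
    | [] => simp [hl] at hlen; omega
    | [c] => simp [hl] at hlen; omega
    | c :: e :: l =>
      rw [hl] at hcon hsort hcoe
      simp only [List.getD_cons_succ, List.getD_cons_zero] at hcon
      have hbig : ∀ r ∈ e :: l, R < r := by
        intro r hr
        rcases List.mem_cons.1 hr with rfl | hr
        · exact hcon
        · exact hcon.trans_le ((List.pairwise_cons.1 (List.pairwise_cons.1 hsort).2).1 r hr)
      have hcount : Multiset.card (M.charpoly.roots.filter (· ≤ R)) ≤ 1 := by
        rw [← hcoe, Multiset.filter_coe, Multiset.coe_card, List.filter_cons]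
        have : (e :: l).filter (· ≤ R) = [] := by
          rw [List.filter_eq_nil_iff]
          intro r hr
          simpa using hbig r hr
        rw [this]
        split_ifs <;> simp
      rw [hroots, Multiset.filter_map, Multiset.card_map] at hcount
      have hc2 : (Finset.univ.filter fun i => hM.eigenvalues i ≤ R).card ≤ 1 := hcount
      rw [Finset.card_le_one_iff] at hc2
      by_cases hex : ∃ i, hM.eigenvalues i ≤ R
      · obtain ⟨i, hi⟩ := hex
        refine ⟨i, fun j hj => ?_⟩
        by_contra! hj2
        exact hj (hc2 (by simpa using hj2) (by simpa using hi))
      · push Not at hex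
        exact ⟨⟨0, by omega⟩, fun i _ => hex i⟩
  set v := (hM.eigenvectorBasis i₀).ofLp with hv
  obtain ⟨s, t, hst, hort⟩ : ∃ s t : ℝ, ¬ (s = 0 ∧ t = 0) ∧ v ⬝ᵥ (s • a + t • b) = 0 := by
    by_cases h0 : v ⬝ᵥ a = 0
    · exact ⟨1, 0, by simp, by simp [h0]⟩
    · refine ⟨v ⬝ᵥ b, -(v ⬝ᵥ a), by simp [h0], ?_⟩
      rw [dotProduct_add, dotProduct_smul, dotProduct_smul]
      simp only [smul_eq_mul]; ring
  set x := s • a + t • b with hx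
  have hx0 : x ≠ 0 := fun h0 => hst (hab s t h0)
  obtain ⟨e1, e2⟩ := quadForm_eq_sum_eigenvalues hM x
  have hpos : 0 < ∑ i, x i ^ 2 := by
    refine lt_of_le_of_ne (Finset.sum_nonneg fun i _ => sq_nonneg _) fun h0 => hx0 ?_
    funext i
    simpa using (Finset.sum_eq_zero_iff_of_nonneg fun i _ => sq_nonneg (x i)).1 h0.symm i
      (Finset.mem_univ i)
  have h3 := h s t
  rw [← hx, e1, e2, Finset.mul_sum] at h3
  rw [e2] at hpos
  refine absurd h3 (not_le.2 ?_)
  obtain ⟨i, -, hi⟩ := Finset.exists_ne_zero_of_sum_ne_zero hpos.ne'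
  refine Finset.sum_lt_sum (fun j _ => ?_) ⟨i, Finset.mem_univ i, ?_⟩
  · by_cases hj : j = i₀
    · rw [hj, ← hv, hort]; simp
    · exact mul_le_mul_of_nonneg_right (hi₀ j hj).le (sq_nonneg _)
  · have hii : i ≠ i₀ := by
      rintro rfl
      exact hi (by rw [← hv, hort]; simp)
    exact mul_lt_mul_of_pos_right (hi₀ i hii) (lt_of_le_of_ne (sq_nonneg _) hi.symm)

lemma sum_const_add_side_sq (hn : Even n) (s t : ℝ) :
    ∑ i, (s + t * side n i) ^ 2 = n * (s ^ 2 + t ^ 2) := by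
  have h : ∀ i, (s + t * side n i) ^ 2 = s ^ 2 + t ^ 2 + 2 * s * t * side n i := by
    intro i
    linear_combination t ^ 2 * side_mul_self i
  simp only [h, Finset.sum_add_distrib, ← Finset.mul_sum, sum_side hn]
  simp
  ring

section gap

variable {p pbar q : ℝ} {P : Fin n → Fin n → ℝ}

lemma sum_sum_offP_cross (hn : Even n) (hP : NSSBMprob n p pbar q P) :
    ∑ i, ∑ j, (if ¬ sameSide n i j then offP P i j else 0) = q * n ^ 2 / 2 := by
  have h : ∀ i j, (if ¬ sameSide n i j then offP P i j else 0) =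
      q / 2 - q / 2 * (side n i * side n j) := by
    intro i j
    by_cases hs : sameSide n i j
    · rw [if_neg (by simpa using hs), side_mul_of_sameSide hs]; ring
    · have hij : i ≠ j := by rintro rfl; exact hs Iff.rfl
      rw [if_pos hs, side_mul_of_not_sameSide hs]
      simp only [offP, Matrix.of_apply, if_neg hij, hP.2.2 i j hs]
      ring
  simp only [h, Finset.sum_sub_distrib, ← Finset.mul_sum, sum_side hn]
  simp
  ring

/-- The number of crossing edges bounds the second smallest eigenvalue of the Laplacian. -/
lemma eig_lap_one_le (hn : Even n) (hn2 : 2 ≤ n) (hq : 0 ≤ q) (hP : NSSBMprob n p pbar q P)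
    {G : SimpleGraph (Fin n)} {η : ℝ} (hη : 0 ≤ η)
    (hcut : ∑ i, ∑ j, (if ¬ sameSide n i j then adjM G i j else 0) ≤
      ∑ i, ∑ j, (if ¬ sameSide n i j then offP P i j else 0) + η * n) :
    eig (lap G) 1 ≤ n * q + 2 * η := by
  have hn' : (0 : ℝ) < n := by exact_mod_cast (by omega : 0 < n)
  have hx : ∀ (s t : ℝ) (i), (s • (1 : Fin n → ℝ) + t • side n) i = s + t * side n i := by
    intro s t i; simp
  refine eig_one_le (isHermitian_lap G) hn2 (a := 1) (b := side n) (fun s t h => ?_) fun s t => ?_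
  · have h1 := sum_const_add_side_sq hn s t
    have h2 : ∑ i, (s + t * side n i) ^ 2 = 0 :=
      Finset.sum_eq_zero fun i _ => by rw [← hx, h]; simp
    rw [h2] at h1
    have h3 : s ^ 2 + t ^ 2 = 0 := by
      rcases mul_eq_zero.1 h1.symm with h | h
      · exact absurd h hn'.ne'
      · exact h
    constructor <;> nlinarith [sq_nonneg s, sq_nonneg t]
  · rw [sum_sum_offP_cross hn hP] at hcut
    rw [lap, quadForm_wlap_eq_half_sum (adjM_comm G)]
    simp only [hx, sum_const_add_side_sq hn]
    have h1 : ∑ i, ∑ j, adjM G i j * (s + t * side n i - (s + t * side n j)) ^ 2 =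
        4 * t ^ 2 * ∑ i, ∑ j, (if ¬ sameSide n i j then adjM G i j else 0) := by
      simp only [Finset.mul_sum]
      refine Finset.sum_congr rfl fun i _ => Finset.sum_congr rfl fun j _ => ?_
      by_cases hs : sameSide n i j
      · rw [if_neg (by simpa using hs)]
        linear_combination adjM G i j * t ^ 2 * (side_mul_self i + side_mul_self j -
          2 * side_mul_of_sameSide hs)
      · rw [if_pos hs]
        linear_combination adjM G i j * t ^ 2 * (side_mul_self i + side_mul_self j -
          2 * side_mul_of_not_sameSide hs)
    rw [h1]
    have h2 := mul_le_mul_of_nonneg_left hcut (by positivity : 0 ≤ 2 * t ^ 2)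
    have h3 : 0 ≤ (n * q + 2 * η) * (n * s ^ 2) := by positivity
    nlinarith

lemma le_sum_offP (hn : Even n) (hp1 : p ≤ 1) (hP : NSSBMprob n p pbar q P) (v : Fin n) :
    n * (p + q) / 2 - 1 ≤ ∑ w, offP P v w := by
  have h : ∀ w, (p + q) / 2 + (p - q) / 2 * (side n v * side n w) - (if v = w then 1 else 0) ≤
      offP P v w := by
    intro w
    by_cases hvw : v = w
    · subst hvw
      rw [offP_self, side_mul_self, if_pos rfl]
      linarith
    · rw [if_neg hvw]
      simp only [offP, Matrix.of_apply, if_neg hvw]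
      by_cases hs : sameSide n v w
      · rw [side_mul_of_sameSide hs]
        linarith [(hP.2.1 v w hvw hs).1]
      · rw [side_mul_of_not_sameSide hs, hP.2.2 v w hs]
        linarith
  refine le_trans (le_of_eq ?_) (Finset.sum_le_sum fun w _ => h w)
  simp only [Finset.sum_sub_distrib, Finset.sum_add_distrib, ← Finset.mul_sum, sum_side hn]
  simp
  ring

end gap

lemma lap_mulVec (G : SimpleGraph (Fin n)) (x : Fin n → ℝ) (w : Fin n) :
    (lap G *ᵥ x) w = ∑ j, adjM G w j * (x w - x j) := by
  simp only [lap, wlap, Matrix.sub_mulVec, Pi.sub_apply, Matrix.mulVec_diagonal, mul_sub,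
    Finset.sum_sub_distrib, ← Finset.sum_mul]
  rfl

lemma dotProduct_lap_comm (G : SimpleGraph (Fin n)) (x y : Fin n → ℝ) :
    x ⬝ᵥ lap G *ᵥ y = y ⬝ᵥ lap G *ᵥ x := by
  have hT : (lap G)ᵀ = lap G := by simpa using (isHermitian_lap G).eq
  rw [dotProduct_mulVec, ← mulVec_transpose, hT, dotProduct_comm]

lemma quadForm_lap_add (G : SimpleGraph (Fin n)) (x y : Fin n → ℝ) :
    quadForm (lap G) (x + y) =
      quadForm (lap G) x + 2 * (x ⬝ᵥ lap G *ᵥ y) + quadForm (lap G) y := by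
  simp only [quadForm_eq_dotProduct, mulVec_add, add_dotProduct, dotProduct_add]
  rw [dotProduct_lap_comm G y x]
  ring

/-- `φ` minimises the Laplacian form of `H` among unit vectors that vanish at `v` and sum
to zero. -/
structure IsConstrainedMin (H : SimpleGraph (Fin n)) (v : Fin n) (φ : Fin n → ℝ) : Prop where
  apply_eq : φ v = 0
  sum_eq : ∑ i, φ i = 0
  sum_sq : ∑ i, φ i ^ 2 = 1
  le : ∀ x : Fin n → ℝ, x v = 0 → ∑ i, x i = 0 →
    quadForm (lap H) φ * ∑ i, x i ^ 2 ≤ quadForm (lap H) x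

lemma sum_sq_pos {x : Fin n → ℝ} (hx : x ≠ 0) : 0 < ∑ i, x i ^ 2 := by
  refine lt_of_le_of_ne (Finset.sum_nonneg fun i _ => sq_nonneg _) fun h0 => hx ?_
  funext i
  simpa using (Finset.sum_eq_zero_iff_of_nonneg fun i _ => sq_nonneg (x i)).1 h0.symm i
    (Finset.mem_univ i)

lemma exists_isConstrainedMin (hn : 3 ≤ n) (H : SimpleGraph (Fin n)) (v : Fin n) :
    ∃ φ, IsConstrainedMin H v φ := by
  let S : Set (Fin n → ℝ) := {x | x v = 0 ∧ ∑ i, x i = 0 ∧ ∑ i, x i ^ 2 = 1}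
  have hmem : ∀ x, x ∈ S ↔ x v = 0 ∧ ∑ i, x i = 0 ∧ ∑ i, x i ^ 2 = 1 := fun x => Iff.rfl
  have hnorm : ∀ x : Fin n → ℝ, x ≠ 0 → x v = 0 → ∑ i, x i = 0 →
      (Real.sqrt (∑ i, x i ^ 2))⁻¹ • x ∈ S := by
    intro x hx hv hs
    have h0 := sum_sq_pos hx
    rw [hmem]
    simp only [Pi.smul_apply, smul_eq_mul, mul_pow, ← Finset.mul_sum, hv, hs, mul_zero, inv_pow,
      Real.sq_sqrt h0.le, true_and]
    exact inv_mul_cancel₀ h0.ne'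
  have hne : S.Nonempty := by
    obtain ⟨a, b, hav, hbv, hab⟩ : ∃ a b : Fin n, a ≠ v ∧ b ≠ v ∧ a ≠ b := by
      have hcard : 1 < (Finset.univ.erase v).card := by
        rw [Finset.card_erase_of_mem (Finset.mem_univ v), Finset.card_univ, Fintype.card_fin]
        omega
      obtain ⟨a, ha, b, hb, hab⟩ := Finset.one_lt_card.1 hcard
      exact ⟨a, b, Finset.ne_of_mem_erase ha, Finset.ne_of_mem_erase hb, hab⟩
    refine ⟨_, hnorm (Pi.single a 1 - Pi.single b 1) (fun h => ?_) ?_ ?_⟩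
    · have := congrFun h a
      simp [hab] at this
    · simp [hav.symm, hbv.symm]
    · simp
  have hcomp : IsCompact S := by
    refine Metric.isCompact_of_isClosed_isBounded ?_ ?_
    · refine (isClosed_eq (continuous_apply v) continuous_const).inter
        ((isClosed_eq (by fun_prop) continuous_const).inter
          (isClosed_eq (by fun_prop) continuous_const))
    · refine (Metric.isBounded_closedBall (x := (0 : Fin n → ℝ)) (r := 1)).subset fun x hx => ?_
      rw [mem_closedBall_zero_iff, pi_norm_le_iff_of_nonneg zero_le_one]
      intro i
      have h1 : x i ^ 2 ≤ 1 := by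
        rw [← ((hmem x).1 hx).2.2]
        exact Finset.single_le_sum (f := fun i => x i ^ 2) (fun j _ => sq_nonneg _)
          (Finset.mem_univ i)
      rw [Real.norm_eq_abs]
      exact (sq_le_one_iff_abs_le_one _).1 h1
  obtain ⟨φ, hφ, hmin⟩ := hcomp.exists_isMinOn hne
    (f := quadForm (lap H)) (by unfold quadForm; fun_prop)
  obtain ⟨h1, h2, h3⟩ := (hmem φ).1 hφ
  refine ⟨φ, h1, h2, h3, fun x hxv hxs => ?_⟩
  by_cases hx : x = 0
  · simp [hx, quadForm]
  have h0 := sum_sq_pos hx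
  have h4 := isMinOn_iff.1 hmin _ (hnorm x hx hxv hxs)
  rw [quadForm_smul, inv_pow, Real.sq_sqrt h0.le] at h4
  rwa [inv_mul_eq_div, le_div_iff₀ h0] at h4

lemma IsConstrainedMin.dotProduct_lap_eq_zero {H : SimpleGraph (Fin n)} {v : Fin n}
    {φ y : Fin n → ℝ} (hφ : IsConstrainedMin H v φ) (hv : y v = 0) (hs : ∑ i, y i = 0)
    (hy : φ ⬝ᵥ y = 0) : φ ⬝ᵥ lap H *ᵥ y = 0 := by
  set B := φ ⬝ᵥ lap H *ᵥ y with hB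
  set c := quadForm (lap H) y - quadForm (lap H) φ * ∑ i, y i ^ 2 with hc
  have key : ∀ t : ℝ, 0 ≤ 2 * t * B + t ^ 2 * c := by
    intro t
    have h1 := hφ.le (φ + t • y) (by simp [hφ.apply_eq, hv])
      (by simp [Finset.sum_add_distrib, ← Finset.mul_sum, hφ.sum_eq, hs])
    rw [quadForm_lap_add, quadForm_smul, mulVec_smul, dotProduct_smul, ← hB, smul_eq_mul] at h1
    have h2 : ∑ i, (φ + t • y) i ^ 2 = 1 + t ^ 2 * ∑ i, y i ^ 2 := by
      have h3 : ∑ i, (φ + t • y) i ^ 2 =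
          ∑ i, φ i ^ 2 + t ^ 2 * ∑ i, y i ^ 2 + 2 * t * (φ ⬝ᵥ y) := by
        simp only [dotProduct, Finset.mul_sum, ← Finset.sum_add_distrib]
        exact Finset.sum_congr rfl fun i _ => by
          simp only [Pi.add_apply, Pi.smul_apply, smul_eq_mul]; ring
      rw [h3, hy, hφ.sum_sq]; ring
    rw [h2] at h1
    rw [hc]
    linarith
  have hc1 : 0 < |c| + 1 := by positivity
  have h := key (-B / (|c| + 1))
  have e : 2 * (-B / (|c| + 1)) * B + (-B / (|c| + 1)) ^ 2 * c =
      -(B ^ 2 * (2 * (|c| + 1) - c)) / (|c| + 1) ^ 2 := by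
    field_simp
    ring
  rw [e] at h
  have h2 : 0 ≤ -(B ^ 2 * (2 * (|c| + 1) - c)) := by
    by_contra! hlt
    exact absurd h (not_le.2 (div_neg_of_neg_of_pos hlt (by positivity)))
  have h3 := le_abs_self c
  have h4 := abs_nonneg c
  nlinarith [sq_nonneg B, mul_nonneg (sq_nonneg B) (by linarith : 0 ≤ 2 * (|c| + 1) - c - 1)]

lemma adjM_isolate (G : SimpleGraph (Fin n)) (v i j : Fin n) :
    adjM (isolate G v) i j = if i = v ∨ j = v then 0 else adjM G i j := by
  simp only [adjM, Matrix.of_apply, isolate]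
  by_cases h1 : i = v <;> by_cases h2 : j = v <;> simp [h1, h2]

lemma quadForm_lap_le_isolate (G : SimpleGraph (Fin n)) {v : Fin n} {x : Fin n → ℝ}
    (hv : x v = 0) :
    quadForm (lap G) x ≤ quadForm (lap (isolate G v)) x + ∑ i, x i ^ 2 := by
  rw [lap, lap, quadForm_wlap_eq_half_sum (adjM_comm _), quadForm_wlap_eq_half_sum (adjM_comm _)]
  have h : ∀ i j, adjM G i j * (x i - x j) ^ 2 ≤ adjM (isolate G v) i j * (x i - x j) ^ 2 +
      ((if i = v then x j ^ 2 else 0) + if j = v then x i ^ 2 else 0) := by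
    intro i j
    rw [adjM_isolate]
    have h1 := adjM_le_one G i j
    have h0 := adjM_nonneg G i j
    by_cases hi : i = v
    · subst hi
      by_cases hj : j = i
      · simp [hj, hv]
      · simp only [hv, hj, true_or, if_true, if_false]
        nlinarith [sq_nonneg (x j)]
    · by_cases hj : j = v
      · subst hj
        simp only [hv, hi, or_true, if_true, if_false]
        nlinarith [sq_nonneg (x i)]
      · simp [hi, hj]
  have h2 := Finset.sum_le_sum fun i (_ : i ∈ Finset.univ) =>
    Finset.sum_le_sum fun j (_ : j ∈ Finset.univ) => h i j
  simp only [Finset.sum_add_distrib] at h2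
  rw [Finset.sum_comm (f := fun i j => if i = v then x j ^ 2 else 0)] at h2
  simp only [Finset.sum_ite_eq', Finset.mem_univ, if_true] at h2
  linarith

/-- On the complement of the constrained minimiser, the Laplacian form after isolating a vertex
inherits the spectral gap of the original graph. -/
lemma IsConstrainedMin.le_quadForm {G : SimpleGraph (Fin n)} {v : Fin n} {φ σ x : Fin n → ℝ}
    (hφ : IsConstrainedMin (isolate G v) v φ) {γ : ℝ}
    (hγ : ∀ x : Fin n → ℝ, ∑ i, x i = 0 → ∑ i, σ i * x i = 0 →
      γ * ∑ i, x i ^ 2 ≤ quadForm (lap G) x)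
    (hv : x v = 0) (hs : ∑ i, x i = 0) (hx : φ ⬝ᵥ x = 0) :
    (γ - 1) * ∑ i, x i ^ 2 ≤ quadForm (lap (isolate G v)) x := by
  have hγ' : ∀ y : Fin n → ℝ, y v = 0 → ∑ i, y i = 0 → ∑ i, σ i * y i = 0 →
      (γ - 1) * ∑ i, y i ^ 2 ≤ quadForm (lap (isolate G v)) y := by
    intro y hy hys hyσ
    linarith [hγ y hys hyσ, quadForm_lap_le_isolate G hy]
  by_cases hb : ∑ i, σ i * x i = 0
  · exact hγ' x hv hs hb
  set a := ∑ i, σ i * φ i with ha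
  set b := ∑ i, σ i * x i with hbdef
  set N := ∑ i, x i ^ 2 with hN
  have h1 := hγ' (a • x + (-b) • φ) (by simp [hv, hφ.apply_eq])
    (by simp [Finset.sum_add_distrib, ← Finset.mul_sum, hs, hφ.sum_eq]) (by
      have : ∑ i, σ i * (a • x + (-b) • φ) i = a * b + -b * a := by
        rw [ha, hbdef]
        simp only [Pi.add_apply, Pi.smul_apply, smul_eq_mul, Finset.mul_sum,
          ← Finset.sum_add_distrib, mul_add]
        rw [← ha, ← hbdef]
        exact Finset.sum_congr rfl fun i _ => by ring
      rw [this]; ring)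
  have h2 : ∑ i, (a • x + (-b) • φ) i ^ 2 = a ^ 2 * N + b ^ 2 := by
    have h3 : ∑ i, (a • x + (-b) • φ) i ^ 2 =
        a ^ 2 * ∑ i, x i ^ 2 + b ^ 2 * ∑ i, φ i ^ 2 - 2 * a * b * (φ ⬝ᵥ x) := by
      simp only [dotProduct, Finset.mul_sum, ← Finset.sum_add_distrib, ← Finset.sum_sub_distrib]
      exact Finset.sum_congr rfl fun i _ => by
        simp only [Pi.add_apply, Pi.smul_apply, smul_eq_mul]; ring
    rw [h3, hx, hφ.sum_sq]; ring
  have h4 := hφ.dotProduct_lap_eq_zero hv hs hx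
  rw [h2, quadForm_lap_add, quadForm_smul, quadForm_smul, mulVec_smul, dotProduct_smul,
    smul_dotProduct, dotProduct_lap_comm, h4] at h1
  have h5 := hφ.le x hv hs
  rw [← hN] at h5
  have hN0 : 0 ≤ N := Finset.sum_nonneg fun i _ => sq_nonneg _
  have hb2 : 0 < b ^ 2 := by positivity
  have h6 : 0 < a ^ 2 * N + b ^ 2 := by positivity
  simp only [smul_zero, mul_zero, add_zero, neg_sq] at h1
  have h7 := mul_le_mul_of_nonneg_right h1 hN0
  have h8 := mul_le_mul_of_nonneg_left h5 hb2.le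
  refine le_of_mul_le_mul_left ?_ h6
  nlinarith

lemma abs_dotProduct_le_sqrt (x y : Fin n → ℝ) :
    |x ⬝ᵥ y| ≤ Real.sqrt (∑ i, x i ^ 2) * Real.sqrt (∑ i, y i ^ 2) := by
  rw [← Real.sqrt_mul (Finset.sum_nonneg fun i _ => sq_nonneg _)]
  exact Real.abs_le_sqrt (Finset.sum_mul_sq_le_sq_mul_sq _ _ _)

/-- Decomposition of an eigenvector away from `v` into a multiple of the constrained minimiser, a
constant, and a remainder controlled through the eigenvalue gap. -/
lemma exists_isolate_decomposition (hn : 2 ≤ n) {G : SimpleGraph (Fin n)} {v : Fin n}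
    {φ u : Fin n → ℝ} {c g D m : ℝ} (hφ : IsConstrainedMin (isolate G v) v φ)
    (hgap : ∀ x : Fin n → ℝ, x v = 0 → ∑ i, x i = 0 → φ ⬝ᵥ x = 0 →
      (c + g) * ∑ i, x i ^ 2 ≤ quadForm (lap (isolate G v)) x)
    (hu : lap G *ᵥ u = c • u) (hu1 : ∑ i, u i ^ 2 = 1) (hm : ∀ w, |u w| ≤ m)
    (hD : ∑ w, adjM G v w ≤ D) :
    ∃ (β β' : ℝ) (r : Fin n → ℝ), |β| ≤ 1 ∧ β' ^ 2 * (n - 1) ≤ 1 ∧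
      g * Real.sqrt (∑ i, r i ^ 2) ≤ Real.sqrt D * (2 * m) ∧
      ∀ w, w ≠ v → u w = β * φ w + β' + r w := by
  have hm0 : 0 ≤ m := (abs_nonneg _).trans (hm v)
  have hn1 : (1 : ℝ) ≤ n - 1 := by
    have : (2 : ℝ) ≤ n := by exact_mod_cast hn
    linarith
  set e : Fin n → ℝ := fun w => if w = v then 0 else 1 with he
  set x : Fin n → ℝ := fun w => if w = v then 0 else u w with hx
  have hev : e v = 0 := by simp [he]
  have hxv : x v = 0 := by simp [hx]
  have hes : ∑ w, e w = n - 1 := by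
    have : ∀ w, e w = 1 - if w = v then 1 else 0 := by
      intro w; by_cases h : w = v <;> simp [he, h]
    simp [this, Finset.sum_sub_distrib]
  have hee : e ⬝ᵥ e = n - 1 := by
    rw [← hes, dotProduct]
    exact Finset.sum_congr rfl fun w _ => by by_cases h : w = v <;> simp [he, h]
  have hve : ∀ y : Fin n → ℝ, y v = 0 → y ⬝ᵥ e = ∑ w, y w := by
    intro y hy
    exact Finset.sum_congr rfl fun w _ => by
      by_cases h : w = v
      · subst h; simp [he, hy]
      · simp [he, h]
  set β := φ ⬝ᵥ x with hβ
  set β' := (∑ w, x w) / (n - 1) with hβ'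
  set r : Fin n → ℝ := x - β • φ - β' • e with hr
  have hφe : φ ⬝ᵥ e = 0 := by rw [hve φ hφ.apply_eq, hφ.sum_eq]
  have hφφ : φ ⬝ᵥ φ = 1 := by rw [← hφ.sum_sq]; simp only [dotProduct, sq]
  have hrv : r v = 0 := by simp [hr, hxv, hφ.apply_eq, hev]
  have hrs : ∑ w, r w = 0 := by
    simp only [hr, Pi.sub_apply, Pi.smul_apply, smul_eq_mul, Finset.sum_sub_distrib,
      ← Finset.mul_sum, hφ.sum_eq, hes, hβ']
    field_simp
    ring
  have hφr : φ ⬝ᵥ r = 0 := by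
    simp only [hr, dotProduct_sub, dotProduct_smul, hφe, hφφ, smul_eq_mul, ← hβ]
    ring
  have hre : r ⬝ᵥ e = 0 := by rw [hve r hrv, hrs]
  have hxdec : x = r + β • φ + β' • e := by rw [hr]; abel
  have hxx : x ⬝ᵥ x = r ⬝ᵥ r + β ^ 2 + β' ^ 2 * (n - 1) := by
    rw [hxdec]
    simp only [add_dotProduct, dotProduct_add, smul_dotProduct, dotProduct_smul, hφφ, hee, hφe,
      hφr, hre, dotProduct_comm r φ, dotProduct_comm e r, dotProduct_comm e φ, smul_eq_mul]
    ring
  have hxx1 : x ⬝ᵥ x ≤ 1 := by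
    rw [← hu1]
    refine Finset.sum_le_sum fun w _ => ?_
    by_cases h : w = v
    · simp only [hx, h, if_true, mul_zero]; positivity
    · simp only [hx, h, if_false]; exact (sq _).ge
  have hrr : r ⬝ᵥ r = ∑ i, r i ^ 2 := by simp only [dotProduct, sq]
  have hrr0 : 0 ≤ ∑ i, r i ^ 2 := Finset.sum_nonneg fun i _ => sq_nonneg _
  have hβ'0 : 0 ≤ β' ^ 2 * (n - 1) := by positivity
  set f : Fin n → ℝ := fun w => adjM G v w * (u v - u w) with hf
  have hLx : ∀ w, w ≠ v → (lap (isolate G v) *ᵥ x) w = c * x w + f w := by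
    intro w hw
    have h1 := congrFun hu w
    rw [lap_mulVec, Pi.smul_apply, smul_eq_mul] at h1
    rw [lap_mulVec]
    have h2 : ∀ j, adjM (isolate G v) w j * (x w - x j) = adjM G w j * (u w - u j) -
        if j = v then adjM G w v * (u w - u v) else 0 := by
      intro j
      rw [adjM_isolate]
      by_cases hj : j = v
      · simp [hj]
      · simp [hj, hw, hx]
    simp only [h2, Finset.sum_sub_distrib, h1, Finset.sum_ite_eq', Finset.mem_univ, if_true]
    simp only [hx, hf, if_neg hw, adjM_comm G v w]
    ring
  have hLe : ∀ w, w ≠ v → (lap (isolate G v) *ᵥ e) w = 0 := by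
    intro w hw
    rw [lap_mulVec]
    refine Finset.sum_eq_zero fun j _ => ?_
    rw [adjM_isolate]
    by_cases hj : j = v <;> simp [hj, hw, he]
  have hrLe : r ⬝ᵥ lap (isolate G v) *ᵥ e = 0 := by
    refine Finset.sum_eq_zero fun w _ => ?_
    by_cases hw : w = v
    · rw [hw, hrv, zero_mul]
    · rw [hLe w hw, mul_zero]
  have hrLφ : r ⬝ᵥ lap (isolate G v) *ᵥ φ = 0 := by
    rw [dotProduct_lap_comm]
    exact hφ.dotProduct_lap_eq_zero hrv hrs hφr
  have hrLx : r ⬝ᵥ lap (isolate G v) *ᵥ x = quadForm (lap (isolate G v)) r := by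
    rw [hxdec, mulVec_add, mulVec_add, mulVec_smul, mulVec_smul, dotProduct_add, dotProduct_add,
      dotProduct_smul, dotProduct_smul, hrLe, hrLφ, quadForm_eq_dotProduct]
    simp
  have hrLx' : r ⬝ᵥ lap (isolate G v) *ᵥ x = c * (r ⬝ᵥ x) + r ⬝ᵥ f := by
    simp only [dotProduct, Finset.mul_sum, ← Finset.sum_add_distrib]
    refine Finset.sum_congr rfl fun w _ => ?_
    by_cases hw : w = v
    · rw [hw, hrv]; ring
    · rw [hLx w hw]; ring
  have hrx : r ⬝ᵥ x = r ⬝ᵥ r := by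
    rw [hxdec, dotProduct_add, dotProduct_add, dotProduct_smul, dotProduct_smul, hre,
      dotProduct_comm r φ, hφr]
    simp
  have hff : Real.sqrt (∑ i, f i ^ 2) ≤ Real.sqrt D * (2 * m) := by
    rw [← Real.sqrt_sq (by positivity : 0 ≤ 2 * m), ← Real.sqrt_mul' _ (by positivity)]
    refine Real.sqrt_le_sqrt ?_
    calc ∑ i, f i ^ 2 ≤ ∑ i, adjM G v i * (2 * m) ^ 2 := by
          refine Finset.sum_le_sum fun i _ => ?_
          have h1 : (u v - u i) ^ 2 ≤ (2 * m) ^ 2 := by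
            refine sq_le_sq' ?_ ?_ <;>
            linarith [abs_le.1 (hm v), abs_le.1 (hm i), (abs_le.1 (hm v)).1, (abs_le.1 (hm i)).1,
              (abs_le.1 (hm v)).2, (abs_le.1 (hm i)).2]
          simp only [hf]
          rw [mul_pow, sq (adjM G v i), adjM_mul_self]
          exact mul_le_mul_of_nonneg_left h1 (adjM_nonneg G v i)
      _ ≤ D * (2 * m) ^ 2 := by
          rw [← Finset.sum_mul]
          gcongr
  refine ⟨β, β', r, ?_, by nlinarith [sq_nonneg β], ?_, fun w hw => ?_⟩
  · rw [← sq_le_one_iff_abs_le_one]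
    linarith
  · have h1 := hgap r hrv hrs hφr
    rw [← hrLx, hrLx', hrx, hrr] at h1
    have h2 := (le_abs_self _).trans (abs_dotProduct_le_sqrt r f)
    set ρ := Real.sqrt (∑ i, r i ^ 2) with hρ
    have hρ2 : ρ ^ 2 = ∑ i, r i ^ 2 := Real.sq_sqrt hrr0
    rw [← hρ2] at h1
    rcases (Real.sqrt_nonneg (∑ i, r i ^ 2)).eq_or_lt with h0 | h0
    · rw [← hρ] at h0
      rw [← h0, mul_zero]
      positivity
    · rw [← hρ] at h0
      have h3 : ρ * (g * ρ) ≤ ρ * Real.sqrt (∑ i, f i ^ 2) := by nlinarith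
      exact (le_of_mul_le_mul_left h3 h0).trans hff
  · have h1 := congrFun hxdec w
    simp only [hx, he, if_neg hw, Pi.add_apply, Pi.smul_apply, smul_eq_mul] at h1
    linarith

/-- Leave-one-out bound on a maximal entry of an eigenvector. -/
lemma gap_mul_abs_le (hn : 2 ≤ n) {G : SimpleGraph (Fin n)} {v : Fin n}
    {φ u : Fin n → ℝ} {c g D m ℓ a : ℝ} (hφ : IsConstrainedMin (isolate G v) v φ)
    (hgap : ∀ x : Fin n → ℝ, x v = 0 → ∑ i, x i = 0 → φ ⬝ᵥ x = 0 →
      (c + g) * ∑ i, x i ^ 2 ≤ quadForm (lap (isolate G v)) x)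
    (hu : lap G *ᵥ u = c • u) (hu1 : ∑ i, u i ^ 2 = 1) (hm : ∀ w, |u w| ≤ m) (hmv : |u v| = m)
    (hD : ∑ w, adjM G v w ≤ D) (hdg : c + g ≤ ∑ w, adjM G v w) (ha : 0 ≤ a) (hℓ : 0 ≤ ℓ)
    (hrow : ∀ m', (∀ w, |φ w| ≤ m') → ∑ w, adjM G v w * |φ w| ≤ a + ℓ * m') :
    ∃ b ρ : ℝ, 0 ≤ b ∧ 0 ≤ ρ ∧ b ^ 2 * (n - 1) ≤ 1 ∧ g * ρ ≤ Real.sqrt D * (2 * m) ∧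
      g * m ≤ a + ℓ * (m + b + ρ) + D * b + Real.sqrt D * ρ := by
  obtain ⟨β, β', r, hβ, hβ', hr, hdec⟩ :=
    exists_isolate_decomposition hn hφ hgap hu hu1 hm hD
  set ρ := Real.sqrt (∑ i, r i ^ 2) with hρ
  have hρ0 : 0 ≤ ρ := Real.sqrt_nonneg _
  refine ⟨|β'|, ρ, abs_nonneg _, hρ0, by rwa [sq_abs], hr, ?_⟩
  have hA0 := adjM_nonneg G v
  have hm0 : 0 ≤ m := (abs_nonneg _).trans (hm v)
  have hrw : ∀ w, |r w| ≤ ρ := fun w => Real.abs_le_sqrt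
    (Finset.single_le_sum (f := fun i => r i ^ 2) (fun j _ => sq_nonneg _) (Finset.mem_univ w))
  have hv := congrFun hu v
  rw [lap_mulVec, Pi.smul_apply, smul_eq_mul] at hv
  simp only [mul_sub, Finset.sum_sub_distrib, ← Finset.sum_mul] at hv
  have hsum : ∑ w, adjM G v w * u w = β * ∑ w, adjM G v w * φ w + β' * ∑ w, adjM G v w +
      ∑ w, adjM G v w * r w := by
    simp only [Finset.mul_sum, ← Finset.sum_add_distrib]
    refine Finset.sum_congr rfl fun w _ => ?_
    by_cases hw : w = v
    · rw [hw, adjM_self]; ring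
    · rw [hdec w hw]; ring
  have h1 : |β * ∑ w, adjM G v w * φ w| ≤ a + ℓ * (m + |β'| + ρ) := by
    obtain ⟨w, -, hw⟩ := Finset.exists_max_image Finset.univ (fun w => |φ w|)
      ⟨v, Finset.mem_univ v⟩
    have h2 := hrow |φ w| fun w' => hw w' (Finset.mem_univ w')
    have h3 : |β| * |φ w| ≤ m + |β'| + ρ := by
      by_cases hwv : w = v
      · rw [hwv, hφ.apply_eq, abs_zero, mul_zero]; positivity
      · rw [← abs_mul]
        have h4 : β * φ w = u w - β' - r w := by rw [hdec w hwv]; ring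
        rw [h4]
        have h5 := abs_sub (u w - β') (r w)
        have h6 := abs_sub (u w) β'
        linarith [hm w, hrw w]
    have h7 : |∑ w, adjM G v w * φ w| ≤ ∑ w, adjM G v w * |φ w| := by
      refine (Finset.abs_sum_le_sum_abs _ _).trans (le_of_eq ?_)
      exact Finset.sum_congr rfl fun w _ => by rw [abs_mul, abs_of_nonneg (hA0 w)]
    rw [abs_mul]
    calc |β| * |∑ w, adjM G v w * φ w| ≤ |β| * (a + ℓ * |φ w|) := by
          gcongr; exact h7.trans h2
      _ = |β| * a + ℓ * (|β| * |φ w|) := by ring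
      _ ≤ 1 * a + ℓ * (m + |β'| + ρ) := by gcongr
      _ = _ := by ring
  have hd0 : 0 ≤ ∑ w, adjM G v w := Finset.sum_nonneg fun w _ => hA0 w
  have h2 : |β' * ∑ w, adjM G v w| ≤ D * |β'| := by
    rw [abs_mul, abs_of_nonneg hd0, mul_comm]
    gcongr
  have h3 : |∑ w, adjM G v w * r w| ≤ Real.sqrt D * ρ := by
    refine (abs_dotProduct_le_sqrt (adjM G v) r).trans ?_
    gcongr
    refine le_trans (le_of_eq ?_) hD
    exact Finset.sum_congr rfl fun w _ => by rw [sq, adjM_mul_self]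
  have h4 : (∑ w, adjM G v w - c) * u v = ∑ w, adjM G v w * u w := by linarith
  have h5 : g * m ≤ |(∑ w, adjM G v w - c) * u v| := by
    rw [abs_mul, hmv]
    gcongr
    exact le_trans (by linarith) (le_abs_self _)
  rw [h4, hsum] at h5
  have h6 := abs_add_le (β * ∑ w, adjM G v w * φ w + β' * ∑ w, adjM G v w) (∑ w, adjM G v w * r w)
  have h7 := abs_add_le (β * ∑ w, adjM G v w * φ w) (β' * ∑ w, adjM G v w)
  linarith

lemma le_div_sqrt_of_gap_mul_le (hn : 2 ≤ n) {κ d ℓ m b ρ : ℝ} (hκ : 0 < κ) (hκ1 : κ ≤ 1)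
    (hκd : 24 ≤ κ ^ 2 * d) (hℓd : 8 * ℓ ≤ κ * d) (hm : 0 ≤ m) (hb : 0 ≤ b)
    (hρ : 0 ≤ ρ) (hbn : b ^ 2 * (n - 1) ≤ 1) (hρm : κ * d * ρ ≤ Real.sqrt (3 * d) * (2 * m))
    (h : κ * d * m ≤ 2 * d / Real.sqrt n + ℓ * (m + b + ρ) + 3 * d * b + Real.sqrt (3 * d) * ρ) :
    m ≤ 17 / κ / Real.sqrt n := by
  have hn2 : (2 : ℝ) ≤ n := by exact_mod_cast hn
  have hκ2 : 0 < κ ^ 2 := by positivity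
  have hd : 0 < d := by
    by_contra! hd
    nlinarith
  have hκd0 : 0 < κ * d := by positivity
  set t := Real.sqrt n with ht
  have ht0 : 0 < t := Real.sqrt_pos.2 (by linarith)
  have ht2 : t ^ 2 = n := Real.sq_sqrt (by linarith)
  set e := Real.sqrt (3 * d) with he
  have he0 : 0 ≤ e := Real.sqrt_nonneg _
  have he2 : e ^ 2 = 3 * d := Real.sq_sqrt (by linarith)
  have hbt : b * t ≤ 2 := by
    refine abs_le_of_sq_le_sq' (by nlinarith [sq_nonneg b]) (by norm_num) |>.2
  have he1 : 2 * e ≤ κ * d := by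
    refine abs_le_of_sq_le_sq' ?_ hκd0.le |>.2
    nlinarith
  have hρ1 : ρ ≤ m := by
    refine le_of_mul_le_mul_left ?_ hκd0
    nlinarith
  have hρ2 : 4 * (e * ρ) ≤ κ * d * m := by
    have h1 : κ * d * (4 * (e * ρ)) ≤ κ * d * (κ * d * m) := by
      calc κ * d * (4 * (e * ρ)) = 4 * e * (κ * d * ρ) := by ring
        _ ≤ 4 * e * (e * (2 * m)) := by gcongr
        _ = 24 * d * m := by linear_combination 8 * m * he2
        _ ≤ κ ^ 2 * d * d * m := by gcongr
        _ = κ * d * (κ * d * m) := by ring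
    exact le_of_mul_le_mul_left h1 hκd0
  rw [div_div, le_div_iff₀ (by positivity)]
  have h2 := mul_le_mul_of_nonneg_right h ht0.le
  have h3 : (2 * d / t + ℓ * (m + b + ρ) + 3 * d * b + e * ρ) * t =
      2 * d + ℓ * (m + ρ) * t + (ℓ + 3 * d) * (b * t) + e * ρ * t := by
    field_simp
    ring
  rw [h3] at h2
  have h4 : ℓ * (m + ρ) * t ≤ κ * d / 8 * (m + m) * t := by gcongr; linarith
  have h5 : (ℓ + 3 * d) * (b * t) ≤ (κ * d / 8 + 3 * d) * 2 := by gcongr; linarith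
  have h6 : e * ρ * t ≤ κ * d * m / 4 * t := by gcongr; linarith
  have h7 : κ * d ≤ d := by nlinarith
  refine le_of_mul_le_mul_left (a := d) ?_ hd
  nlinarith

/-- Deterministic delocalization of unit second eigenvectors. -/
lemma linf_le_of_spectral_gap (hn : 3 ≤ n) {G : SimpleGraph (Fin n)} {σ : Fin n → ℝ}
    {κ d γ ℓ : ℝ} (hκ : 0 < κ) (hκ1 : κ ≤ 1) (hκd : 24 ≤ κ ^ 2 * d) (hℓ : 0 ≤ ℓ)
    (hℓd : 8 * ℓ ≤ κ * d)
    (hγ : ∀ x : Fin n → ℝ, ∑ i, x i = 0 → ∑ i, σ i * x i = 0 →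
      γ * ∑ i, x i ^ 2 ≤ quadForm (lap G) x)
    (hgap : eig (lap G) 1 + κ * d ≤ γ - 1) (hdeg : ∀ v, ∑ w, adjM G v w ≤ 3 * d)
    (hdg : ∀ v, eig (lap G) 1 + κ * d ≤ ∑ w, adjM G v w) {φ : Fin n → Fin n → ℝ}
    (hφ : ∀ v, IsConstrainedMin (isolate G v) v (φ v))
    (hrow : ∀ v m, (∀ w, |φ v w| ≤ m) →
      ∑ w, adjM G v w * |φ v w| ≤ 2 * d / Real.sqrt n + ℓ * m)
    {u : Fin n → ℝ} (hu : IsUnitEigenvector (lap G) (eig (lap G) 1) u) :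
    linf u ≤ 17 / κ / Real.sqrt n := by
  have hκ2 : 0 < κ ^ 2 := by positivity
  have hd : 0 < d := by
    by_contra! hd
    nlinarith
  have hne : Nonempty (Fin n) := ⟨⟨0, by omega⟩⟩
  obtain ⟨v, -, hv⟩ := Finset.exists_max_image Finset.univ (fun w => |u w|) Finset.univ_nonempty
  obtain ⟨b, ρ, hb, hρ, hbn, hρm, h⟩ := gap_mul_abs_le (by omega) (hφ v)
    (fun x hxv hxs hx => (mul_le_mul_of_nonneg_right hgap
      (Finset.sum_nonneg fun i _ => sq_nonneg _)).trans ((hφ v).le_quadForm hγ hxv hxs hx))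
    hu.1 hu.2 (fun w => hv w (Finset.mem_univ w)) rfl (hdeg v) (hdg v)
    (by positivity : 0 ≤ 2 * d / Real.sqrt n) hℓ (hrow v)
  exact (ciSup_le fun w => hv w (Finset.mem_univ w)).trans
    (le_div_sqrt_of_gap_mul_le (by omega) hκ hκ1 hκd hℓd (abs_nonneg _) hb hρ hbn hρm h)

/-- The typical behaviour of a sampled graph, relative to a choice `φ` of leave-one-out
vectors. -/
structure IsTypical (n : ℕ) (P : Fin n → Fin n → ℝ) (φ : SimpleGraph (Fin n) → Fin n → Fin n → ℝ)
    (d τ ℓ : ℝ) (G : SimpleGraph (Fin n)) : Prop where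
  degree_le : ∀ v, ∑ w, adjM G v w ≤ 3 * d
  le_degree : ∀ v, ∑ w, offP P v w - τ * d ≤ ∑ w, adjM G v w
  cut_le : ∑ i, ∑ j, (if ¬ sameSide n i j then adjM G i j else 0) ≤
    ∑ i, ∑ j, (if ¬ sameSide n i j then offP P i j else 0) + τ * d * n
  quadForm_le : ∀ x : Fin n → ℝ, ∑ i, x i ^ 2 = 1 →
    quadForm (adjM G) x ≤ quadForm (offP P) x + τ * d
  row_le : ∀ v, ∀ m, (∀ w, |φ (isolate G v) v w| ≤ m) →
    ∑ w, adjM G v w * |φ (isolate G v) v w| ≤ 2 * d / Real.sqrt n + ℓ * m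

lemma exists_graphProb_not_isTypical_le {τ : ℝ} (hτ : 0 < τ) (hτ1 : τ ≤ 1) :
    ∃ D : ℝ, ∀ n : ℕ, 2 ≤ n → ∀ (P : Fin n → Fin n → ℝ) (d : ℝ), IsProbMatrix P →
      (∀ i j, P i j = P j i) → (∀ i j, offP P i j ≤ d / n) → 0 ≤ d → D ≤ d →
      2 * Real.log n ≤ d → 2 * Real.log n ≤ τ ^ 2 * d / 4 →
      ∀ φ : SimpleGraph (Fin n) → Fin n → Fin n → ℝ, (∀ H v, ∑ w, φ H v w ^ 2 = 1) →
      graphProb P (fun G => ¬ IsTypical n P φ d τ (2 * Real.log n) G) ≤ 7 / n := by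
  obtain ⟨D, hD⟩ := exists_graphProb_quadForm_adjM_le hτ hτ1
  refine ⟨D, fun n hn2 P d hPm hsym hoff hd0 hDd hℓd hηd φ hφ => ?_⟩
  have hn0 : 0 < n := by omega
  have hn1 : (1 : ℝ) ≤ n := by exact_mod_cast hn0
  have hlog := Real.log_nonneg hn1
  have hup := (graphProb_degree_upper hPm hsym hn0 hoff).trans
    (mul_exp_neg_two_log_le hn0 hℓd)
  have hlow := (graphProb_degree_lower hPm hsym hn0 hoff hτ hτ1).trans
    (mul_exp_neg_two_log_le hn0 hηd)
  have hcut : graphProb P (fun G => ¬ ∑ i, ∑ j, (if ¬ sameSide n i j then adjM G i j else 0) ≤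
      ∑ i, ∑ j, (if ¬ sameSide n i j then offP P i j else 0) + τ * d * n) ≤ 1 / n := by
    refine (graphProb_cut hPm hsym hn0 hoff hτ hτ1 (fun i j => ¬ sameSide n i j)
      fun i j => ?_).trans ?_
    · simp only [sameSide, iff_comm]
    · have h1 := mul_exp_neg_two_log_le hn0 hηd
      have h2 : -(τ ^ 2 * d * n / 8) ≤ -(τ ^ 2 * d / 4) := by
        have : (2 : ℝ) ≤ n := by exact_mod_cast hn2
        nlinarith [mul_nonneg (sq_nonneg τ) hd0]
      have h4 := Real.exp_le_exp.2 h2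
      nlinarith [Real.exp_pos (-(τ ^ 2 * d / 4))]
  have hspec := hD n hn0 P d hPm hsym hoff hd0 hDd (by linarith)
  have hrow := (graphProb_row_abs hPm hsym hn0 hd0 hoff φ hφ
    (ℓ := 2 * Real.log n) (by positivity)).trans (mul_exp_neg_two_log_le hn0 le_rfl)
  have e : (7 : ℝ) / n = 1 / n + (1 / n + (1 / n + (3 / n + 1 / n))) := by ring
  rw [e]
  refine le_trans (graphProb_mono hPm fun G hG => ?_)
    ((graphProb_or_le hPm _ _).trans (add_le_add hup
    ((graphProb_or_le hPm _ _).trans (add_le_add hlow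
    ((graphProb_or_le hPm _ _).trans (add_le_add hcut
    ((graphProb_or_le hPm _ _).trans (add_le_add hspec hrow))))))))
  by_contra hcon
  simp only [not_or, not_not] at hcon
  exact hG ⟨hcon.1, hcon.2.1, hcon.2.2.1, hcon.2.2.2.1 hcon.1, hcon.2.2.2.2⟩

lemma IsTypical.linf_le {p pbar q : ℝ} {P : Fin n → Fin n → ℝ}
    {φ : SimpleGraph (Fin n) → Fin n → Fin n → ℝ} {d τ ℓ α κ : ℝ} {G : SimpleGraph (Fin n)}
    (hG : IsTypical n P φ d τ ℓ G) (hn : 3 ≤ n) (hev : Even n) (hq : 0 ≤ q) (hp1 : p ≤ 1)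
    (hP : NSSBMprob n p pbar q P) (hφ : ∀ H v, IsConstrainedMin H v (φ H v))
    (hdα : d = α * (n * (p - q))) (hτ : 0 < τ) (hκ : 0 < κ) (hκ1 : κ ≤ 1)
    (hτα : τ * α = 1 / 32) (hκα : κ * α = 1 / 4) (hκd : 24 ≤ κ ^ 2 * d) (hℓ : 0 ≤ ℓ)
    (hℓd : 8 * ℓ ≤ κ * d) {u : Fin n → ℝ}
    (hu : IsUnitEigenvector (lap G) (eig (lap G) 1) u) : linf u ≤ 17 / κ / Real.sqrt n := by
  have hκ2 : 0 < κ ^ 2 := by positivity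
  have hd : 0 < d := by
    by_contra! hd
    nlinarith
  have heig := eig_lap_one_le hev (by omega) hq hP (by positivity) hG.cut_le
  have hκd' : κ * d = n * (p - q) / 4 := by rw [hdα]; linear_combination (n * (p - q)) * hκα
  have hτd : τ * d = n * (p - q) / 32 := by rw [hdα]; linear_combination (n * (p - q)) * hτα
  have hbig : 24 ≤ κ * d := hκd.trans (by nlinarith)
  refine linf_le_of_spectral_gap hn hκ hκ1 hκd hℓ hℓd
    (fun x hx hxs => le_quadForm_lap hev hP hG.le_degree hG.quadForm_le hx hxs) ?_ hG.degree_le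
    (fun v => ?_) (fun v => hφ (isolate G v) v) hG.row_le hu
  · linarith
  · have e1 := hG.le_degree v
    have e2 := le_sum_offP hev hp1 hP v
    linarith

/-- **Lemma (ℓ∞ bound on the second eigenvector).**
In the NSSBM setting with `α = p̄/(p-q)` constant and the gap condition holding for a
sufficiently large universal constant `C₀`, for every `δ ≥ 10 n⁻²` and `n` sufficiently
large, with probability at least `1 - δ`, the unit second eigenvector `u₂` of the
unnormalized Laplacian satisfies `‖u₂‖_∞ ≤ C(α,δ)/√n` for a constant `C(α,δ)` depending
only on `α` and `δ`. -/
theorem u2_inf_norm_bound :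
    ∃ C0 : ℝ, 0 < C0 ∧ ∀ α δ : ℝ, ∃ C : ℝ, 0 < C ∧ ∃ N : ℕ, ∀ n : ℕ, N ≤ n → Even n →
      ∀ p pbar q : ℝ, 0 ≤ q → q < p → p ≤ pbar → pbar ≤ 1 →
        pbar / (p - q) = α → 10 / (n : ℝ) ^ 2 ≤ δ →
      ∀ (P : Fin n → Fin n → ℝ) (μ : PMF (SimpleGraph (Fin n))),
        NSSBMprob n p pbar q P → IsEdgeProduct P μ →
        C0 * (Real.sqrt ((n : ℝ) * pbar * Real.log n) + Real.log n) ≤ (n : ℝ) * (p - q) →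
        1 - ENNReal.ofReal δ ≤ μ.toMeasure {G |
          ∀ u : Fin n → ℝ, IsUnitEigenvector (lap G) (eig (lap G) 1) u →
            linf u ≤ C / Real.sqrt n} := by
  refine ⟨1000, by norm_num, fun α δ => ?_⟩
  by_cases hα : 1 ≤ α
  swap
  · refine ⟨1, one_pos, 0, fun n _ _ p pbar q hq hqp hpp _ hpα => absurd ?_ hα⟩
    rw [← hpα, le_div_iff₀ (by linarith)]
    linarith
  have hα0 : 0 < α := by linarith
  obtain ⟨τ, hτ⟩ : ∃ τ, τ = 1 / (32 * α) := ⟨_, rfl⟩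
  obtain ⟨κ, hκ⟩ : ∃ κ, κ = 1 / (4 * α) := ⟨_, rfl⟩
  have hτα : τ * α = 1 / 32 := by rw [hτ]; field_simp
  have hκα : κ * α = 1 / 4 := by rw [hκ]; field_simp
  have hτ0 : 0 < τ := by rw [hτ]; positivity
  have hκ0 : 0 < κ := by rw [hκ]; positivity
  have hτ1 : τ ≤ 1 := by nlinarith
  have hκ1 : κ ≤ 1 := by nlinarith
  obtain ⟨D, hD⟩ := exists_graphProb_not_isTypical_le hτ0 hτ1
  obtain ⟨N, hN⟩ := exists_nat_ge (max (12 / δ) (Real.exp (max D (400 * α ^ 2))))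
  refine ⟨17 / κ, by positivity, max 3 N, fun n hnN hev p pbar q hq hqp hpp hpb hpα hδ P μ hP hμ
    hgap => ?_⟩
  have hn3 : 3 ≤ n := (le_max_left _ _).trans hnN
  have hn0 : 0 < n := by omega
  have hn' : (0 : ℝ) < n := by exact_mod_cast hn0
  have hnN' : (N : ℝ) ≤ n := by exact_mod_cast (le_max_right _ _).trans hnN
  have hδ0 : 0 < δ := lt_of_lt_of_le (by positivity) hδ
  have hnδ : 7 / (n : ℝ) ≤ δ := by
    have h1 := (le_max_left _ _).trans (hN.trans hnN')
    rw [div_le_iff₀ hδ0] at h1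
    rw [div_le_iff₀ hn']
    linarith
  have hnD : max D (400 * α ^ 2) ≤ Real.log n := by
    rw [Real.le_log_iff_exp_le hn']
    exact (le_max_right _ _).trans (hN.trans hnN')
  obtain ⟨d, hd⟩ : ∃ d, d = n * pbar := ⟨_, rfl⟩
  obtain ⟨ℓ, hℓ⟩ : ∃ ℓ, ℓ = Real.log n := ⟨_, rfl⟩
  rw [← hℓ] at hnD
  rw [← hd, ← hℓ] at hgap
  have hD1 : D ≤ ℓ := (le_max_left _ _).trans hnD
  have hℓ1 : 400 * α ^ 2 ≤ ℓ := (le_max_right _ _).trans hnD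
  have hℓ0 : 0 < ℓ := lt_of_lt_of_le (by positivity) hℓ1
  have hpb0 : 0 < pbar := by linarith
  have hd0 : 0 < d := by rw [hd]; positivity
  have hdα : d = α * (n * (p - q)) := by
    rw [div_eq_iff (by linarith)] at hpα
    rw [hd, hpα]; ring
  have hdℓ : 1000000 * α ^ 2 * ℓ ≤ d := by
    have h1 : 1000 * α * Real.sqrt (d * ℓ) ≤ d := by
      rw [mul_add] at hgap
      have := mul_le_mul_of_nonneg_left hgap hα0.le
      nlinarith
    have h2 : (1000 * α * Real.sqrt (d * ℓ)) ^ 2 ≤ d ^ 2 := by gcongr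
    rw [mul_pow, Real.sq_sqrt (by positivity)] at h2
    refine le_of_mul_le_mul_left (a := d) ?_ hd0
    nlinarith
  have hα2 : 1 ≤ α ^ 2 := by nlinarith
  have hα2' : α ≤ α ^ 2 := by nlinarith
  have hℓα : ℓ ≤ α ^ 2 * ℓ := by nlinarith
  have hℓα' : α * ℓ ≤ α ^ 2 * ℓ := by gcongr
  have hPm : IsProbMatrix P := by
    intro i j hij
    by_cases hs : sameSide n i j
    · have := hP.2.1 i j hij hs
      constructor <;> linarith
    · rw [hP.2.2 i j hs]
      constructor <;> linarith
  have hsym := hP.1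
  have hoff : ∀ i j, offP P i j ≤ d / n := by
    intro i j
    rw [hd, mul_div_cancel_left₀ _ hn'.ne']
    simp only [offP, Matrix.of_apply]
    split_ifs with hij
    · exact hpb0.le
    by_cases hs : sameSide n i j
    · exact (hP.2.1 i j hij hs).2
    · rw [hP.2.2 i j hs]; linarith
  have hηd : 2 * ℓ ≤ τ ^ 2 * d / 4 := by
    have h1 : τ ^ 2 * (1000000 * α ^ 2 * ℓ) ≤ τ ^ 2 * d := by gcongr
    have h2 : τ ^ 2 * (1000000 * α ^ 2 * ℓ) = 1000000 / 1024 * ℓ := by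
      linear_combination 1000000 * ℓ * (τ * α + 1 / 32) * hτα
    linarith
  have hκd : 24 ≤ κ ^ 2 * d := by
    have e1 : κ ^ 2 * (1000000 * α ^ 2 * ℓ) ≤ κ ^ 2 * d := by gcongr
    have e2 : κ ^ 2 * (1000000 * α ^ 2 * ℓ) = 1000000 / 16 * ℓ := by
      linear_combination 1000000 * ℓ * (κ * α + 1 / 4) * hκα
    linarith
  have hℓd : 8 * (2 * ℓ) ≤ κ * d := by
    have e1 : κ * (1000000 * α ^ 2 * ℓ) ≤ κ * d := by gcongr
    have e2 : κ * (1000000 * α ^ 2 * ℓ) = 1000000 / 4 * (α * ℓ) := by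
      linear_combination 1000000 * α * ℓ * hκα
    have e3 : ℓ ≤ α * ℓ := le_mul_of_one_le_left hℓ0.le hα
    linarith
  choose φ hφ using fun H v => exists_isConstrainedMin hn3 (n := n) H v
  have hbad := hD n (by omega) P d hPm hsym hoff hd0.le (by linarith) (by rw [← hℓ]; linarith)
    (by rw [← hℓ]; exact hηd) φ fun H v => (hφ H v).sum_sq
  rw [← hℓ] at hbad
  have hmeas := toMeasure_eq_ofReal_graphProb hPm hμ
    (fun G => ¬ IsTypical n P φ d τ (2 * ℓ) G)
  calc 1 - ENNReal.ofReal δ ≤ 1 - μ.toMeasure {G | ¬ IsTypical n P φ d τ (2 * ℓ) G} := by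
        rw [hmeas]
        exact tsub_le_tsub_left (ENNReal.ofReal_le_ofReal (hbad.trans hnδ)) 1
    _ = μ.toMeasure {G | ¬ IsTypical n P φ d τ (2 * ℓ) G}ᶜ :=
        (prob_compl_eq_one_sub MeasurableSpace.measurableSet_top).symm
    _ ≤ _ := by
        refine measure_mono fun G hG u hu => ?_
        rw [Set.mem_compl_iff, Set.mem_ofPred_eq, not_not] at hG
        exact hG.linf_le hn3 hev hq (by linarith) hP hφ hdα hτ0 hκ0 hκ1 hτα hκα hκd
          (by positivity) hℓd hu

end
end
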